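/- Let G be an Artin group of large type satisfying the (3,3,m)-hypothesis, with permissible factorisation sets 𝒫 and 𝒫_{ij}. Let P' be a polynomial with nonnegative coefficients such that for every pair i ≠ j, every h ∈ G(i,j) and every k' ∈ ℕ, the number of elements h_1 ∈ G(i,j) with ℓ(h_1) = k' and (h_1, h_1^{-1}h) ∈ 𝒫_{ij}(h) is at most P'(k'). Suppose g ∈ G has geodesic word representatives v and w whose first letters differ, and let 0 ≤ k ≤ ℓ(g). Then the number of elements g_1 ∈ G with ℓ(g_1) = k, (g_1, g_1^{-1}g) ∈ 𝒫, and such that every geodesic word representing g_1 begins with the first letter of v, is at most Σ_{j=1}^{k} P'(j). -/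

import Mathlib

namespace ArtinRD

/-- The alternating product `xyxy...` with `m` factors, starting with `x`. -/
def altProd {G : Type*} [Monoid G] : ℕ → G → G → G
  | 0, _, _ => 1
  | n + 1, x, y => x * altProd n y x

/-- The Artin relators determined by a Coxeter-type matrix `M` (`⊤` meaning `∞`). -/
def artinRels (n : ℕ) (M : Fin n → Fin n → ℕ∞) : Set (FreeGroup (Fin n)) :=
  {r | ∃ i j : Fin n, i ≠ j ∧ ∃ m : ℕ, M i j = (m : ℕ∞) ∧
    r = altProd m (FreeGroup.of i) (FreeGroup.of j) *
        (altProd m (FreeGroup.of j) (FreeGroup.of i))⁻¹}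

/-- The Artin group associated to the matrix `M`. -/
abbrev ArtinGroup (n : ℕ) (M : Fin n → Fin n → ℕ∞) : Type := PresentedGroup (artinRels n M)

/-- The standard generator `x_i` of the Artin group. -/
def gen (n : ℕ) (M : Fin n → Fin n → ℕ∞) (i : Fin n) : ArtinGroup n M := PresentedGroup.of i

/-- The set `A = {x_1^{±1}, ..., x_n^{±1}}` of standard letters. -/
def genSet (n : ℕ) (M : Fin n → Fin n → ℕ∞) : Set (ArtinGroup n M) :=
  {g | ∃ i : Fin n, g = gen n M i ∨ g = (gen n M i)⁻¹}

/-- Word length of `g` with respect to a set `S`: the least `N` such that `g` is a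
product of `N` elements of `S`. -/
noncomputable def wordLength {G : Type*} [Group G] (S : Set G) (g : G) : ℕ :=
  sInf {N : ℕ | ∃ w : List G, (∀ a ∈ w, a ∈ S) ∧ w.length = N ∧ w.prod = g}

/-- The word length on an Artin group with respect to the standard letters. -/
noncomputable def ℓA (n : ℕ) (M : Fin n → Fin n → ℕ∞) : ArtinGroup n M → ℕ :=
  wordLength (genSet n M)

/-- A letter: a generator index together with a sign (`true` = positive). -/
abbrev Letter (n : ℕ) := Fin n × Bool

/-- The group element corresponding to a letter. -/
def toGen (n : ℕ) (M : Fin n → Fin n → ℕ∞) (l : Letter n) : ArtinGroup n M :=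
  if l.2 then gen n M l.1 else (gen n M l.1)⁻¹

/-- The group element represented by a word over the letters. -/
def wordElt (n : ℕ) (M : Fin n → Fin n → ℕ∞) (w : List (Letter n)) : ArtinGroup n M :=
  (w.map (toGen n M)).prod

/-- A word is geodesic if its length equals the word length of the element it represents. -/
def IsGeodesic (n : ℕ) (M : Fin n → Fin n → ℕ∞) (w : List (Letter n)) : Prop :=
  wordLength (genSet n M) (wordElt n M w) = w.length

/-- `h` is a left divisor of `g`: the factorisation `g = h ⬝ (h⁻¹ g)` is geodesic. -/
def IsLeftDiv {G : Type*} [Group G] (ℓ : G → ℕ) (h g : G) : Prop :=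
  ℓ h + ℓ (h⁻¹ * g) = ℓ g

/-- `h` is a right divisor of `g`: the factorisation `g = (g h⁻¹) ⬝ h` is geodesic. -/
def IsRightDiv {G : Type*} [Group G] (ℓ : G → ℕ) (h g : G) : Prop :=
  ℓ (g * h⁻¹) + ℓ h = ℓ g

/-- The two-generator ("dihedral") subgroup `G(i,j)`. -/
def Gij (n : ℕ) (M : Fin n → Fin n → ℕ∞) (i j : Fin n) : Subgroup (ArtinGroup n M) :=
  Subgroup.closure {gen n M i, gen n M j}

/-- The letters `x_i^{±1}, x_j^{±1}` as group elements. -/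
def lettersIJ (n : ℕ) (M : Fin n → Fin n → ℕ∞) (i j : Fin n) : Set (ArtinGroup n M) :=
  {gen n M i, (gen n M i)⁻¹, gen n M j, (gen n M j)⁻¹}

/-- The maximal `{x_i,x_j}`-prefix of a word. -/
def ijPrefix (n : ℕ) (i j : Fin n) (w : List (Letter n)) : List (Letter n) :=
  w.takeWhile (fun l => l.1 == i || l.1 == j)

/-- `h` is a left divisor of `g` lying in `G(i,j)` of maximal word length. -/
def IsMaxLD (n : ℕ) (M : Fin n → Fin n → ℕ∞) (i j : Fin n) (g h : ArtinGroup n M) : Prop :=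
  h ∈ Gij n M i j ∧ IsLeftDiv (ℓA n M) h g ∧
    ∀ h' ∈ Gij n M i j, IsLeftDiv (ℓA n M) h' g → ℓA n M h' ≤ ℓA n M h

/-- `h` is a right divisor of `g` lying in `G(i,j)` of maximal word length. -/
def IsMaxRD (n : ℕ) (M : Fin n → Fin n → ℕ∞) (i j : Fin n) (g h : ArtinGroup n M) : Prop :=
  h ∈ Gij n M i j ∧ IsRightDiv (ℓA n M) h g ∧
    ∀ h' ∈ Gij n M i j, IsRightDiv (ℓA n M) h' g → ℓA n M h' ≤ ℓA n M h

/-- A positive element of `G(i,j)`: a product of the generators `x_i, x_j`. -/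
def posIJ (n : ℕ) (M : Fin n → Fin n → ℕ∞) (i j : Fin n) (h : ArtinGroup n M) : Prop :=
  h ∈ Submonoid.closure ({gen n M i, gen n M j} : Set (ArtinGroup n M))

/-- A negative element of `G(i,j)`: a product of the inverses of `x_i, x_j`. -/
def negIJ (n : ℕ) (M : Fin n → Fin n → ℕ∞) (i j : Fin n) (h : ArtinGroup n M) : Prop :=
  h ∈ Submonoid.closure ({(gen n M i)⁻¹, (gen n M j)⁻¹} : Set (ArtinGroup n M))

/-- The Garside element `Δ_{ij} = ₘ(x_i,x_j)` (for `m = m_{ij}`). -/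
def DeltaIJ (n : ℕ) (M : Fin n → Fin n → ℕ∞) (i j : Fin n) (m : ℕ) : ArtinGroup n M :=
  altProd m (gen n M i) (gen n M j)

/-- `k` is the largest exponent such that `Δ_{ij}^k` is a left divisor of `h`. -/
def IsMaxDPowIJ (n : ℕ) (M : Fin n → Fin n → ℕ∞) (i j : Fin n) (m k : ℕ)
    (h : ArtinGroup n M) : Prop :=
  IsLeftDiv (ℓA n M) (DeltaIJ n M i j m ^ k) h ∧
    ∀ k' : ℕ, IsLeftDiv (ℓA n M) (DeltaIJ n M i j m ^ k') h → k' ≤ k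

/-- `k` is the largest exponent such that `Δ_{ij}^{-k}` is a left divisor of `h`. -/
def IsMaxNegDPowIJ (n : ℕ) (M : Fin n → Fin n → ℕ∞) (i j : Fin n) (m k : ℕ)
    (h : ArtinGroup n M) : Prop :=
  IsLeftDiv (ℓA n M) ((DeltaIJ n M i j m)⁻¹ ^ k) h ∧
    ∀ k' : ℕ, IsLeftDiv (ℓA n M) ((DeltaIJ n M i j m)⁻¹ ^ k') h → k' ≤ k

/-- `h` has a representative of the form `a^s b^t` with `a, b ∈ {x_i^{±1}, x_j^{±1}}`. -/
def TwoSyllIJ (n : ℕ) (M : Fin n → Fin n → ℕ∞) (i j : Fin n) (h : ArtinGroup n M) : Prop :=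
  ∃ a ∈ lettersIJ n M i j, ∃ b ∈ lettersIJ n M i j, ∃ s t : ℕ, h = a ^ s * b ^ t

/-- The permissible factorisations `𝒫_{ij}` in the dihedral subgroup `G(i,j)`:
geodesic factorisations `(h₁, h₂)` of `h₁h₂` into elements of `G(i,j)` such that, if
`m_{ij} < ∞` and the product is positive or negative, additionally one of the two
factors has at most two syllables or the factorisation is not `Δ_{ij}`-decreasing. -/
def PijMem (n : ℕ) (M : Fin n → Fin n → ℕ∞) (i j : Fin n)
    (h₁ h₂ : ArtinGroup n M) : Prop :=
  h₁ ∈ Gij n M i j ∧ h₂ ∈ Gij n M i j ∧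
  ℓA n M h₁ + ℓA n M h₂ = ℓA n M (h₁ * h₂) ∧
  (∀ m : ℕ, M i j = (m : ℕ∞) → (posIJ n M i j (h₁ * h₂) ∨ negIJ n M i j (h₁ * h₂)) →
    (TwoSyllIJ n M i j h₁ ∨ TwoSyllIJ n M i j h₂ ∨
     (posIJ n M i j (h₁ * h₂) ∧ posIJ n M i j h₁ ∧ posIJ n M i j h₂ ∧
       ∃ k₁ k₂ : ℕ, IsMaxDPowIJ n M i j m k₁ h₁ ∧ IsMaxDPowIJ n M i j m k₂ h₂ ∧
         IsMaxDPowIJ n M i j m (k₁ + k₂) (h₁ * h₂)) ∨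
     (negIJ n M i j (h₁ * h₂) ∧ negIJ n M i j h₁ ∧ negIJ n M i j h₂ ∧
       ∃ k₁ k₂ : ℕ, IsMaxNegDPowIJ n M i j m k₁ h₁ ∧ IsMaxNegDPowIJ n M i j m k₂ h₂ ∧
         IsMaxNegDPowIJ n M i j m (k₁ + k₂) (h₁ * h₂))))

/-- The set `𝒫` of permissible factorisations of elements of `G`: geodesic
factorisations `(g₁, g₂)` such that for every pair `i ≠ j`, the pair
`(RD_{ij}(g₁), LD_{ij}(g₂))` is a permissible factorisation in `G(i,j)`. -/
def PMem (n : ℕ) (M : Fin n → Fin n → ℕ∞)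
    (LD RD : Fin n → Fin n → ArtinGroup n M → ArtinGroup n M)
    (q : ArtinGroup n M × ArtinGroup n M) : Prop :=
  ℓA n M q.1 + ℓA n M q.2 = ℓA n M (q.1 * q.2) ∧
  ∀ i j : Fin n, i ≠ j → PijMem n M i j (RD i j q.1) (LD i j q.2)

/-! ## Part 1: normal form states for dihedral Artin groups -/

/-- States: `base k` is `Δ^k`, and `top k f c cs` has alternating blocks on top. -/
inductive St : Type
  | base (k : ℤ) : St
  | top (k : ℤ) (f : Bool) (c : ℕ) (cs : List ℕ) : St

namespace St

def mk (k : ℤ) (f : Bool) : List ℕ → St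
  | [] => base k
  | c :: cs => top k f c cs

def pos (m : ℕ) (z : Bool) : St → St
  | base k => top k z 1 []
  | top k f c cs =>
    if z = f then top k z 1 (c :: cs)
    else if c + 1 = m then mk (k + 1) f cs else top k z (c + 1) cs

def neg (m : ℕ) (z : Bool) : St → St
  | base k => top (k - 1) (!z) (m - 1) []
  | top k f c cs =>
    if z = f then (if c = 1 then mk k z cs else top k (!z) (c - 1) cs)
    else top (k - 1) f (m - 1) (c :: cs)

def act (m : ℕ) (a : Bool × Bool) (s : St) : St :=
  if a.2 then pos m a.1 s else neg m a.1 s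

def V (m : ℕ) : St → Prop
  | base _ => True
  | top _ _ c cs => ∀ x ∈ c :: cs, 1 ≤ x ∧ x < m

def K : St → ℕ → ℤ
  | base k, _ => k
  | top k _ c cs, t => k + (List.countP (fun x => decide (t ≤ x)) (c :: cs) : ℕ)

def L (m : ℕ) (s : St) : ℕ := ∑ t ∈ Finset.Icc 1 m, (K s t).natAbs

def tpos (z : Bool) : St → ℕ
  | base _ => 1
  | top _ f c _ => if z = f then 1 else c + 1

def tneg (m : ℕ) (z : Bool) : St → ℕ
  | base _ => m
  | top _ f c _ => if z = f then c else m

theorem K_mk (k : ℤ) (f : Bool) (cs : List ℕ) (t : ℕ) :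
    K (mk k f cs) t = k + (List.countP (fun x => decide (t ≤ x)) cs : ℕ) := by
  cases cs <;> simp [mk, K]

theorem V_mk (m : ℕ) (k : ℤ) (f : Bool) (cs : List ℕ) :
    V m (mk k f cs) ↔ ∀ x ∈ cs, 1 ≤ x ∧ x < m := by
  cases cs <;> simp [mk, V]

theorem V_pos {m : ℕ} (hm : 2 ≤ m) (z : Bool) {s : St} (h : V m s) : V m (pos m z s) := by
  cases s with
  | base k => simp [pos, V]; omega
  | top k f c cs =>
    simp only [V, List.mem_cons, forall_eq_or_imp] at h
    simp only [pos]
    split_ifs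
    · simp only [V, List.mem_cons, forall_eq_or_imp]; exact ⟨by omega, h⟩
    · rw [V_mk]; exact h.2
    · simp only [V, List.mem_cons, forall_eq_or_imp]; exact ⟨by omega, h.2⟩

theorem V_neg {m : ℕ} (hm : 2 ≤ m) (z : Bool) {s : St} (h : V m s) : V m (neg m z s) := by
  cases s with
  | base k => simp [neg, V]; omega
  | top k f c cs =>
    simp only [V, List.mem_cons, forall_eq_or_imp] at h
    simp only [neg]
    split_ifs
    · rw [V_mk]; exact h.2
    · simp only [V, List.mem_cons, forall_eq_or_imp]; exact ⟨by omega, h.2⟩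
    · simp only [V, List.mem_cons, forall_eq_or_imp]; exact ⟨by omega, h⟩

theorem V_act {m : ℕ} (hm : 2 ≤ m) (a : Bool × Bool) {s : St} (h : V m s) :
    V m (act m a s) := by
  unfold act; split_ifs
  · exact V_pos hm _ h
  · exact V_neg hm _ h

theorem neg_pos {m : ℕ} (hm : 3 ≤ m) (z : Bool) {s : St} (h : V m s) :
    neg m z (pos m z s) = s := by
  cases s with
  | base k => simp [pos, neg, mk]
  | top k f c cs =>
    simp only [V, List.mem_cons, forall_eq_or_imp] at h
    by_cases hz : z = f
    · subst hz; simp [pos, neg, mk]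
    · have hf : f = !z := by cases z <;> cases f <;> simp_all
      subst hf
      by_cases hc : c + 1 = m
      · cases cs with
        | nil => simp [pos, neg, mk, hc]; omega
        | cons c' cs' => simp [pos, neg, mk, hc]; omega
      · simp [pos, neg, hc]; omega

theorem pos_neg {m : ℕ} (hm : 3 ≤ m) (z : Bool) {s : St} (h : V m s) :
    pos m z (neg m z s) = s := by
  cases s with
  | base k =>
    have : m - 1 + 1 = m := by omega
    simp [pos, neg, mk, this]
  | top k f c cs =>
    simp only [V, List.mem_cons, forall_eq_or_imp] at h
    by_cases hz : z = f
    · subst hz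
      by_cases hc : c = 1
      · subst hc
        cases cs <;> simp [pos, neg, mk]
      · have h1 : c - 1 + 1 = c := by omega
        have h2 : ¬ c = m := by omega
        simp [pos, neg, hc, h1, h2]
    · have : m - 1 + 1 = m := by omega
      simp [pos, neg, mk, hz, this]

theorem act_act_inv {m : ℕ} (hm : 3 ≤ m) (z σ : Bool) {s : St} (h : V m s) :
    act m (z, !σ) (act m (z, σ) s) = s := by
  cases σ
  · simp [act, pos_neg hm z h]
  · simp [act, neg_pos hm z h]

theorem act_inv_act {m : ℕ} (hm : 3 ≤ m) (z σ : Bool) {s : St} (h : V m s) :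
    act m (z, σ) (act m (z, !σ) s) = s := by
  have := act_act_inv hm z (!σ) h
  simpa using this

theorem act_inj {m : ℕ} (hm : 3 ≤ m) (a : Bool × Bool) {s s' : St} (h : V m s) (h' : V m s')
    (e : act m a s = act m a s') : s = s' := by
  rw [← act_act_inv hm a.1 a.2 h, ← act_act_inv hm a.1 a.2 h']
  simp only [Prod.mk.eta, e]

theorem K_antitone (s : St) {t t' : ℕ} (h : t ≤ t') : K s t' ≤ K s t := by
  cases s with
  | base k => simp [K]
  | top k f c cs =>
    simp only [K]
    have : List.countP (fun x => decide (t' ≤ x)) (c :: cs) ≤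
        List.countP (fun x => decide (t ≤ x)) (c :: cs) := by
      apply List.countP_mono_left
      intro x _ hx
      simp at hx ⊢; omega
    omega

theorem K_top_lt (k f c cs) : K (top k f c cs) (c + 1) < K (top k f c cs) c := by
  simp only [K, List.countP_cons]
  have : List.countP (fun x => decide (c + 1 ≤ x)) cs ≤
      List.countP (fun x => decide (c ≤ x)) cs := by
    apply List.countP_mono_left
    intro x _ hx
    simp at hx ⊢; omega
  have e : (decide (c + 1 ≤ c)) = false := by simp
  simp only [e, le_refl, decide_true, if_true]
  simp only [Bool.false_eq_true, if_false]
  omega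

theorem K_m_top {m : ℕ} {k f c cs} (h : V m (top k f c cs)) : K (top k f c cs) m = k := by
  simp only [K]
  have : List.countP (fun x => decide (m ≤ x)) (c :: cs) = 0 := by
    rw [List.countP_eq_zero]
    intro x hx
    have := h x hx
    simp; omega
  simp [this]

theorem K_pos {m : ℕ} (hm : 3 ≤ m) (z : Bool) {s : St} (h : V m s) {t : ℕ} (h1 : 1 ≤ t)
    (h2 : t ≤ m) : K (pos m z s) t = K s t + if t = tpos z s then 1 else 0 := by
  cases s with
  | base k =>
    simp only [pos, K, tpos, List.countP_cons, List.countP_nil]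
    by_cases h : t = 1 <;> simp [h]
    omega
  | top k f c cs =>
    simp only [V, List.mem_cons, forall_eq_or_imp] at h
    by_cases hz : z = f
    · subst hz
      simp only [pos, K, tpos, List.countP_cons, if_true]
      by_cases h : t = 1
      · simp [h]; omega
      · have : ¬ t ≤ 1 := by omega
        simp [h, this]
    · simp only [pos, tpos, hz, if_false]
      by_cases hc : c + 1 = m
      · simp only [hc, if_true, K_mk]
        simp only [K, List.countP_cons]
        by_cases h : t = m
        · have : ¬ t ≤ c := by omega
          simp only [this, h, if_true, decide_false]; simp; omega
        · have : t ≤ c := by omega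
          simp [h, this]; omega
      · simp only [hc, if_false, K, List.countP_cons]
        by_cases h : t = c + 1
        · simp [h]; omega
        · by_cases h' : t ≤ c
          · have : t ≤ c + 1 := by omega
            simp [h, h', this]
          · have : ¬ t ≤ c + 1 := by omega
            simp [h, h', this]

theorem tpos_mem {m : ℕ} (hm : 3 ≤ m) (z : Bool) {s : St} (h : V m s) :
    1 ≤ tpos z s ∧ tpos z s ≤ m := by
  cases s with
  | base k => simp [tpos]; omega
  | top k f c cs =>
    simp only [V, List.mem_cons, forall_eq_or_imp] at h
    simp only [tpos]; split_ifs <;> omega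

theorem tneg_mem {m : ℕ} (hm : 3 ≤ m) (z : Bool) {s : St} (h : V m s) :
    1 ≤ tneg m z s ∧ tneg m z s ≤ m := by
  cases s with
  | base k => simp [tneg]; omega
  | top k f c cs =>
    simp only [V, List.mem_cons, forall_eq_or_imp] at h
    simp only [tneg]; split_ifs <;> omega

theorem tpos_neg {m : ℕ} (hm : 3 ≤ m) (z : Bool) {s : St} (h : V m s) :
    tpos z (neg m z s) = tneg m z s := by
  cases s with
  | base k => simp [tpos, tneg, neg]; omega
  | top k f c cs =>
    simp only [V, List.mem_cons, forall_eq_or_imp] at h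
    by_cases hz : z = f
    · subst hz
      by_cases hc : c = 1
      · subst hc
        cases cs <;> simp [neg, tneg, mk, tpos]
      · simp [neg, tneg, tpos, hc]; omega
    · simp [neg, tneg, tpos, hz]; omega

theorem K_neg {m : ℕ} (hm : 3 ≤ m) (z : Bool) {s : St} (h : V m s) {t : ℕ} (h1 : 1 ≤ t)
    (h2 : t ≤ m) : K (neg m z s) t = K s t - if t = tneg m z s then 1 else 0 := by
  have := K_pos hm z (V_neg (by omega) z h) h1 h2
  rw [pos_neg hm z h, tpos_neg hm z h] at this
  omega

theorem sum_touch (S : Finset ℕ) (κ κ' : ℕ → ℤ) (t0 : ℕ) (h0 : t0 ∈ S)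
    (h : ∀ t ∈ S, κ' t = κ t + if t = t0 then 1 else 0) :
    (0 ≤ κ t0 → ∑ t ∈ S, (κ' t).natAbs = ∑ t ∈ S, (κ t).natAbs + 1) ∧
    (κ t0 < 0 → ∑ t ∈ S, (κ t).natAbs = ∑ t ∈ S, (κ' t).natAbs + 1) := by
  rw [← Finset.add_sum_erase S (fun t => (κ t).natAbs) h0,
    ← Finset.add_sum_erase S (fun t => (κ' t).natAbs) h0]
  have : ∑ t ∈ S.erase t0, (κ' t).natAbs = ∑ t ∈ S.erase t0, (κ t).natAbs := by
    apply Finset.sum_congr rfl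
    intro t ht
    rw [Finset.mem_erase] at ht
    rw [h t ht.2]; simp [ht.1]
  have h3 := h t0 h0
  simp only [if_true] at h3
  simp only [this]
  constructor <;> intro <;> omega

theorem L_pos {m : ℕ} (hm : 3 ≤ m) (z : Bool) {s : St} (h : V m s) :
    (0 ≤ K s (tpos z s) → L m (pos m z s) = L m s + 1) ∧
    (K s (tpos z s) < 0 → L m s = L m (pos m z s) + 1) := by
  apply sum_touch
  · rw [Finset.mem_Icc]; exact tpos_mem hm z h
  · intro t ht
    rw [Finset.mem_Icc] at ht
    exact K_pos hm z h ht.1 ht.2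

theorem L_neg {m : ℕ} (hm : 3 ≤ m) (z : Bool) {s : St} (h : V m s) :
    (1 ≤ K s (tneg m z s) → L m s = L m (neg m z s) + 1) ∧
    (K s (tneg m z s) < 1 → L m (neg m z s) = L m s + 1) := by
  have := L_pos hm z (V_neg (by omega) z h)
  rw [pos_neg hm z h, tpos_neg hm z h] at this
  rw [K_neg hm z h (tneg_mem hm z h).1 (tneg_mem hm z h).2] at this
  simp only [if_true] at this
  constructor
  · intro h'; exact this.1 (by omega)
  · intro h'; exact this.2 (by omega)

/-- `a` is a first letter of the state `s`. -/
def FD (m : ℕ) (a : Bool × Bool) (s : St) : Prop := L m (act m (a.1, !a.2) s) < L m s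

theorem FD_true {m : ℕ} (hm : 3 ≤ m) (z : Bool) {s : St} (h : V m s) :
    FD m (z, true) s ↔ 1 ≤ K s (tneg m z s) := by
  have := L_neg hm z h
  simp only [FD, act]
  simp
  constructor
  · intro h'; by_contra hc
    have := this.2 (by omega); omega
  · intro h'; have := this.1 h'; omega

theorem FD_false {m : ℕ} (hm : 3 ≤ m) (z : Bool) {s : St} (h : V m s) :
    FD m (z, false) s ↔ K s (tpos z s) < 0 := by
  have := L_pos hm z h
  simp only [FD, act]
  simp
  constructor
  · intro h'; by_contra hc
    have := this.1 (by omega); omega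
  · intro h'; have := this.2 h'; omega

theorem L_act {m : ℕ} (hm : 3 ≤ m) (a : Bool × Bool) {s : St} (h : V m s) :
    L m (act m a s) = L m s + 1 ∨ L m s = L m (act m a s) + 1 := by
  obtain ⟨z, σ⟩ := a
  cases σ
  · have := L_neg hm z h
    simp only [act]; simp
    by_cases h' : 1 ≤ K s (tneg m z s)
    · exact Or.inr (this.1 h')
    · exact Or.inl (this.2 (by omega))
  · have := L_pos hm z h
    simp only [act]; simp
    by_cases h' : 0 ≤ K s (tpos z s)
    · exact Or.inl (this.1 h')
    · exact Or.inr (this.2 (by omega))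

theorem FD_iff {m : ℕ} (hm : 3 ≤ m) (a : Bool × Bool) {s : St} (h : V m s) :
    FD m a s ↔ L m s = L m (act m (a.1, !a.2) s) + 1 := by
  have := L_act hm (a.1, !a.2) h
  unfold FD; omega

/-- two letters with the same generator cannot both be first letters -/
theorem FD_same {m : ℕ} (hm : 3 ≤ m) (z σ : Bool) {s : St} (h : V m s) (h1 : FD m (z, σ) s)
    (h2 : FD m (z, !σ) s) : False := by
  have key : FD m (z, true) s → FD m (z, false) s → False := by
    rw [FD_true hm z h, FD_false hm z h]
    cases s with
    | base k => simp [K]; omega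
    | top k f c cs =>
      have hv := h
      simp only [V, List.mem_cons, forall_eq_or_imp] at h
      simp only [tneg, tpos]
      split_ifs
      · have := K_antitone (top k f c cs) h.1.1; omega
      · have := K_antitone (top k f c cs) (show c + 1 ≤ m by omega); omega
  cases σ
  · exact key h2 h1
  · exact key h1 h2

theorem FD_two {m : ℕ} (hm : 3 ≤ m) (z σ τ : Bool) {s : St} (h : V m s) (h1 : FD m (z, σ) s)
    (h2 : FD m (!z, τ) s) : ∀ t, 1 ≤ t → t ≤ m → K s t ≠ 0 := by
  cases s with
  | base k =>
    intro t _ _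
    cases σ
    · rw [FD_false hm z h] at h1; simp [K] at h1 ⊢; omega
    · rw [FD_true hm z h] at h1; simp [K] at h1 ⊢; omega
  | top k f c cs =>
    have hv := h
    simp only [V, List.mem_cons, forall_eq_or_imp] at h
    have key : ∀ σ τ, FD m (f, σ) (top k f c cs) → FD m (!f, τ) (top k f c cs) →
        ∀ t, 1 ≤ t → t ≤ m → K (top k f c cs) t ≠ 0 := by
      intro σ τ h1 h2 t ht1 ht2
      have a1 := K_antitone (top k f c cs) ht1
      have a2 := K_antitone (top k f c cs) ht2
      cases σ
      · rw [FD_false hm _ hv] at h1; simp [tpos] at h1; omega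
      · cases τ
        · rw [FD_false hm _ hv] at h2; rw [FD_true hm _ hv] at h1
          simp [tneg] at h1; simp [tpos] at h2
          by_cases hc : t ≤ c
          · have := K_antitone (top k f c cs) hc; omega
          · have := K_antitone (top k f c cs) (show c + 1 ≤ t by omega); omega
        · rw [FD_true hm _ hv] at h2; simp [tneg] at h2; omega
    by_cases hz : z = f
    · subst hz; exact key σ τ h1 h2
    · have : z = !f := by cases z <;> cases f <;> simp_all
      subst this; simp only [Bool.not_not] at h2; exact key τ σ h2 h1

theorem L_eq_zero {m : ℕ} (hm : 3 ≤ m) {s : St} (h : V m s) : L m s = 0 ↔ s = base 0 := by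
  constructor
  · intro h0
    simp only [L, Finset.sum_eq_zero_iff, Finset.mem_Icc, Int.natAbs_eq_zero] at h0
    cases s with
    | base k => have := h0 1 (by omega); simp [K] at this; rw [this]
    | top k f c cs =>
      exfalso
      have := K_top_lt k f c cs
      simp only [V, List.mem_cons, forall_eq_or_imp] at h
      have h1 := h0 c (by omega)
      have h2 := h0 (c + 1) (by omega)
      omega
  · rintro rfl; simp [L, K]

theorem exists_FD {m : ℕ} (hm : 3 ≤ m) {s : St} (h : V m s) (h0 : L m s ≠ 0) :
    ∃ a, FD m a s := by
  by_contra hc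
  push Not at hc
  apply h0
  rw [L_eq_zero hm h]
  cases s with
  | base k =>
    have h1 := hc (true, true)
    have h2 := hc (true, false)
    rw [FD_true hm _ h] at h1
    rw [FD_false hm _ h] at h2
    simp [K] at h1 h2
    rw [show k = 0 by omega]
  | top k f c cs =>
    exfalso
    have h1 := hc (f, true)
    have h2 := hc (!f, false)
    rw [FD_true hm _ h] at h1
    rw [FD_false hm _ h] at h2
    have := K_top_lt k f c cs
    simp [tneg, tpos] at h1 h2
    omega

end St

namespace St

def nz (m : ℕ) (s : St) : ℕ := ((Finset.Icc 1 m).filter (fun t => K s t ≠ 0)).card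

theorem V_iter {m : ℕ} (hm : 3 ≤ m) (a : Bool × Bool) (r : ℕ) {s : St} (h : V m s) :
    V m ((act m a)^[r] s) := by
  induction r with
  | zero => exact h
  | succ r ih => rw [Function.iterate_succ_apply']; exact V_act (by omega) _ ih

theorem tpos_pos_one {m : ℕ} (z : Bool) {s : St} (h : V m s) (h1 : tpos z s = 1) :
    tpos z (pos m z s) = 1 := by
  cases s with
  | base k => simp [pos, tpos]
  | top k f c cs =>
    simp only [V, List.mem_cons, forall_eq_or_imp] at h
    simp only [tpos] at h1
    split_ifs at h1 with hz
    · simp [pos, tpos, hz]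
    · omega

theorem tneg_neg_m {m : ℕ} (z : Bool) {s : St} (h : V m s) (h1 : tneg m z s = m) :
    tneg m z (neg m z s) = m := by
  cases s with
  | base k => simp [neg, tneg]
  | top k f c cs =>
    simp only [V, List.mem_cons, forall_eq_or_imp] at h
    simp only [tneg] at h1
    split_ifs at h1 with hz
    · omega
    · simp [neg, tneg, hz]

theorem inv_pos {m : ℕ} (hm : 3 ≤ m) (z : Bool) {s : St} (h : V m s) {t t' : ℕ} (h1 : 1 ≤ t)
    (h2 : t < t') (h3 : t' ≤ m) (hi : K s t' = 0 ∧ (K s t = 0 ∨ tpos z s = 1)) :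
    K (pos m z s) t' = 0 ∧ (K (pos m z s) t = 0 ∨ tpos z (pos m z s) = 1) := by
  obtain ⟨hi1, hi2⟩ := hi
  rw [K_pos hm z h (by omega) h3, K_pos hm z h h1 (by omega)]
  by_cases hp : tpos z s = 1
  · rw [hp]
    have : t' ≠ 1 := by omega
    simp only [this, if_false, hi1]
    exact ⟨by simp, Or.inr (tpos_pos_one z h hp)⟩
  · have h0 : K s t = 0 := by tauto
    cases s with
    | base k => simp [tpos] at hp
    | top k f c cs =>
      have hv := h
      simp only [V, List.mem_cons, forall_eq_or_imp] at h
      simp only [tpos] at hp ⊢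
      by_cases hz : z = f
      · simp [hz] at hp
      · simp only [hz, if_false]
        have hlt := K_top_lt k f c cs
        have hout : ¬ (t < c + 1 ∧ c + 1 ≤ t') := by
          rintro ⟨b1, b2⟩
          have e1 := K_antitone (top k f c cs) (show t ≤ c by omega)
          have e2 := K_antitone (top k f c cs) b2
          omega
        have hne : t' ≠ c + 1 := by omega
        refine ⟨by simp [hne, hi1], ?_⟩
        by_cases hte : t = c + 1
        · right
          have : c + 1 ≠ m := by omega
          simp [pos, hz, this]
        · left; simp [hte, h0]

theorem inv_neg {m : ℕ} (hm : 3 ≤ m) (z : Bool) {s : St} (h : V m s) {t t' : ℕ} (h1 : 1 ≤ t)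
    (h2 : t < t') (h3 : t' ≤ m) (hi : K s t = 0 ∧ (K s t' = 0 ∨ tneg m z s = m)) :
    K (neg m z s) t = 0 ∧ (K (neg m z s) t' = 0 ∨ tneg m z (neg m z s) = m) := by
  obtain ⟨hi1, hi2⟩ := hi
  rw [K_neg hm z h (by omega) h3, K_neg hm z h h1 (by omega)]
  by_cases hp : tneg m z s = m
  · rw [hp]
    have : t ≠ m := by omega
    simp only [this, if_false, hi1]
    exact ⟨by simp, Or.inr (tneg_neg_m z h hp)⟩
  · have h0 : K s t' = 0 := by tauto
    cases s with
    | base k => simp [tneg] at hp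
    | top k f c cs =>
      have hv := h
      simp only [V, List.mem_cons, forall_eq_or_imp] at h
      simp only [tneg] at hp ⊢
      by_cases hz : z = f
      · simp only [hz, if_true]
        have hlt := K_top_lt k f c cs
        have hout : ¬ (t ≤ c ∧ c < t') := by
          rintro ⟨b1, b2⟩
          have e1 := K_antitone (top k f c cs) b1
          have e2 := K_antitone (top k f c cs) (show c + 1 ≤ t' by omega)
          omega
        have hne : t ≠ c := by omega
        refine ⟨by simp [hne, hi1], ?_⟩
        by_cases hte : t' = c
        · right
          have : c ≠ 1 := by omega
          simp [neg, this]
        · left; simp [hte, h0]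
      · simp [hz] at hp

theorem zero_kept {m : ℕ} (hm : 3 ≤ m) (a : Bool × Bool) (r : ℕ) {s : St} (h : V m s)
    {t t' : ℕ} (h1 : 1 ≤ t) (h2 : t < t') (h3 : t' ≤ m) (hi : K s t = 0) (hi' : K s t' = 0) :
    K ((act m a)^[r] s) t = 0 ∨ K ((act m a)^[r] s) t' = 0 := by
  obtain ⟨z, σ⟩ := a
  cases σ
  · left
    have : K ((act m (z, false))^[r] s) t = 0 ∧ (K ((act m (z, false))^[r] s) t' = 0 ∨
        tneg m z ((act m (z, false))^[r] s) = m) := by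
      induction r with
      | zero => exact ⟨hi, Or.inl hi'⟩
      | succ r ih =>
        rw [Function.iterate_succ_apply']
        exact inv_neg hm z (V_iter hm _ r h) h1 h2 h3 ih
    exact this.1
  · right
    have : K ((act m (z, true))^[r] s) t' = 0 ∧ (K ((act m (z, true))^[r] s) t = 0 ∨
        tpos z ((act m (z, true))^[r] s) = 1) := by
      induction r with
      | zero => exact ⟨hi', Or.inl hi⟩
      | succ r ih =>
        rw [Function.iterate_succ_apply']
        exact inv_pos hm z (V_iter hm _ r h) h1 h2 h3 ih
    exact this.1

theorem nz_iter {m : ℕ} (hm : 3 ≤ m) (a : Bool × Bool) (r : ℕ) {s : St} (h : V m s) :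
    nz m ((act m a)^[r] s) ≤ nz m s + 1 := by
  set s' := (act m a)^[r] s with hs'
  set lost := (Finset.Icc 1 m).filter (fun t => K s t = 0 ∧ K s' t ≠ 0) with hlost
  have hl : lost.card ≤ 1 := by
    rw [Finset.card_le_one]
    intro t ht t' ht'
    simp only [hlost, Finset.mem_filter, Finset.mem_Icc] at ht ht'
    by_contra hne
    rcases lt_or_gt_of_ne hne with hlt | hlt
    · rcases zero_kept hm a r h ht.1.1 hlt ht'.1.2 ht.2.1 ht'.2.1 with e | e
      · exact ht.2.2 e
      · exact ht'.2.2 e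
    · rcases zero_kept hm a r h ht'.1.1 hlt ht.1.2 ht'.2.1 ht.2.1 with e | e
      · exact ht'.2.2 e
      · exact ht.2.2 e
  calc nz m s' ≤ ((Finset.Icc 1 m).filter (fun t => K s t ≠ 0) ∪ lost).card := by
        apply Finset.card_le_card
        intro t ht
        simp only [hlost, Finset.mem_union, Finset.mem_filter] at ht ⊢
        tauto
    _ ≤ _ := by
        refine (Finset.card_union_le _ _).trans ?_
        unfold nz; omega

theorem strip {m : ℕ} (hm : 3 ≤ m) (z σ : Bool) {s : St} (h : V m s) (hF : FD m (z, σ) s) :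
    ∃ r s', 1 ≤ r ∧ V m s' ∧ s = (act m (z, σ))^[r] s' ∧ L m s = r + L m s' ∧
      (∀ τ, ¬ FD m (z, τ) s') := by
  induction hN : L m s using Nat.strong_induction_on generalizing s with
  | _ N ih =>
    have hl := (FD_iff hm _ h).1 hF
    simp only at hl
    have hv1 : V m (act m (z, !σ) s) := V_act (by omega) _ h
    have hback : act m (z, σ) (act m (z, !σ) s) = s := act_inv_act hm z σ h
    by_cases h1 : FD m (z, σ) (act m (z, !σ) s)
    · obtain ⟨r, s', hr, hv', he, hL, hno⟩ := ih _ (by omega) hv1 h1 rfl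
      refine ⟨r + 1, s', by omega, hv', ?_, by omega, hno⟩
      rw [Function.iterate_succ_apply', ← he, hback]
    · refine ⟨1, _, le_refl _, hv1, hback.symm, by omega, ?_⟩
      intro τ hτ
      by_cases hts : τ = σ
      · exact h1 (hts ▸ hτ)
      · have : τ = !σ := by cases τ <;> cases σ <;> simp_all
        subst this
        have := (FD_iff hm _ hv1).1 hτ
        simp only [Bool.not_not] at this
        rw [hback] at this
        omega

/-- `s` has `k` syllables peeled off alternately, starting with generator `z`. -/
def SdS (m : ℕ) : ℕ → Bool → St → Prop
  | 0, _, _ => True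
  | k + 1, z, s => ∃ σ r s', 1 ≤ r ∧ V m s' ∧ s = (act m (z, σ))^[r] s' ∧ L m s = r + L m s' ∧
      (∀ τ, ¬ FD m (z, τ) s') ∧ SdS m k (!z) s'

theorem SdS_mono (m : ℕ) (k k' : ℕ) (hk : k ≤ k') (z : Bool) (s : St) (h : SdS m k' z s) :
    SdS m k z s := by
  induction k generalizing k' z s with
  | zero => trivial
  | succ k ih =>
    obtain ⟨k', rfl⟩ : ∃ k'', k' = k'' + 1 := ⟨k' - 1, by omega⟩
    obtain ⟨σ, r, s', h1, h2, h3, h4, h5, h6⟩ := h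
    exact ⟨σ, r, s', h1, h2, h3, h4, h5, ih k' (by omega) _ _ h6⟩

theorem SdS_nz {m : ℕ} (hm : 3 ≤ m) (z σ : Bool) {s : St} (h : V m s) (hF : FD m (z, σ) s) :
    SdS m (nz m s) z s := by
  induction hN : L m s using Nat.strong_induction_on generalizing s z σ with
  | _ N ih =>
    obtain ⟨r, s', hr, hv', he, hL, hno⟩ := strip hm z σ h hF
    have hn := nz_iter hm (z, σ) r hv'
    rw [← he] at hn
    apply SdS_mono m _ (nz m s' + 1) hn
    refine ⟨σ, r, s', hr, hv', he, hL, hno, ?_⟩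
    by_cases h0 : L m s' = 0
    · have : nz m s' = 0 := by
        rw [(L_eq_zero hm hv').1 h0]; simp [nz, K]
      rw [this]; trivial
    · obtain ⟨⟨z', τ⟩, hz'⟩ := exists_FD hm hv' h0
      have : z' = !z := by
        by_contra hc
        have : z' = z := by cases z <;> cases z' <;> simp_all
        subst this
        exact hno τ hz'
      subst this
      exact ih _ (by omega) _ τ hv' hz' rfl

theorem SdS_two {m : ℕ} (hm : 3 ≤ m) (z σ τ : Bool) {s : St} (h : V m s)
    (h1 : FD m (z, σ) s) (h2 : FD m (!z, τ) s) : SdS m m z s := by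
  have := SdS_nz hm z σ h h1
  have hn : nz m s = m := by
    unfold nz
    rw [Finset.filter_true_of_mem]
    · simp
    · intro t ht
      rw [Finset.mem_Icc] at ht
      exact FD_two hm z σ τ h h1 h2 t ht.1 ht.2
  rwa [hn] at this

/-- flipping the two generators -/
def flip : St → St
  | base k => base k
  | top k f c cs => top k (!f) c cs

theorem flip_flip (s : St) : flip (flip s) = s := by cases s <;> simp [flip]

theorem flip_mk (k f cs) : flip (mk k f cs) = mk k (!f) cs := by cases cs <;> simp [mk, flip]

theorem flip_act (m : ℕ) (z σ : Bool) (s : St) :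
    flip (act m (z, σ) s) = act m (!z, σ) (flip s) := by
  cases s with
  | base k => cases σ <;> simp [act, pos, neg, flip]
  | top k f c cs =>
    have e : ∀ k f c cs, flip (top k f c cs) = top k (!f) c cs := fun _ _ _ _ => rfl
    rw [e]
    cases σ
    · by_cases h2 : c = 1 <;> cases z <;> cases f <;> simp [act, neg, e, flip_mk, h2]
    · by_cases h1 : c + 1 = m <;> cases z <;> cases f <;> simp [act, pos, e, flip_mk, h1]

theorem V_flip (m : ℕ) (s : St) : V m (flip s) ↔ V m s := by
  cases s <;> simp [flip, V]

theorem L_flip (m : ℕ) (s : St) : L m (flip s) = L m s := by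
  cases s <;> simp [flip, L, K]

end St

namespace St

def run (m : ℕ) : ℕ → Bool → St → St
  | 0, _, s => s
  | n + 1, z, s => run m n (!z) (pos m z s)

theorem itr_add (m a b : ℕ) (z : Bool) (s : St) :
    run m (a + b) z s = run m b (not^[a] z) (run m a z s) := by
  induction a generalizing z s with
  | zero => simp [run]
  | succ a ih =>
    rw [show a + 1 + b = (a + b) + 1 by omega]
    simp only [run]
    rw [ih, Function.iterate_succ_apply]

theorem itr_grow (m n : ℕ) (z : Bool) (k : ℤ) (c : ℕ) (cs : List ℕ) (h : c + n < m) :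
    run m n z (top k (!z) c cs) = top k (not^[n] (!z)) (c + n) cs := by
  induction n generalizing z c with
  | zero => simp [run]
  | succ n ih =>
    have h1 : c + 1 ≠ m := by omega
    have e : pos m z (top k (!z) c cs) = top k (!(!z)) (c + 1) cs := by
      cases z <;> simp [pos, h1]
    simp only [run]
    rw [e, ih (!z) (c + 1) (by omega), Function.iterate_succ_apply]
    congr 1; omega

theorem itr_push (m n : ℕ) (z : Bool) (k : ℤ) (cs : List ℕ) (h : n + 1 < m) :
    run m (n + 1) z (mk k z cs) = top k (not^[n] z) (n + 1) cs := by
  have e : pos m z (mk k z cs) = top k (!(!z)) 1 cs := by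
    cases cs <;> simp [pos, mk]
  simp only [run]
  rw [e, itr_grow _ _ _ _ _ _ (by omega)]
  simp [add_comm]

theorem not_iter_two (n : ℕ) (z : Bool) : not^[n + 2] z = not^[n] z := by
  simp [Function.iterate_succ_apply]

theorem itr_full (m : ℕ) (hm : 3 ≤ m) (z : Bool) (k : ℤ) (cs : List ℕ) :
    run m m z (mk k z cs) = mk (k + 1) (not^[m] z) cs := by
  obtain ⟨n, rfl⟩ : ∃ n, m = n + 2 := ⟨m - 2, by omega⟩
  have h := itr_add (n + 2) (n + 1) 1 z (mk k z cs)
  rw [itr_push _ n _ _ _ (by omega)] at h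
  rw [show n + 1 + 1 = n + 2 by omega] at h
  rw [h, not_iter_two]
  simp only [run, Function.iterate_succ_apply']
  cases (not^[n] z) <;> simp [pos]

theorem itr_full' (m : ℕ) (z : Bool) (k : ℤ) (c : ℕ) (cs : List ℕ) (h1 : 1 ≤ c)
    (h2 : c < m) :
    run m m z (top k (!z) c cs) = top (k + 1) (not^[m] (!z)) c cs := by
  obtain ⟨b, rfl⟩ : ∃ b, m = b + 1 + c := ⟨m - c - 1, by omega⟩
  obtain ⟨d, rfl⟩ : ∃ d, c = d + 1 := ⟨c - 1, by omega⟩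
  set m := b + 1 + (d + 1) with hmdef
  have h := itr_add m (b + 1) (d + 1) z (top k (!z) (d + 1) cs)
  rw [← hmdef] at h
  rw [h]
  have h' := itr_add m b 1 z (top k (!z) (d + 1) cs)
  rw [itr_grow _ b _ _ _ _ (by omega)] at h'
  rw [h']
  have e : run m 1 (not^[b] z) (top k (not^[b] (!z)) (d + 1 + b) cs) =
      mk (k + 1) (not^[b + 1] z) cs := by
    have h3 : d + 1 + b + 1 = m := by omega
    simp only [run]
    rw [← Function.iterate_succ_apply, Function.iterate_succ_apply']
    cases (not^[b] z) <;> simp [pos, h3]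
  rw [e, itr_push _ _ _ _ _ (by omega)]
  congr 1
  rw [← Function.iterate_add_apply, ← Function.iterate_succ_apply]
  have : m.succ = (d + (b + 1)) + 2 := by omega
  rw [this, not_iter_two]

theorem itr_eq {m : ℕ} (hm : 3 ≤ m) (z : Bool) {s : St} (h : V m s) :
    run m m z s = run m m (!z) s := by
  have key : ∀ z, run m m z s = match s with
      | base k => base (k + 1)
      | top k f c cs => top (k + 1) (not^[m] f) c cs := by
    intro z
    cases s with
    | base k =>
      have := itr_full m hm z k []
      simpa [mk] using this
    | top k f c cs =>
      have hc := h c (by simp)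
      by_cases hz : z = f
      · subst hz
        have := itr_full m hm z k (c :: cs)
        simpa [mk] using this
      · have : f = !z := by cases z <;> cases f <;> simp_all
        subst this
        exact itr_full' m z k c cs hc.1 hc.2
  rw [key, key]

section canon

variable {Γ : Type*} [Group Γ]

def canL (m : ℕ) (X : Bool → Γ) (k : ℤ) : Bool → List ℕ → Γ
  | _, [] => (altProd m (X true) (X false)) ^ k
  | f, c :: cs => altProd c (X f) (X (!f)) * canL m X k (not^[c + 1] f) cs

def can (m : ℕ) (X : Bool → Γ) : St → Γ
  | base k => canL m X k true []
  | top k f c cs => canL m X k f (c :: cs)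

def bl (X : Bool → Γ) (a : Bool × Bool) : Γ := if a.2 then X a.1 else (X a.1)⁻¹

theorem can_mk (m : ℕ) (X : Bool → Γ) (k f cs) : can m X (mk k f cs) = canL m X k f cs := by
  cases cs <;> simp [mk, can, canL]

theorem altProd_succ_right (X : Bool → Γ) (n : ℕ) (w : Bool) :
    altProd (n + 1) (X w) (X (!w)) = altProd n (X w) (X (!w)) * X (not^[n] w) := by
  induction n generalizing w with
  | zero => simp [altProd]
  | succ n ih =>
    have := ih (!w)
    rw [Bool.not_not] at this
    rw [altProd, this, ← mul_assoc, Function.iterate_succ_apply]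
    rfl

theorem not_iter_self (n : ℕ) (z : Bool) : not^[n] (not^[n] z) = z := by
  induction n generalizing z with
  | zero => rfl
  | succ n ih => 
    rw [Function.iterate_succ_apply', Function.iterate_succ_apply]
    rw [← Function.iterate_succ_apply, Function.iterate_succ_apply', ]
    rw [← Function.iterate_succ_apply, Function.iterate_succ_apply', ih]; simp

variable {m : ℕ} {X : Bool → Γ}

theorem delta_eq (hX : altProd m (X true) (X false) = altProd m (X false) (X true)) (z : Bool) :
    altProd m (X z) (X (!z)) = altProd m (X true) (X false) := by
  cases z
  · exact hX.symm
  · rfl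

theorem delta_comm (hX : altProd m (X true) (X false) = altProd m (X false) (X true))
    (z : Bool) : altProd m (X true) (X false) * X z =
      X (not^[m] z) * altProd m (X true) (X false) := by
  have h1 := altProd_succ_right X m (not^[m] z)
  rw [not_iter_self, delta_eq hX] at h1
  rw [← h1, altProd]
  congr 1
  have := delta_eq hX (!(not^[m] z))
  rwa [Bool.not_not] at this

theorem delta_alt (hX : altProd m (X true) (X false) = altProd m (X false) (X true))
    (c : ℕ) (z : Bool) : altProd m (X true) (X false) * altProd c (X z) (X (!z)) =
      altProd c (X (not^[m] z)) (X (!(not^[m] z))) * altProd m (X true) (X false) := by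
  induction c generalizing z with
  | zero => simp [altProd]
  | succ c ih =>
    have := ih (!z)
    rw [← Function.iterate_succ_apply, Function.iterate_succ_apply', Bool.not_not,
      Bool.not_not] at this
    rw [altProd, ← mul_assoc, delta_comm hX, mul_assoc, this, altProd, mul_assoc]

theorem not_iter_comm (a b : ℕ) (z : Bool) : not^[a] (not^[b] z) = not^[b] (not^[a] z) := by
  rw [← Function.iterate_add_apply, ← Function.iterate_add_apply, add_comm]

theorem delta_canL (hX : altProd m (X true) (X false) = altProd m (X false) (X true))
    (k : ℤ) (f : Bool) (cs : List ℕ) :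
    altProd m (X true) (X false) * canL m X k f cs = canL m X (k + 1) (not^[m] f) cs := by
  induction cs generalizing f with
  | nil => simp only [canL]; rw [zpow_add_one, mul_self_zpow, zpow_add_one]
  | cons c cs ih =>
    simp only [canL]
    rw [← mul_assoc, delta_alt hX, mul_assoc, ih, not_iter_comm]

theorem can_pos (hm : 3 ≤ m)
    (hX : altProd m (X true) (X false) = altProd m (X false) (X true))
    (z : Bool) (s : St) : can m X (pos m z s) = X z * can m X s := by
  cases s with
  | base k => simp [pos, can, canL, altProd]
  | top k f c cs =>
    by_cases hz : z = f
    · subst hz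
      simp [pos, can, canL, altProd]
    · have : f = !z := by cases z <;> cases f <;> simp_all
      subst this
      by_cases hc : c + 1 = m
      · simp only [pos, hz, if_false, hc, if_true, can_mk]
        simp only [can, canL]
        rw [← mul_assoc]
        have : X z * altProd c (X !z) (X !!z) = altProd (c + 1) (X z) (X (!z)) := by
          rw [altProd, Bool.not_not]
        rw [this, hc, delta_eq hX, delta_canL hX, not_iter_self]
      · simp only [pos, hz, if_false, hc, can, canL, altProd, Bool.not_not]
        rw [mul_assoc]
        congr 3

theorem can_act (hm : 3 ≤ m)
    (hX : altProd m (X true) (X false) = altProd m (X false) (X true))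
    (a : Bool × Bool) {s : St} (h : V m s) : can m X (act m a s) = bl X a * can m X s := by
  obtain ⟨z, σ⟩ := a
  cases σ
  · simp only [act, bl]; simp
    rw [eq_inv_mul_iff_mul_eq, ← can_pos hm hX, pos_neg hm z h]
  · simp only [act, bl]; simp
    exact can_pos hm hX z s

def evS (m : ℕ) (u : List (Bool × Bool)) : St := u.foldr (act m) (base 0)

theorem V_evS (hm : 3 ≤ m) (u : List (Bool × Bool)) : V m (evS m u) := by
  induction u with
  | nil => trivial
  | cons a u ih => exact V_act (by omega) a ih

theorem can_evS (hm : 3 ≤ m)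
    (hX : altProd m (X true) (X false) = altProd m (X false) (X true))
    (u : List (Bool × Bool)) : can m X (evS m u) = (u.map (bl X)).prod := by
  induction u with
  | nil => simp [evS, can, canL]
  | cons a u ih =>
    have : evS m (a :: u) = act m a (evS m u) := rfl
    rw [this, can_act hm hX a (V_evS hm u), ih]; simp

end canon

/-- the generator `z` as a permutation of the valid states -/
def pm {m : ℕ} (hm : 3 ≤ m) (z : Bool) : Equiv.Perm {s : St // V m s} where
  toFun s := ⟨pos m z s.1, V_pos (by omega) z s.2⟩
  invFun s := ⟨neg m z s.1, V_neg (by omega) z s.2⟩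
  left_inv s := Subtype.ext (neg_pos hm z s.2)
  right_inv s := Subtype.ext (pos_neg hm z s.2)

theorem altProd_pm {m : ℕ} (hm : 3 ≤ m) (n : ℕ) (z : Bool) (s : {s : St // V m s}) :
    (altProd n (pm hm (not^[n + 1] z)) (pm hm (!(not^[n + 1] z))) s).1 = run m n z s.1 := by
  induction n generalizing z s with
  | zero => simp [altProd, run]
  | succ n ih =>
    rw [altProd_succ_right, not_iter_two, not_iter_self, Equiv.Perm.mul_apply]
    have := ih (!z) (pm hm z s)
    rw [Function.iterate_succ_apply, Bool.not_not] at this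
    rw [this]; rfl

theorem pm_braid {m : ℕ} (hm : 3 ≤ m) :
    altProd m (pm hm true) (pm hm false) = altProd m (pm hm false) (pm hm true) := by
  have key : ∀ z, altProd m (pm hm (not^[m + 1] z)) (pm hm (!(not^[m + 1] z))) =
      altProd m (pm hm (!(not^[m + 1] z))) (pm hm (not^[m + 1] z)) := by
    intro z
    ext s
    have h1 := altProd_pm hm m z s
    have h2 := altProd_pm hm m (!z) s
    rw [← Function.iterate_succ_apply, Function.iterate_succ_apply', Bool.not_not] at h2
    rw [h1, h2, itr_eq hm z s.2]
  have := key (not^[m + 1] true)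
  rwa [not_iter_self] at this

theorem evS_append {m : ℕ} (hm : 3 ≤ m) (u t : List (Bool × Bool)) :
    evS m (u ++ t) = ((u.map (bl (pm hm))).prod ⟨evS m t, V_evS hm t⟩).1 := by
  induction u with
  | nil => simp
  | cons a u ih =>
    have : evS m (a :: u ++ t) = act m a (evS m (u ++ t)) := rfl
    rw [this, ih, List.map_cons, List.prod_cons, Equiv.Perm.mul_apply]
    obtain ⟨z, σ⟩ := a
    cases σ <;> simp [bl, act] <;> rfl

theorem evS_congr_right {m : ℕ} (hm : 3 ≤ m) {u u' : List (Bool × Bool)}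
    (h : evS m u = evS m u') (t : List (Bool × Bool)) : evS m (u ++ t) = evS m (u' ++ t) := by
  rw [evS_append hm, evS_append hm, ← can_evS hm (pm_braid hm), h, can_evS hm (pm_braid hm)]

theorem evS_congr_left {m : ℕ} (t : List (Bool × Bool)) {u u' : List (Bool × Bool)}
    (h : evS m u = evS m u') : evS m (t ++ u) = evS m (t ++ u') := by
  unfold evS at *; rw [List.foldr_append, List.foldr_append, h]

theorem L_evS_le {m : ℕ} (hm : 3 ≤ m) (u : List (Bool × Bool)) : L m (evS m u) ≤ u.length := by
  induction u with
  | nil => simp [evS, L, K]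
  | cons a u ih =>
    have : evS m (a :: u) = act m a (evS m u) := rfl
    rw [this, List.length_cons]
    have := L_act hm a (V_evS hm u)
    omega

theorem exists_word {m : ℕ} (hm : 3 ≤ m) {s : St} (h : V m s) :
    ∃ u, evS m u = s ∧ u.length = L m s := by
  induction hN : L m s using Nat.strong_induction_on generalizing s with
  | _ N ih =>
    by_cases h0 : L m s = 0
    · refine ⟨[], ?_, by simp; omega⟩
      rw [(L_eq_zero hm h).1 h0]; rfl
    · obtain ⟨a, ha⟩ := exists_FD hm h h0
      have hl := (FD_iff hm _ h).1 ha
      obtain ⟨u, hu, hul⟩ := ih _ (by omega) (V_act (by omega) (a.1, !a.2) h) rfl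
      refine ⟨a :: u, ?_, by simp; omega⟩
      have : evS m (a :: u) = act m a (evS m u) := rfl
      rw [this, hu]
      exact act_inv_act hm a.1 a.2 h

end St

/-! ## Part 2: words -/

set_option linter.unusedSectionVars false

section words

variable {ι : Type} [DecidableEq ι] (mm : ι → ι → ℕ)

def Pr (i j : ι) : Prop := i ≠ j ∧ 3 ≤ mm i j

def cd (i : ι) (a : ι × Bool) : Bool × Bool := (decide (a.1 = i), a.2)

def ev (i j : ι) (u : List (ι × Bool)) : St := St.evS (mm i j) (u.map (cd i))

def IJ (i j : ι) (u : List (ι × Bool)) : Prop := ∀ a ∈ u, a.1 = i ∨ a.1 = j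

def Geo (i j : ι) (u : List (ι × Bool)) : Prop :=
  IJ i j u ∧ St.L (mm i j) (ev mm i j u) = u.length

def Step (w w' : List (ι × Bool)) : Prop :=
  ∃ i j α u u' β, Pr mm i j ∧ Geo mm i j u ∧ Geo mm i j u' ∧ ev mm i j u = ev mm i j u' ∧
    w = α ++ u ++ β ∧ w' = α ++ u' ++ β

def E (w w' : List (ι × Bool)) : Prop := Relation.ReflTransGen (Step mm) w w'

def linv (a : ι × Bool) : ι × Bool := (a.1, !a.2)

/-- `a` is a first letter of some word equivalent to `w` -/
def Hd (a : ι × Bool) (w : List (ι × Bool)) : Prop := ∃ z, E mm w (a :: z)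

def Free (i j : ι) (y : List (ι × Bool)) : Prop := ∀ a, Hd mm a y → a.1 ≠ i ∧ a.1 ≠ j

def Red : List (ι × Bool) → Prop
  | [] => True
  | a :: v => Red v ∧ ¬ Hd mm (linv a) v

def Sw (i j : ι) (a : ι × Bool) (v : List (ι × Bool)) (b : ι × Bool)
    (v' : List (ι × Bool)) : Prop :=
  ∃ u u' y, Geo mm i j (a :: u) ∧ Geo mm i j (b :: u') ∧
    ev mm i j (a :: u) = ev mm i j (b :: u') ∧ E mm v (u ++ y) ∧ E mm v' (u' ++ y) ∧
    Free mm i j y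

variable {mm}

theorem E_refl (w : List (ι × Bool)) : E mm w w := Relation.ReflTransGen.refl

theorem E_trans {w w' w'' : List (ι × Bool)} (h : E mm w w') (h' : E mm w' w'') : E mm w w'' :=
  Relation.ReflTransGen.trans h h'

theorem Step_symm {w w' : List (ι × Bool)} (h : Step mm w w') : Step mm w' w := by
  obtain ⟨i, j, α, u, u', β, h1, h2, h3, h4, h5, h6⟩ := h
  exact ⟨i, j, α, u', u, β, h1, h3, h2, h4.symm, h6, h5⟩

theorem E_symm {w w' : List (ι × Bool)} (h : E mm w w') : E mm w' w := by
  induction h with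
  | refl => exact E_refl _
  | tail _ h ih => exact E_trans (Relation.ReflTransGen.single (Step_symm h)) ih

theorem E_left (α : List (ι × Bool)) {w w' : List (ι × Bool)} (h : E mm w w') :
    E mm (α ++ w) (α ++ w') := by
  induction h with
  | refl => exact E_refl _
  | tail _ h ih =>
    refine E_trans ih (Relation.ReflTransGen.single ?_)
    obtain ⟨i, j, γ, u, u', β, h1, h2, h3, h4, h5, h6⟩ := h
    exact ⟨i, j, α ++ γ, u, u', β, h1, h2, h3, h4, by simp [h5], by simp [h6]⟩

theorem E_right (β : List (ι × Bool)) {w w' : List (ι × Bool)} (h : E mm w w') :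
    E mm (w ++ β) (w' ++ β) := by
  induction h with
  | refl => exact E_refl _
  | tail _ h ih =>
    refine E_trans ih (Relation.ReflTransGen.single ?_)
    obtain ⟨i, j, γ, u, u', δ, h1, h2, h3, h4, h5, h6⟩ := h
    exact ⟨i, j, γ, u, u', δ ++ β, h1, h2, h3, h4, by simp [h5], by simp [h6]⟩

theorem E_cons (a : ι × Bool) {w w' : List (ι × Bool)} (h : E mm w w') :
    E mm (a :: w) (a :: w') := E_left [a] h

theorem E_app {w w' x x' : List (ι × Bool)} (h : E mm w w') (h' : E mm x x') :
    E mm (w ++ x) (w' ++ x') := E_trans (E_right x h) (E_left w' h')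

theorem Geo_len {i j : ι} {u u' : List (ι × Bool)} (h : Geo mm i j u) (h' : Geo mm i j u')
    (e : ev mm i j u = ev mm i j u') : u.length = u'.length := by
  rw [← h.2, ← h'.2, e]

theorem E_len {w w' : List (ι × Bool)} (h : E mm w w') : w.length = w'.length := by
  induction h with
  | refl => rfl
  | tail _ h ih =>
    obtain ⟨i, j, α, u, u', β, h1, h2, h3, h4, h5, h6⟩ := h
    have := Geo_len h2 h3 h4
    rw [ih, h5, h6]; simp [this]

theorem E_of_ev {i j : ι} (hp : Pr mm i j) {u u' : List (ι × Bool)} (h : Geo mm i j u)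
    (h' : Geo mm i j u') (e : ev mm i j u = ev mm i j u') : E mm u u' :=
  Relation.ReflTransGen.single ⟨i, j, [], u, u', [], hp, h, h', e, by simp, by simp⟩

theorem Hd_E {a : ι × Bool} {w w' : List (ι × Bool)} (h : E mm w w') :
    Hd mm a w ↔ Hd mm a w' :=
  ⟨fun ⟨z, hz⟩ => ⟨z, E_trans (E_symm h) hz⟩, fun ⟨z, hz⟩ => ⟨z, E_trans h hz⟩⟩

theorem Hd_cons (a : ι × Bool) (w : List (ι × Bool)) : Hd mm a (a :: w) := ⟨w, E_refl _⟩

theorem Hd_right {a : ι × Bool} {w : List (ι × Bool)} (h : Hd mm a w) (y : List (ι × Bool)) :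
    Hd mm a (w ++ y) := by
  obtain ⟨z, hz⟩ := h
  exact ⟨z ++ y, E_right y hz⟩

theorem Free_E {i j : ι} {w w' : List (ι × Bool)} (h : E mm w w') (hf : Free mm i j w) :
    Free mm i j w' := fun a ha => hf a ((Hd_E h).2 ha)

theorem Free_swap {i j : ι} {w : List (ι × Bool)} (hf : Free mm i j w) :
    Free mm j i w := fun a ha => ⟨(hf a ha).2, (hf a ha).1⟩

theorem ev_cons (i j : ι) (a : ι × Bool) (u : List (ι × Bool)) :
    ev mm i j (a :: u) = St.act (mm i j) (cd i a) (ev mm i j u) := rfl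

theorem V_ev {i j : ι} (hp : Pr mm i j) (u : List (ι × Bool)) : St.V (mm i j) (ev mm i j u) :=
  St.V_evS hp.2 _

theorem Geo_tail {i j : ι} (hp : Pr mm i j) {a : ι × Bool} {u : List (ι × Bool)}
    (h : Geo mm i j (a :: u)) : Geo mm i j u := by
  refine ⟨fun b hb => h.1 b (by simp [hb]), ?_⟩
  have h1 := h.2
  rw [ev_cons, List.length_cons] at h1
  have h2 := St.L_act hp.2 (cd i a) (V_ev hp u)
  have h3 := St.L_evS_le hp.2 (u.map (cd i))
  rw [List.length_map] at h3
  change St.L (mm i j) (ev mm i j u) ≤ _ at h3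
  omega

theorem act_cd_inv {i j : ι} (hp : Pr mm i j) (a : ι × Bool) (u : List (ι × Bool)) :
    St.act (mm i j) ((cd i a).1, !(cd i a).2) (ev mm i j (a :: u)) = ev mm i j u := by
  rw [ev_cons]
  exact St.act_act_inv hp.2 _ _ (V_ev hp u)

theorem Geo_FD {i j : ι} (hp : Pr mm i j) {a : ι × Bool} {u : List (ι × Bool)}
    (h : Geo mm i j (a :: u)) : St.FD (mm i j) (cd i a) (ev mm i j (a :: u)) := by
  unfold St.FD
  rw [act_cd_inv hp, h.2, (Geo_tail hp h).2]
  simp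

theorem Geo_nil (i j : ι) : Geo mm i j [] := by
  refine ⟨by simp [IJ], ?_⟩
  simp [ev, St.evS, St.L, St.K]

theorem Geo_cons_of_not_FD {i j : ι} (hp : Pr mm i j) {a : ι × Bool} {u : List (ι × Bool)}
    (ha : a.1 = i ∨ a.1 = j) (h : Geo mm i j u)
    (hF : ¬ St.FD (mm i j) (cd i (linv a)) (ev mm i j u)) : Geo mm i j (a :: u) := by
  refine ⟨fun b hb => ?_, ?_⟩
  · rcases List.mem_cons.1 hb with rfl | hb
    · exact ha
    · exact h.1 b hb
  · have h2 := St.L_act hp.2 (cd i a) (V_ev hp u)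
    rw [ev_cons, List.length_cons, ← h.2]
    rcases h2 with h2 | h2
    · exact h2
    · exfalso
      apply hF
      unfold St.FD
      have : ((cd i (linv a)).1, !(cd i (linv a)).2) = cd i a :=
        Prod.ext rfl (by simp [cd, linv])
      rw [this]; omega

theorem cd_inj {i j : ι} (hij : i ≠ j) {a b : ι × Bool} (ha : a.1 = i ∨ a.1 = j)
    (hb : b.1 = i ∨ b.1 = j) (h : cd i a = cd i b) : a = b := by
  obtain ⟨a1, a2⟩ := a
  obtain ⟨b1, b2⟩ := b
  simp only [cd, Prod.mk.injEq, decide_eq_decide] at h ha hb ⊢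
  refine ⟨?_, h.2⟩
  rcases ha with rfl | rfl <;> rcases hb with rfl | rfl <;> simp_all

theorem exists_lift {i j : ι} (hij : i ≠ j) (x : List (Bool × Bool)) :
    ∃ u : List (ι × Bool), IJ i j u ∧ u.map (cd i) = x := by
  induction x with
  | nil => exact ⟨[], by simp [IJ], rfl⟩
  | cons a x ih =>
    obtain ⟨u, h1, h2⟩ := ih
    refine ⟨(if a.1 then i else j, a.2) :: u, ?_, ?_⟩
    · intro b hb
      rcases List.mem_cons.1 hb with rfl | hb
      · cases a.1 <;> simp
      · exact h1 b hb
    · rw [List.map_cons, h2]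
      obtain ⟨z, σ⟩ := a
      cases z <;> simp [cd, hij.symm]

theorem exists_gw {i j : ι} (hp : Pr mm i j) {s : St} (h : St.V (mm i j) s) :
    ∃ u, Geo mm i j u ∧ ev mm i j u = s := by
  obtain ⟨x, h1, h2⟩ := St.exists_word hp.2 h
  obtain ⟨u, h3, h4⟩ := exists_lift hp.1 x
  have e : ev mm i j u = s := by unfold ev; rw [h4, h1]
  refine ⟨u, ⟨h3, ?_⟩, e⟩
  rw [e, ← h2, ← h4, List.length_map]

theorem FD_word {i j : ι} (hp : Pr mm i j) {a : ι × Bool} (ha : a.1 = i ∨ a.1 = j) {s : St}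
    (hv : St.V (mm i j) s) (hF : St.FD (mm i j) (cd i a) s) :
    ∃ t, Geo mm i j (a :: t) ∧ ev mm i j (a :: t) = s := by
  obtain ⟨t, h1, h2⟩ := exists_gw hp (St.V_act (by have := hp.2; omega)
    ((cd i a).1, !(cd i a).2) hv)
  have e : ev mm i j (a :: t) = s := by
    rw [ev_cons, h2]; exact St.act_inv_act hp.2 _ _ hv
  refine ⟨t, ⟨fun b hb => ?_, ?_⟩, e⟩
  · rcases List.mem_cons.1 hb with rfl | hb
    · exact ha
    · exact h1.1 b hb
  · rw [e, (St.FD_iff hp.2 _ hv).1 hF, ← h2, h1.2, List.length_cons]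

theorem FD_name {i j : ι} (hp : Pr mm i j) {a b : ι × Bool} (ha : a.1 = i ∨ a.1 = j)
    (hb : b.1 = i ∨ b.1 = j) {s : St} (hv : St.V (mm i j) s)
    (h1 : St.FD (mm i j) (cd i a) s) (h2 : St.FD (mm i j) (cd i b) s) (h : a.1 = b.1) :
    a = b := by
  by_contra hne
  have e : cd i b = ((cd i a).1, !(cd i a).2) := by
    obtain ⟨a1, a2⟩ := a
    obtain ⟨b1, b2⟩ := b
    simp only at h
    subst h
    have : b2 = !a2 := by cases a2 <;> cases b2 <;> simp_all
    simp [cd, this]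
  rw [e] at h2
  exact St.FD_same hp.2 _ _ hv h1 h2

theorem Pr_symm (hs : ∀ i j, mm i j = mm j i) {i j : ι} (hp : Pr mm i j) : Pr mm j i :=
  ⟨hp.1.symm, by rw [hs]; exact hp.2⟩

theorem ev_swap (hs : ∀ i j, mm i j = mm j i) {i j : ι} (hij : i ≠ j) {u : List (ι × Bool)}
    (h : IJ i j u) : ev mm j i u = St.flip (ev mm i j u) := by
  induction u with
  | nil => rfl
  | cons a u ih =>
    rw [ev_cons, ev_cons, ih (fun b hb => h b (by simp [hb])), cd, cd, St.flip_act, hs j i]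
    have := h a (by simp)
    have e : decide (a.1 = j) = !decide (a.1 = i) := by
      rcases this with e | e <;> simp [e, hij, hij.symm]
    rw [e]

theorem Geo_swap (hs : ∀ i j, mm i j = mm j i) {i j : ι} (hij : i ≠ j) {u : List (ι × Bool)}
    (h : Geo mm i j u) : Geo mm j i u := by
  refine ⟨fun a ha => (h.1 a ha).symm, ?_⟩
  rw [ev_swap hs hij h.1, St.L_flip, hs j i, h.2]

theorem Sw_swap (hs : ∀ i j, mm i j = mm j i) {i j : ι} (hij : i ≠ j) {a b : ι × Bool}
    {v v' : List (ι × Bool)} (h : Sw mm i j a v b v') : Sw mm j i a v b v' := by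
  obtain ⟨u, u', y, h1, h2, h3, h4, h5, h6⟩ := h
  refine ⟨u, u', y, Geo_swap hs hij h1, Geo_swap hs hij h2, ?_, h4, h5, Free_swap h6⟩
  rw [ev_swap hs hij h1.1, ev_swap hs hij h2.1, h3]

theorem Sw_symm {i j : ι} {a b : ι × Bool}
    {v v' : List (ι × Bool)} (h : Sw mm i j a v b v') : Sw mm i j b v' a v := by
  obtain ⟨u, u', y, h1, h2, h3, h4, h5, h6⟩ := h
  exact ⟨u', u, y, h2, h1, h3.symm, h5, h4, h6⟩

theorem Sw_E {i j : ι} {a b : ι × Bool} {v v' w w' : List (ι × Bool)}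
    (h : Sw mm i j a v b v') (e : E mm v w) (e' : E mm v' w') : Sw mm i j a w b w' := by
  obtain ⟨u, u', y, h1, h2, h3, h4, h5, h6⟩ := h
  exact ⟨u, u', y, h1, h2, h3, E_trans (E_symm e) h4, E_trans (E_symm e') h5, h6⟩

theorem Sw_names {i j : ι} (hp : Pr mm i j) {a b : ι × Bool} {v v' : List (ι × Bool)}
    (h : Sw mm i j a v b v') (hab : a ≠ b) : (a.1 = i ∧ b.1 = j) ∨ (a.1 = j ∧ b.1 = i) := by
  obtain ⟨u, u', y, h1, h2, h3, h4, h5, h6⟩ := h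
  have ha := h1.1 a (by simp)
  have hb := h2.1 b (by simp)
  have h7 := Geo_FD hp h1
  have h8 := Geo_FD hp h2
  rw [← h3] at h8
  have : a.1 ≠ b.1 := fun e => hab (FD_name hp ha hb (V_ev hp _) h7 h8 e)
  rcases ha with e | e <;> rcases hb with e' | e' <;> simp_all

theorem Sw_norm (hs : ∀ i j, mm i j = mm j i) {i j : ι} (hp : Pr mm i j) {a b : ι × Bool}
    {v v' : List (ι × Bool)} (h : Sw mm i j a v b v') (hab : a ≠ b) :
    Pr mm a.1 b.1 ∧ Sw mm a.1 b.1 a v b v' := by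
  rcases Sw_names hp h hab with ⟨h1, h2⟩ | ⟨h1, h2⟩
  · rw [h1, h2]; exact ⟨hp, h⟩
  · rw [h1, h2]; exact ⟨Pr_symm hs hp, Sw_swap hs hp.1 h⟩

theorem Red_E_cons {a : ι × Bool} {v v' : List (ι × Bool)} (h : E mm v v')
    (hr : Red mm (a :: v)) (hv : Red mm v') : Red mm (a :: v') :=
  ⟨hv, fun h' => hr.2 ((Hd_E h).2 h')⟩

theorem Red_left {u y : List (ι × Bool)} (h : Red mm (u ++ y)) : Red mm u := by
  induction u with
  | nil => trivial
  | cons a u ih => exact ⟨ih h.1, fun h' => h.2 (Hd_right h' y)⟩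

theorem Red_right {u y : List (ι × Bool)} (h : Red mm (u ++ y)) : Red mm y := by
  induction u with
  | nil => exact h
  | cons a u ih => exact ih h.1

theorem linv_linv (a : ι × Bool) : linv (linv a) = a := by simp [linv]

theorem RedGeo {i j : ι} (hp : Pr mm i j) {u : List (ι × Bool)} (h : Red mm u)
    (hu : IJ i j u) : Geo mm i j u := by
  induction u with
  | nil => exact Geo_nil i j
  | cons a u ih =>
    have h1 := ih h.1 (fun b hb => hu b (by simp [hb]))
    have ha := hu a (by simp)
    apply Geo_cons_of_not_FD hp ha h1
    intro hF
    obtain ⟨t, h2, h3⟩ := FD_word hp (show (linv a).1 = i ∨ (linv a).1 = j from ha) (V_ev hp u) hF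
    exact h.2 ⟨t, E_of_ev hp h1 h2 h3.symm⟩

theorem ev_append {i j : ι} (hp : Pr mm i j) {u u' : List (ι × Bool)}
    (h : ev mm i j u = ev mm i j u') (t : List (ι × Bool)) :
    ev mm i j (u ++ t) = ev mm i j (u' ++ t) := by
  unfold ev at *
  rw [List.map_append, List.map_append]
  exact St.evS_congr_right hp.2 h _

theorem ev_cons_inj {i j : ι} (hp : Pr mm i j) {a : ι × Bool} {u u' : List (ι × Bool)}
    (h : ev mm i j (a :: u) = ev mm i j (a :: u')) : ev mm i j u = ev mm i j u' := by
  rw [ev_cons, ev_cons] at h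
  exact St.act_inj hp.2 _ (V_ev hp u) (V_ev hp u') h

end words

set_option linter.unusedSectionVars false

section words2

variable {ι : Type} [DecidableEq ι] (mm : ι → ι → ℕ)

/-- the inductive package for reduced words of length at most `N` -/
def AB (N : ℕ) : Prop :=
  (∀ w w', Red mm w → w.length ≤ N → E mm w w' → Red mm w') ∧
  (∀ a v b v', Red mm (a :: v) → v.length + 1 ≤ N → E mm (a :: v) (b :: v') →
    (a = b ∧ E mm v v') ∨ (a ≠ b ∧ Pr mm a.1 b.1 ∧ Sw mm a.1 b.1 a v b v'))

def SdW : ℕ → ι → ι → List (ι × Bool) → Prop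
  | 0, _, _, _ => True
  | k + 1, i, j, w => ∃ a r w', a.1 = i ∧ 1 ≤ r ∧ E mm w (List.replicate r a ++ w') ∧
      (∀ b, b.1 = i → ¬ Hd mm b w') ∧ SdW k j i w'

variable {mm}

theorem SdW_mono {k k' : ℕ} (hk : k ≤ k') {i j : ι} {w : List (ι × Bool)}
    (h : SdW mm k' i j w) : SdW mm k i j w := by
  induction k generalizing k' i j w with
  | zero => trivial
  | succ k ih =>
    obtain ⟨k', rfl⟩ : ∃ k'', k' = k'' + 1 := ⟨k' - 1, by omega⟩
    obtain ⟨a, r, w', h1, h2, h3, h4, h5⟩ := h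
    exact ⟨a, r, w', h1, h2, h3, h4, ih (by omega) h5⟩

theorem SdW_E {k : ℕ} {i j : ι} {w w' : List (ι × Bool)} (e : E mm w w')
    (h : SdW mm k i j w) : SdW mm k i j w' := by
  cases k with
  | zero => trivial
  | succ k =>
    obtain ⟨a, r, x, h1, h2, h3, h4, h5⟩ := h
    exact ⟨a, r, x, h1, h2, E_trans (E_symm e) h3, h4, h5⟩

theorem SdW_head {k : ℕ} {i j : ι} {w : List (ι × Bool)}
    (h : SdW mm (k + 1) i j w) : ∃ a, a.1 = i ∧ Hd mm a w := by
  obtain ⟨a, r, x, h1, h2, h3, h4, h5⟩ := h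
  obtain ⟨r, rfl⟩ : ∃ r', r = r' + 1 := ⟨r - 1, by omega⟩
  exact ⟨a, h1, _, h3⟩

variable {N : ℕ} (hI : AB mm N)
include hI

theorem LD_exists {i j : ι} (hp : Pr mm i j) {w : List (ι × Bool)} (hr : Red mm w)
    (hl : w.length ≤ N) : ∃ u y, E mm w (u ++ y) ∧ Geo mm i j u ∧ Free mm i j y := by
  have key : ∀ k, ∀ u y : List (ι × Bool), y.length = k → E mm w (u ++ y) → Geo mm i j u →
      ∃ u y, E mm w (u ++ y) ∧ Geo mm i j u ∧ Free mm i j y := by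
    intro k
    induction k with
    | zero =>
      intro u y hy h1 h2
      refine ⟨u, y, h1, h2, ?_⟩
      rintro a ⟨z, hz⟩
      have := E_len hz
      simp [hy] at this
    | succ k ih =>
      intro u y hy h1 h2
      by_cases hf : Free mm i j y
      · exact ⟨u, y, h1, h2, hf⟩
      · unfold Free at hf
        push Not at hf
        obtain ⟨a, ⟨z, hz⟩, ha⟩ := hf
        have ha' : a.1 = i ∨ a.1 = j := by
          by_cases e : a.1 = i
          · exact Or.inl e
          · exact Or.inr (ha e)
        have h3 : E mm w ((u ++ [a]) ++ z) := by
          have := E_trans h1 (E_left u hz)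
          simpa using this
        refine ih (u ++ [a]) z ?_ h3 ?_
        · have := E_len hz
          simp at this; omega
        · apply RedGeo hp (Red_left (hI.1 _ _ hr hl h3))
          intro b hb
          rcases List.mem_append.1 hb with hb | hb
          · exact h2.1 b hb
          · rw [List.mem_singleton] at hb; rw [hb]; exact ha'
  exact key _ [] w rfl (E_refl _) (Geo_nil i j)

theorem LD_uniq (hs : ∀ i j, mm i j = mm j i) {i j : ι} (hp : Pr mm i j)
    {u y u1 y1 : List (ι × Bool)} (hr : Red mm (u ++ y))
    (hl : (u ++ y).length ≤ N) (he : E mm (u ++ y) (u1 ++ y1)) (hu : Geo mm i j u)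
    (hu1 : Geo mm i j u1) (hy : Free mm i j y) (hy1 : Free mm i j y1) :
    ev mm i j u = ev mm i j u1 ∧ E mm y y1 := by
  induction hk : (u ++ y).length using Nat.strong_induction_on generalizing u y u1 y1 with
  | _ k ih =>
    have hlen := E_len he
    cases u with
    | nil =>
      cases u1 with
      | nil => exact ⟨rfl, he⟩
      | cons b t1 =>
        exfalso
        have := hy b ⟨t1 ++ y1, he⟩
        have := hu1.1 b (by simp)
        tauto
    | cons a t =>
      cases u1 with
      | nil =>
        exfalso
        have := hy1 a ⟨t ++ y, E_symm he⟩
        have := hu.1 a (by simp)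
        tauto
      | cons b t1 =>
        have hr1 := hI.1 _ _ hr hl he
        have hl' : (t ++ y).length + 1 ≤ N := by simpa using hl
        have hltk : (t ++ y).length < k := by rw [← hk]; simp
        have hltk1 : (t1 ++ y1).length < k := by rw [← hk, hlen]; simp
        have ht := Geo_tail hp hu
        have ht1 := Geo_tail hp hu1
        rcases hI.2 a (t ++ y) b (t1 ++ y1) hr hl' he with ⟨rfl, h2⟩ | ⟨hne, hpab, h2⟩
        · have := ih _ hltk hr.1 (by omega) h2 ht ht1 hy hy1 rfl
          refine ⟨?_, this.2⟩
          rw [ev_cons, ev_cons, this.1]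
        · have ha := hu.1 a (by simp)
          have hb := hu1.1 b (by simp)
          have h3 : Sw mm i j a (t ++ y) b (t1 ++ y1) := by
            have : a.1 ≠ b.1 := hpab.1
            rcases ha with e | e <;> rcases hb with e' | e'
            · exact absurd (e.trans e'.symm) this
            · rw [e, e'] at h2; exact h2
            · rw [e, e'] at h2; exact Sw_swap hs hp.1.symm h2
            · exact absurd (e.trans e'.symm) this
          obtain ⟨s, s', y2, g1, g2, g3, g4, g5, g6⟩ := h3
          have i1 := ih _ hltk hr.1 (by omega) g4 ht (Geo_tail hp g1) hy g6 rfl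
          have i2 := ih _ hltk1 hr1.1 (by simp at hl hlen ⊢; omega) g5 ht1 (Geo_tail hp g2)
            hy1 g6 rfl
          refine ⟨?_, E_trans i1.2 (E_symm i2.2)⟩
          rw [ev_cons, i1.1, ← ev_cons, g3, ev_cons, ← i2.1, ← ev_cons]

theorem head_FD (hs : ∀ i j, mm i j = mm j i) {i j : ι} (hp : Pr mm i j)
    {t y : List (ι × Bool)} (hr : Red mm (t ++ y)) (hl : (t ++ y).length ≤ N)
    (ht : Geo mm i j t) (hy : Free mm i j y) {a : ι × Bool} (ha : a.1 = i ∨ a.1 = j) :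
    Hd mm a (t ++ y) ↔ St.FD (mm i j) (cd i a) (ev mm i j t) := by
  constructor
  · rintro ⟨z, hz⟩
    have hr' := hI.1 _ _ hr hl hz
    have hlen := E_len hz
    simp only [List.length_cons] at hlen
    obtain ⟨u2, y2, h1, h2, h3⟩ := LD_exists hI hp hr'.1 (by omega)
    have h4 : E mm (t ++ y) ((a :: u2) ++ y2) := E_trans hz (E_cons a h1)
    have h5 : Geo mm i j (a :: u2) := by
      apply RedGeo hp (Red_left (hI.1 _ _ hr hl h4))
      intro b hb
      rcases List.mem_cons.1 hb with rfl | hb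
      · exact ha
      · exact h2.1 b hb
    rw [(LD_uniq hI hs hp hr hl h4 ht h5 hy h3).1]
    exact Geo_FD hp h5
  · intro hF
    obtain ⟨t', h1, h2⟩ := FD_word hp ha (V_ev hp t) hF
    exact ⟨t' ++ y, E_right y (E_of_ev hp ht h1 h2.symm)⟩

theorem Red_app (hs : ∀ i j, mm i j = mm j i) {i j : ι} (hp : Pr mm i j)
    {t y : List (ι × Bool)} (hr : Red mm y) (hl : (t ++ y).length ≤ N + 1)
    (ht : Geo mm i j t) (hy : Free mm i j y) : Red mm (t ++ y) := by
  induction t with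
  | nil => exact hr
  | cons a t ih =>
    have ht' := Geo_tail hp ht
    have hl' : (t ++ y).length ≤ N := by simp at hl ⊢; omega
    have h1 := ih (by omega) ht'
    refine ⟨h1, fun h => ?_⟩
    have ha : (linv a).1 = i ∨ (linv a).1 = j := ht.1 a (by simp)
    have hF := (head_FD hI hs hp h1 hl' ht' hy ha).1 h
    unfold St.FD at hF
    have e : ((cd i (linv a)).1, !(cd i (linv a)).2) = cd i a :=
        Prod.ext rfl (by simp [cd, linv])
    rw [e, ← ev_cons, ht.2, ht'.2] at hF
    simp at hF

theorem strip_uniq {a a' : ι × Bool} (hn : a.1 = a'.1) {r r' : ℕ} {x x' : List (ι × Bool)}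
    (hr : Red mm (List.replicate r a ++ x)) (hl : (List.replicate r a ++ x).length ≤ N)
    (he : E mm (List.replicate r a ++ x) (List.replicate r' a' ++ x'))
    (hx : ∀ b, b.1 = a.1 → ¬ Hd mm b x) (hx' : ∀ b, b.1 = a.1 → ¬ Hd mm b x') :
    r = r' ∧ E mm x x' ∧ (1 ≤ r → a = a') := by
  induction r generalizing r' with
  | zero =>
    cases r' with
    | zero => exact ⟨rfl, he, by simp⟩
    | succ r' => exact absurd ⟨_, he⟩ (hx a' hn.symm)
  | succ r ih =>
    cases r' with
    | zero => exact absurd ⟨_, E_symm he⟩ (hx' a rfl)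
    | succ r' =>
      rw [List.replicate_succ, List.replicate_succ, List.cons_append, List.cons_append] at he
      rw [List.replicate_succ, List.cons_append] at hr hl
      have hl' : (List.replicate r a ++ x).length + 1 ≤ N := by simpa using hl
      rcases hI.2 _ _ _ _ hr hl' he with ⟨h1, h2⟩ | ⟨_, h2, _⟩
      · have := ih hr.1 (by omega) h2
        exact ⟨by omega, this.2.1, fun _ => h1⟩
      · exact absurd hn h2.1

omit hI in
theorem ev_replicate {i j : ι} (a : ι × Bool) (r : ℕ) (u : List (ι × Bool)) :
    ev mm i j (List.replicate r a ++ u) = (St.act (mm i j) (cd i a))^[r] (ev mm i j u) := by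
  induction r with
  | zero => rfl
  | succ r ih =>
    rw [List.replicate_succ, List.cons_append, ev_cons, ih, Function.iterate_succ_apply']

omit hI in
/-- realise one stripping of states by words -/
theorem strip_word {i j : ι} (hp : Pr mm i j) {u : List (ι × Bool)} (hu : Geo mm i j u)
    {a : ι × Bool} (ha : a.1 = i ∨ a.1 = j) {r : ℕ} {s' : St} (hv : St.V (mm i j) s')
    (h1 : ev mm i j u = (St.act (mm i j) (cd i a))^[r] s')
    (h2 : St.L (mm i j) (ev mm i j u) = r + St.L (mm i j) s') :
    ∃ u', Geo mm i j u' ∧ ev mm i j u' = s' ∧ Geo mm i j (List.replicate r a ++ u') ∧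
      ev mm i j (List.replicate r a ++ u') = ev mm i j u ∧ u.length = r + u'.length := by
  obtain ⟨u', h3, h4⟩ := exists_gw hp hv
  have h5 : ev mm i j (List.replicate r a ++ u') = ev mm i j u := by
    rw [ev_replicate, h4, h1]
  have h6 : u.length = r + u'.length := by
    rw [← hu.2, h2, ← h4, h3.2]
  refine ⟨u', h3, h4, ⟨?_, ?_⟩, h5, h6⟩
  · intro b hb
    rcases List.mem_append.1 hb with hb | hb
    · rw [(List.mem_replicate.1 hb).2]; exact ha
    · exact h3.1 b hb
  · rw [h5, hu.2, h6]; simp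

theorem SdS_SdW (hs : ∀ i j, mm i j = mm j i) {i j : ι} (hp : Pr mm i j)
    {k : ℕ} {z : Bool} {u y : List (ι × Bool)} (hr : Red mm y) (hl : (u ++ y).length ≤ N)
    (hu : Geo mm i j u) (hy : Free mm i j y) (h : St.SdS (mm i j) k z (ev mm i j u)) :
    SdW mm k (if z then i else j) (if z then j else i) (u ++ y) := by
  induction k generalizing z u with
  | zero => trivial
  | succ k ih =>
    obtain ⟨σ, r, s', h1, h2, h3, h4, h5, h6⟩ := h
    set a : ι × Bool := (if z then i else j, σ) with hadef
    have hc : cd i a = (z, σ) := by cases z <;> simp [a, cd, hp.1.symm]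
    have ha : a.1 = i ∨ a.1 = j := by cases z <;> simp [a]
    rw [← hc] at h3
    obtain ⟨u', g1, g2, g3, g4, g5⟩ := strip_word hp hu ha h2 h3 h4
    have hl' : (u' ++ y).length ≤ N := by simp at hl ⊢; omega
    refine ⟨a, r, u' ++ y, rfl, h1, ?_, ?_, ?_⟩
    · have := E_right y (E_of_ev hp hu g3 g4.symm)
      simpa using this
    · intro b hb hbd
      have hb' : b.1 = i ∨ b.1 = j := by rw [hb]; exact ha
      have := (head_FD hI hs hp (Red_app hI hs hp hr (by omega) g1 hy) hl' g1 hy hb').1 hbd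
      rw [g2] at this
      have e : cd i b = (z, b.2) := by
        cases z <;> simp [cd, hb, hp.1.symm]
      rw [e] at this
      exact h5 _ this
    · rw [← g2] at h6
      have := ih hl' g1 h6
      cases z <;> simpa using this

theorem two_end (hs : ∀ i j, mm i j = mm j i) {y : List (ι × Bool)} (hr : Red mm y)
    (hl : y.length ≤ N) {b c : ι × Bool} (hb : Hd mm b y) (hc : Hd mm c y) (hbc : b ≠ c) :
    Pr mm b.1 c.1 ∧ SdW mm (mm b.1 c.1) b.1 c.1 y := by
  obtain ⟨y1, h1⟩ := hb
  obtain ⟨y2, h2⟩ := hc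
  have hr1 := hI.1 _ _ hr hl h1
  have hl1 := E_len h1
  rw [List.length_cons] at hl1
  rcases hI.2 _ _ _ _ hr1 (by omega) (E_trans (E_symm h1) h2) with ⟨h3, _⟩ | ⟨_, hp, h3⟩
  · exact absurd h3 hbc
  · refine ⟨hp, ?_⟩
    obtain ⟨u, u', y3, g1, g2, g3, g4, g5, g6⟩ := h3
    have h4 : E mm y ((b :: u) ++ y3) := E_trans h1 (E_cons b g4)
    refine SdW_E (E_symm h4) ?_
    have f1 := Geo_FD hp g1
    have f2 := Geo_FD hp g2
    rw [← g3] at f2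
    have e1 : cd b.1 b = (true, b.2) := by simp [cd]
    have e2 : cd b.1 c = (!true, c.2) := by simp [cd, hp.1.symm]
    rw [e1] at f1
    rw [e2] at f2
    have := SdS_SdW hI hs hp (k := mm b.1 c.1) (z := true)
      (Red_right (hI.1 _ _ hr hl h4)) (by have := E_len h4; omega) g1 g6
      (St.SdS_two hp.2 true _ _ (V_ev hp _) f1 f2)
    simpa using this

theorem lemD (hs : ∀ i j, mm i j = mm j i) {y : List (ι × Bool)} (hr : Red mm y)
    (hl : y.length ≤ N) {b c : ι × Bool} {i : ι} (hb : Hd mm b y) (hc : Hd mm c y)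
    (hbc : b.1 ≠ c.1) (hib : i ≠ b.1) (hic : i ≠ c.1) : ¬ SdW mm 2 b.1 i y := by
  induction hk : y.length using Nat.strong_induction_on generalizing y b c i with
  | _ k ih =>
    intro hS
    obtain ⟨hp, hS3⟩ := two_end hI hs hr hl hb hc (fun e => hbc (by rw [e]))
    have hS3 : SdW mm 3 b.1 c.1 y := SdW_mono hp.2 hS3
    obtain ⟨a, r, x, h1, h2, h3, h4, h5⟩ := hS3
    obtain ⟨a', r', x', h1', h2', h3', h4', h5'⟩ := hS
    have hrx := hI.1 _ _ hr hl h3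
    have hlx := E_len h3
    have hu := strip_uniq hI (h1.trans h1'.symm) hrx (by omega)
      (E_trans (E_symm h3) h3') (by rw [h1]; exact h4) (by rw [h1]; exact h4')
    obtain ⟨d, hd, hd'⟩ := SdW_head h5'
    obtain ⟨e, he, he'⟩ := SdW_head h5
    have hlt : x.length < k := by
      rw [← hk, hlx]; simp; omega
    refine ih _ hlt (Red_right hrx) (by omega) (b := e) (c := d) (i := b.1) he'
      ((Hd_E hu.2.1).2 hd') ?_ ?_ ?_ rfl ?_
    · rw [he, hd]; exact hic.symm
    · rw [he]; exact hbc
    · rw [hd]; exact hib.symm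
    · rw [he]; exact h5

theorem C_aux (hs : ∀ i j, mm i j = mm j i) {a b : ι × Bool} {v v' : List (ι × Bool)}
    (hr : Red mm v) (hl : v.length ≤ N) (hp : Pr mm a.1 b.1)
    (h : Sw mm a.1 b.1 a v b v') : ∃ r x, E mm v (List.replicate r a ++ x) ∧
      (∀ e, e.1 = a.1 → ¬ Hd mm e x) ∧ SdW mm 2 b.1 a.1 x := by
  obtain ⟨u, u', y, g1, g2, g3, g4, g5, g6⟩ := h
  have f1 := Geo_FD hp g1
  have f2 := Geo_FD hp g2
  rw [← g3] at f2
  have e1 : cd a.1 a = (true, a.2) := by simp [cd]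
  have e2 : cd a.1 b = (!true, b.2) := by simp [cd, hp.1.symm]
  rw [e1] at f1
  rw [e2] at f2
  have hS := St.SdS_mono _ 3 _ hp.2 _ _ (St.SdS_two hp.2 true _ _ (V_ev hp _) f1 f2)
  obtain ⟨σ, r, s', h1, h2, h3, h4, h5, h6⟩ := hS
  set a' : ι × Bool := (a.1, σ) with ha'
  have ec : (true, σ) = cd a.1 a' := by simp [cd, a']
  rw [ec] at h3
  obtain ⟨x, k1, k2, k3, k4, k5⟩ := strip_word hp g1 (a := a') (Or.inl rfl) h2 h3 h4
  obtain ⟨r, rfl⟩ : ∃ r', r = r' + 1 := ⟨r - 1, by omega⟩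
  rw [List.replicate_succ, List.cons_append] at k3 k4
  have f3 := Geo_FD hp k3
  rw [k4] at f3
  have haa : a = a' := FD_name hp (Or.inl rfl) (Or.inl rfl) (V_ev hp _) (by rw [e1]; exact f1) f3 rfl
  rw [← haa] at k3 k4
  have k6 := E_of_ev hp (Geo_tail hp g1) (Geo_tail hp k3) (ev_cons_inj hp k4).symm
  have hy := Red_right (hI.1 _ _ hr hl g4)
  have hlen := E_len g4
  have hlx : (x ++ y).length ≤ N := by
    simp at hlen k5 ⊢; omega
  refine ⟨r, x ++ y, ?_, ?_, ?_⟩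
  · have := E_trans g4 (E_right y k6)
    simpa using this
  · intro e he hed
    have := (head_FD hI hs hp (Red_app hI hs hp hy (by omega) k1 g6) hlx k1 g6 (Or.inl he)).1 hed
    rw [k2] at this
    have ee : cd a.1 e = (true, e.2) := by simp [cd, he]
    rw [ee] at this
    exact h5 _ this
  · rw [← k2] at h6
    have := SdS_SdW hI hs hp hy hlx k1 g6 h6
    simpa using this

theorem stepC (hs : ∀ i j, mm i j = mm j i) {a b c : ι × Bool} {v v' v'' : List (ι × Bool)}
    (hr : Red mm v) (hl : v.length ≤ N) (hp : Pr mm a.1 b.1) (hp' : Pr mm a.1 c.1)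
    (h : Sw mm a.1 b.1 a v b v') (h' : Sw mm a.1 c.1 a v c v'') : b = c ∧ E mm v' v'' := by
  by_cases hbc : b.1 = c.1
  · rw [← hbc] at h'
    obtain ⟨u, u', y, g1, g2, g3, g4, g5, g6⟩ := h
    obtain ⟨t, t', x, k1, k2, k3, k4, k5, k6⟩ := h'
    have hlen := E_len g4
    have hu := LD_uniq hI hs hp (hI.1 _ _ hr hl g4) (by omega) (E_trans (E_symm g4) k4)
      (Geo_tail hp g1) (Geo_tail hp k1) g6 k6
    have e : ev mm a.1 b.1 (b :: u') = ev mm a.1 b.1 (c :: t') := by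
      rw [← g3, ← k3, ev_cons, hu.1, ← ev_cons]
    have f1 := Geo_FD hp g2
    have f2 := Geo_FD hp k2
    rw [← e] at f2
    have hb := FD_name hp (Or.inr rfl) (Or.inr hbc.symm) (V_ev hp _) f1 f2 hbc
    refine ⟨hb, ?_⟩
    rw [← hb] at e
    have := E_of_ev hp (Geo_tail hp g2) (Geo_tail hp k2) (ev_cons_inj hp e)
    exact E_trans g5 (E_trans (E_app this hu.2) (E_symm k5))
  · exfalso
    obtain ⟨r, x, g1, g2, g3⟩ := C_aux hI hs hr hl hp h
    obtain ⟨r', x', k1, k2, k3⟩ := C_aux hI hs hr hl hp' h'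
    have hlen := E_len g1
    have hrx := hI.1 _ _ hr hl g1
    have hu := strip_uniq hI rfl hrx (by omega) (E_trans (E_symm g1) k1) g2 k2
    obtain ⟨d, hd, hd'⟩ := SdW_head g3
    obtain ⟨e, he, he'⟩ := SdW_head k3
    have hlx : x.length ≤ N := by simp at hlen; omega
    refine lemD hI hs (Red_right hrx) hlx hd' ((Hd_E hu.2.1).2 he') (i := a.1) ?_ ?_ ?_ ?_
    · rw [hd, he]; exact hbc
    · rw [hd]; exact hp.1
    · rw [he]; exact hp'.1
    · rw [hd]; exact g3

theorem Red_of_form (hs : ∀ i j, mm i j = mm j i) {a b : ι × Bool} {v v' : List (ι × Bool)}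
    (hr : Red mm (a :: v)) (hl : v.length ≤ N)
    (h : (a = b ∧ E mm v v') ∨ (a ≠ b ∧ Pr mm a.1 b.1 ∧ Sw mm a.1 b.1 a v b v')) :
    Red mm (b :: v') := by
  rcases h with ⟨rfl, h⟩ | ⟨hne, hp, h⟩
  · exact Red_E_cons h hr (hI.1 _ _ hr.1 hl h)
  · obtain ⟨u, u', y, g1, g2, g3, g4, g5, g6⟩ := h
    have hy := Red_right (hI.1 _ _ hr.1 hl g4)
    have h1 := E_len g4
    have h2 := Geo_len g1 g2 g3
    have h3 : Red mm ((b :: u') ++ y) := Red_app hI hs hp hy (by simp at h1 h2 ⊢; omega) g2 g6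
    refine Red_E_cons (E_symm g5) h3 (hI.1 _ _ h3.1 ?_ (E_symm g5))
    simp at h1 h2 ⊢; omega

theorem stepB (hs : ∀ i j, mm i j = mm j i) {a : ι × Bool} {v w : List (ι × Bool)}
    (hr : Red mm (a :: v)) (hl : v.length ≤ N) (h : E mm (a :: v) w) : ∃ b v', w = b :: v' ∧
    ((a = b ∧ E mm v v') ∨ (a ≠ b ∧ Pr mm a.1 b.1 ∧ Sw mm a.1 b.1 a v b v')) := by
  induction h with
  | refl => exact ⟨a, v, rfl, Or.inl ⟨rfl, E_refl _⟩⟩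
  | @tail x w hx hst ih =>
    obtain ⟨b, v', rfl, hform⟩ := ih
    have hrb := Red_of_form hI hs hr hl hform
    have hlen := E_len hx
    simp only [List.length_cons] at hlen
    have same : ∀ v'', E mm v' v'' → ∃ c v3, b :: v'' = c :: v3 ∧
        ((a = c ∧ E mm v v3) ∨ (a ≠ c ∧ Pr mm a.1 c.1 ∧ Sw mm a.1 c.1 a v c v3)) := by
      intro v'' he
      refine ⟨b, v'', rfl, ?_⟩
      rcases hform with ⟨h1, h2⟩ | ⟨h1, h2, h3⟩
      · exact Or.inl ⟨h1, E_trans h2 he⟩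
      · exact Or.inr ⟨h1, h2, Sw_E h3 (E_refl _) he⟩
    obtain ⟨i, j, α, u, u', β, hp, h2, h3, h4, h5, h6⟩ := hst
    have hul := Geo_len h2 h3 h4
    cases α with
    | cons d α =>
      simp only [List.cons_append, List.cons.injEq] at h5
      obtain ⟨rfl, rfl⟩ := h5
      subst h6
      exact same _ (Relation.ReflTransGen.single ⟨i, j, α, u, u', β, hp, h2, h3, h4, rfl, rfl⟩)
    | nil =>
      cases u with
      | nil =>
        have : u' = [] := List.length_eq_zero_iff.1 (by simpa using hul.symm)
        subst this
        have : w = b :: v' := by rw [h5, h6]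
        subst this
        exact same v' (E_refl _)
      | cons d t =>
        cases u' with
        | nil => simp at hul
        | cons c t' =>
          simp only [List.nil_append, List.cons_append, List.cons.injEq] at h5 h6
          obtain ⟨rfl, rfl⟩ := h5
          subst h6
          by_cases hbc : b = c
          · subst hbc
            exact same _ (E_right β (E_of_ev hp (Geo_tail hp h2) (Geo_tail hp h3)
              (ev_cons_inj hp h4)))
          · have hlb : β.length ≤ N := by simp at hlen; omega
            obtain ⟨t2, y, g1, g2, g3⟩ := LD_exists hI hp (Red_right hrb.1) hlb
            have e1 : E mm (t ++ β) ((t ++ t2) ++ y) := by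
              have := E_left t g1
              simpa using this
            have e2 : E mm (t' ++ β) ((t' ++ t2) ++ y) := by
              have := E_left t' g1
              simpa using this
            have hred : Red mm ((b :: (t ++ t2)) ++ y) :=
              Red_E_cons e1 hrb (hI.1 _ _ hrb.1 (by omega) e1)
            have hg : Geo mm i j (b :: (t ++ t2)) := by
              apply RedGeo hp (Red_left hred)
              intro e he
              rw [← List.cons_append, List.mem_append] at he
              rcases he with he | he
              · exact h2.1 e he
              · exact g2.1 e he
            have hev : ev mm i j (b :: (t ++ t2)) = ev mm i j (c :: (t' ++ t2)) :=
              ev_append hp h4 t2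
            have hg' : Geo mm i j (c :: (t' ++ t2)) := by
              constructor
              · intro e he
                rw [← List.cons_append, List.mem_append] at he
                rcases he with he | he
                · exact h3.1 e he
                · exact g2.1 e he
              · rw [← hev, hg.2]
                simp at hul ⊢; omega
            have hsw : Sw mm i j b (t ++ β) c (t' ++ β) :=
              ⟨_, _, y, hg, hg', hev, e1, e2, g3⟩
            obtain ⟨hpbc, hswbc⟩ := Sw_norm hs hp hsw hbc
            refine ⟨c, _, rfl, ?_⟩
            rcases hform with ⟨rfl, k2⟩ | ⟨k1, k2, k3⟩
            · exact Or.inr ⟨hbc, hpbc, Sw_E hswbc (E_symm k2) (E_refl _)⟩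
            · left
              exact stepC hI hs hrb.1 (by omega) (Pr_symm hs k2) hpbc
                (Sw_symm (Sw_swap hs k2.1 k3)) hswbc

omit hI in
theorem AB_all (hs : ∀ i j, mm i j = mm j i) (N : ℕ) : AB mm N := by
  induction N with
  | zero =>
    refine ⟨?_, fun a v b v' _ h => by omega⟩
    intro w w' hr hl he
    have := E_len he
    have : w' = [] := List.length_eq_zero_iff.1 (by omega)
    subst this; trivial
  | succ N ih =>
    refine ⟨?_, ?_⟩
    · intro w w' hr hl he
      cases w with
      | nil =>
        have := E_len he
        have : w' = [] := List.length_eq_zero_iff.1 (by simpa using this.symm)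
        subst this; trivial
      | cons a v =>
        have hl' : v.length ≤ N := by simpa using hl
        obtain ⟨b, v', rfl, h⟩ := stepB ih hs hr hl' he
        exact Red_of_form ih hs hr hl' h
    · intro a v b v' hr hl he
      obtain ⟨c, v3, h1, h⟩ := stepB ih hs hr (by omega) he
      simp only [List.cons.injEq] at h1
      obtain ⟨rfl, rfl⟩ := h1
      exact h

end words2

/-! ## Part 3: the action on reduced words -/

set_option linter.unusedSectionVars false

section action

variable {ι : Type} [DecidableEq ι] {mm : ι → ι → ℕ} (hs : ∀ i j, mm i j = mm j i)

include hs

theorem Red_E {w w' : List (ι × Bool)} (hr : Red mm w) (h : E mm w w') : Red mm w' :=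
  (AB_all hs _).1 _ _ hr le_rfl h

theorem E_cons_cancel {a : ι × Bool} {v v' : List (ι × Bool)} (hr : Red mm (a :: v))
    (h : E mm (a :: v) (a :: v')) : E mm v v' := by
  rcases (AB_all hs (v.length + 1)).2 _ _ _ _ hr le_rfl h with h | h
  · exact h.2
  · exact absurd rfl h.1

end action

section action2

variable {ι : Type} [DecidableEq ι] (mm : ι → ι → ℕ)

/-- equivalence of reduced words -/
def redSetoid : Setoid {w : List (ι × Bool) // Red mm w} where
  r w w' := E mm w.1 w'.1
  iseqv := ⟨fun _ => E_refl _, fun h => E_symm h, fun h h' => E_trans h h'⟩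

/-- reduced words up to equivalence -/
def XX : Type := Quotient (redSetoid mm)

variable {mm}

def xmk (w : List (ι × Bool)) (h : Red mm w) : XX mm := Quotient.mk (redSetoid mm) ⟨w, h⟩

theorem xmk_eq {w w' : List (ι × Bool)} {h : Red mm w} {h' : Red mm w'} :
    xmk w h = xmk w' h' ↔ E mm w w' := by
  constructor
  · intro e
    exact Quotient.exact (s := redSetoid mm) e
  · intro e
    exact Quotient.sound (s := redSetoid mm) e

theorem xmk_ind {p : XX mm → Prop} (h : ∀ w hw, p (xmk w hw)) (x : XX mm) : p x := by
  induction x using Quotient.inductionOn with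
  | h a => exact h a.1 a.2

open Classical in
noncomputable def actW (a : ι × Bool) (w : List (ι × Bool)) : List (ι × Bool) :=
  if h : Hd mm (linv a) w then h.choose else a :: w

variable (hs : ∀ i j, mm i j = mm j i)
include hs

theorem actW_Red (a : ι × Bool) {w : List (ι × Bool)} (hr : Red mm w) :
    Red mm (actW (mm := mm) a w) := by
  unfold actW
  split_ifs with h
  · exact (Red_E hs hr h.choose_spec).1
  · exact ⟨hr, h⟩

theorem actW_E (a : ι × Bool) {w w' : List (ι × Bool)} (hr : Red mm w) (e : E mm w w') :
    E mm (actW (mm := mm) a w) (actW (mm := mm) a w') := by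
  unfold actW
  by_cases h : Hd mm (linv a) w
  · have h' := (Hd_E e).1 h
    rw [dif_pos h, dif_pos h']
    refine E_cons_cancel hs (Red_E hs hr h.choose_spec) ?_
    exact E_trans (E_symm h.choose_spec) (E_trans e h'.choose_spec)
  · have h' := fun z => h ((Hd_E e).2 z)
    rw [dif_neg h, dif_neg h']
    exact E_cons a e

noncomputable def actX (a : ι × Bool) : XX mm → XX mm :=
  Quotient.map' (s₁ := redSetoid mm) (s₂ := redSetoid mm)
    (fun w => ⟨actW (mm := mm) a w.1, actW_Red hs a w.2⟩) (fun w _ e => actW_E hs a w.2 e)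

theorem actX_mk (a : ι × Bool) {w : List (ι × Bool)} (hr : Red mm w) :
    actX hs a (xmk w hr) = xmk (actW (mm := mm) a w) (actW_Red hs a hr) := rfl

theorem actX_pos {a : ι × Bool} {w z : List (ι × Bool)} (hr : Red mm w) (hz : Red mm z)
    (e : E mm w (linv a :: z)) : actX hs a (xmk w hr) = xmk z hz := by
  rw [actX_mk, xmk_eq]
  have h : Hd mm (linv a) w := ⟨z, e⟩
  unfold actW
  rw [dif_pos h]
  exact E_cons_cancel hs (Red_E hs hr h.choose_spec) (E_trans (E_symm h.choose_spec) e)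

theorem actX_neg {a : ι × Bool} {w : List (ι × Bool)} (hr : Red mm w)
    (h : ¬ Hd mm (linv a) w) (hr' : Red mm (a :: w)) :
    actX hs a (xmk w hr) = xmk (a :: w) hr' := by
  rw [actX_mk, xmk_eq]
  unfold actW
  rw [dif_neg h]; exact E_refl _

theorem actX_inv (a : ι × Bool) (x : XX mm) : actX hs (linv a) (actX hs a x) = x := by
  induction x using xmk_ind with
  | h w hw =>
    by_cases h : Hd mm (linv a) w
    · obtain ⟨z, hz⟩ := h
      have hr := Red_E hs hw hz
      have hr1 : Red mm z := hr.1
      have hr2 : ¬ Hd mm (linv (linv a)) z := hr.2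
      rw [actX_pos hs hw hr1 hz, actX_neg hs hr1 hr2 hr, xmk_eq]
      exact E_symm hz
    · have hr : Red mm (a :: w) := ⟨hw, h⟩
      rw [actX_neg hs hw h hr, actX_pos hs _ hw]
      rw [linv_linv]; exact E_refl _

noncomputable def permX (i : ι) : Equiv.Perm (XX mm) where
  toFun := actX hs (i, true)
  invFun := actX hs (i, false)
  left_inv x := actX_inv hs (i, true) x
  right_inv x := actX_inv hs (i, false) x

theorem actX_state {i j : ι} (hp : Pr mm i j) {a : ι × Bool} (ha : a.1 = i ∨ a.1 = j)
    {u u' y : List (ι × Bool)} (hu : Geo mm i j u) (hu' : Geo mm i j u') (hf : Free mm i j y)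
    (hr : Red mm (u ++ y)) (hr' : Red mm (u' ++ y))
    (h : ev mm i j u' = St.act (mm i j) (cd i a) (ev mm i j u)) :
    actX hs a (xmk (u ++ y) hr) = xmk (u' ++ y) hr' := by
  have hH := head_FD (AB_all hs (u ++ y).length) hs hp hr le_rfl hu hf (a := linv a) ha
  by_cases hF : St.FD (mm i j) (cd i (linv a)) (ev mm i j u)
  · apply actX_pos
    obtain ⟨t, h1, h2⟩ := FD_word hp (show (linv a).1 = i ∨ (linv a).1 = j from ha) (V_ev hp u) hF
    have h3 : ev mm i j t = ev mm i j u' := by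
      rw [h, ← h2, ev_cons]
      have := St.act_act_inv hp.2 (cd i (linv a)).1 (cd i (linv a)).2 (V_ev hp t)
      have e : ((cd i (linv a)).1, !(cd i (linv a)).2) = cd i a :=
        Prod.ext rfl (by simp [cd, linv])
      rw [e] at this
      exact this.symm
    exact E_trans (E_right y (E_of_ev hp hu h1 h2.symm))
      (E_cons _ (E_right y (E_of_ev hp (Geo_tail hp h1) hu' h3)))
  · have hr2 : ¬ Hd mm (linv a) (u ++ y) := fun x => hF (hH.1 x)
    have hr3 : Red mm (a :: (u ++ y)) := ⟨hr, hr2⟩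
    rw [actX_neg hs hr hr2 hr3, xmk_eq]
    exact E_right y (E_of_ev hp (Geo_cons_of_not_FD hp ha hu hF) hu' h.symm)

omit hs [DecidableEq ι] in
theorem altProd_inter {A B : Type} (φ : A → B) (p q : Equiv.Perm A) (p' q' : Equiv.Perm B)
    (h : ∀ s, p' (φ s) = φ (p s)) (h' : ∀ s, q' (φ s) = φ (q s)) (n : ℕ) (s : A) :
    altProd n p' q' (φ s) = φ (altProd n p q s) := by
  induction n generalizing p q p' q' s with
  | zero => simp [altProd]
  | succ n ih => simp only [altProd, Equiv.Perm.mul_apply]; rw [ih q p q' p' h' h, h]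

theorem permX_braid {i j : ι} (hp : Pr mm i j) :
    altProd (mm i j) (permX hs i) (permX hs j) = altProd (mm i j) (permX hs j) (permX hs i) := by
  ext x
  induction x using xmk_ind with
  | h w hw =>
    obtain ⟨u, y, h1, h2, h3⟩ := LD_exists (AB_all hs _) hp hw le_rfl
    have hr := Red_E hs hw h1
    have hy := Red_right hr
    choose f hf1 hf2 using fun s : {s : St // St.V (mm i j) s} => exists_gw hp s.2
    let φ : {s : St // St.V (mm i j) s} → XX mm := fun s =>
      xmk (f s ++ y) (Red_app (AB_all hs (f s ++ y).length) hs hp hy (by omega) (hf1 s) h3)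
    have key : ∀ z s, permX hs (if z then i else j) (φ s) = φ (St.pm hp.2 z s) := by
      intro z s
      refine actX_state hs hp (by cases z <;> simp) (hf1 s) (hf1 _) h3 _ _ ?_
      rw [hf2, hf2]
      cases z <;> simp [cd, St.pm, St.act, hp.1.symm]
    have hx : xmk w hw = φ ⟨ev mm i j u, V_ev hp u⟩ := by
      rw [xmk_eq]
      exact E_trans h1 (E_right y (E_of_ev hp h2 (hf1 _) (hf2 ⟨ev mm i j u, V_ev hp u⟩).symm))
    have k1 : ∀ s, permX hs i (φ s) = φ (St.pm hp.2 true s) := fun s => key true s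
    have k2 : ∀ s, permX hs j (φ s) = φ (St.pm hp.2 false s) := fun s => key false s
    rw [hx, altProd_inter φ _ _ _ _ k1 k2, altProd_inter φ _ _ _ _ k2 k1, St.pm_braid]

end action2

/-! ## Part 4: the Artin group -/

set_option linter.unusedSectionVars false

section artin

variable {n : ℕ} (M : Fin n → Fin n → ℕ∞)

def mmM (i j : Fin n) : ℕ := (M i j).toNat

variable {M}

theorem mmM_symm (hsymm : ∀ i j, M i j = M j i) (i j : Fin n) : mmM M i j = mmM M j i := by
  unfold mmM; rw [hsymm]

theorem M_of_Pr {i j : Fin n} (hp : Pr (mmM M) i j) : M i j = (mmM M i j : ℕ∞) := by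
  have h : M i j ≠ ⊤ := by
    intro h
    have := hp.2
    simp [mmM, h] at this
  exact (ENat.natCast_toNat h).symm

theorem Pr_of_M (hlarge : ∀ i j, i ≠ j → 3 ≤ M i j) {i j : Fin n} (hij : i ≠ j) {m : ℕ}
    (h : M i j = (m : ℕ∞)) : Pr (mmM M) i j ∧ mmM M i j = m := by
  have h1 := hlarge i j hij
  rw [h] at h1
  have e : mmM M i j = m := by simp [mmM, h]
  exact ⟨⟨hij, by rw [e]; exact_mod_cast h1⟩, e⟩

theorem braid_gen {i j : Fin n} (hp : Pr (mmM M) i j) :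
    altProd (mmM M i j) (gen n M i) (gen n M j) = altProd (mmM M i j) (gen n M j) (gen n M i) := by
  have hmap : ∀ (k : ℕ) (x y : FreeGroup (Fin n)),
      PresentedGroup.mk (artinRels n M) (altProd k x y) =
        altProd k (PresentedGroup.mk (artinRels n M) x) (PresentedGroup.mk (artinRels n M) y) := by
    intro k
    induction k with
    | zero => intro x y; simp [altProd]
    | succ k ih => intro x y; simp only [altProd, map_mul, ih]
  have h1 : PresentedGroup.mk (artinRels n M)
      (altProd (mmM M i j) (FreeGroup.of i) (FreeGroup.of j) *
        (altProd (mmM M i j) (FreeGroup.of j) (FreeGroup.of i))⁻¹) = 1 := by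
    apply PresentedGroup.one_of_mem
    exact ⟨i, j, hp.1, _, M_of_Pr hp, rfl⟩
  rw [map_mul, map_inv, mul_inv_eq_one, hmap, hmap] at h1
  exact h1

theorem toGen_linv (a : Letter n) : toGen n M (linv a) = (toGen n M a)⁻¹ := by
  obtain ⟨i, σ⟩ := a
  cases σ <;> simp [toGen, linv]

theorem wordElt_nil : wordElt n M [] = 1 := rfl

theorem wordElt_cons (a : Letter n) (w : List (Letter n)) :
    wordElt n M (a :: w) = toGen n M a * wordElt n M w := by simp [wordElt]

theorem wordElt_append (w w' : List (Letter n)) :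
    wordElt n M (w ++ w') = wordElt n M w * wordElt n M w' := by simp [wordElt]

theorem wordElt_replicate (r : ℕ) (a : Letter n) :
    wordElt n M (List.replicate r a) = toGen n M a ^ r := by simp [wordElt]

theorem wordElt_ev {i j : Fin n} (hp : Pr (mmM M) i j) {u u' : List (Letter n)}
    (hu : IJ i j u) (hu' : IJ i j u') (h : ev (mmM M) i j u = ev (mmM M) i j u') :
    wordElt n M u = wordElt n M u' := by
  have key : ∀ u : List (Letter n), IJ i j u → wordElt n M u =
      ((u.map (cd i)).map (St.bl (fun z => if z then gen n M i else gen n M j))).prod := by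
    intro u hu
    rw [wordElt, List.map_map]
    congr 1
    apply List.map_congr_left
    intro a ha
    obtain ⟨k, σ⟩ := a
    rcases hu _ ha with h | h
    · simp only at h; subst h; simp [toGen, St.bl, cd]
    · simp only at h; subst h; simp [toGen, St.bl, cd, hp.1.symm]
  rw [key u hu, key u' hu', ← St.can_evS hp.2, ← St.can_evS hp.2]
  · unfold ev at h; rw [h]
  · simpa using braid_gen hp
  · simpa using braid_gen hp

theorem wordElt_E {w w' : List (Letter n)} (h : E (mmM M) w w') :
    wordElt n M w = wordElt n M w' := by
  induction h with
  | refl => rfl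
  | tail _ h ih =>
    rw [ih]
    obtain ⟨i, j, α, u, u', β, hp, h1, h2, h3, rfl, rfl⟩ := h
    simp only [wordElt_append]
    rw [wordElt_ev hp h1.1 h2.1 h3]

theorem red_or (w : List (Letter n)) : Red (mmM M) w ∨
    ∃ w', wordElt n M w' = wordElt n M w ∧ w'.length < w.length := by
  induction w with
  | nil => exact Or.inl trivial
  | cons a w ih =>
    rcases ih with h | ⟨w', h1, h2⟩
    · by_cases hd : Hd (mmM M) (linv a) w
      · obtain ⟨z, hz⟩ := hd
        right
        refine ⟨z, ?_, ?_⟩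
        · rw [wordElt_cons, wordElt_E hz, wordElt_cons, toGen_linv]; simp
        · have := E_len hz; simp at this ⊢; omega
      · exact Or.inl ⟨h, hd⟩
    · exact Or.inr ⟨a :: w', by rw [wordElt_cons, wordElt_cons, h1], by simpa using h2⟩

theorem exists_red_of (w : List (Letter n)) :
    ∃ w', Red (mmM M) w' ∧ wordElt n M w' = wordElt n M w ∧ w'.length ≤ w.length := by
  induction hk : w.length using Nat.strong_induction_on generalizing w with
  | _ k ih =>
    rcases red_or (M := M) w with h | ⟨w', h1, h2⟩
    · exact ⟨w, h, rfl, by omega⟩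
    · obtain ⟨w'', h3, h4, h5⟩ := ih _ (by omega) w' rfl
      exact ⟨w'', h3, h4.trans h1, by omega⟩

theorem mem_genSet (x : ArtinGroup n M) : x ∈ genSet n M ↔ ∃ a, x = toGen n M a := by
  constructor
  · rintro ⟨i, h | h⟩
    · exact ⟨(i, true), by simp [toGen, h]⟩
    · exact ⟨(i, false), by simp [toGen, h]⟩
  · rintro ⟨⟨i, σ⟩, rfl⟩
    refine ⟨i, ?_⟩
    cases σ <;> simp [toGen]

theorem exists_letters (w : List (ArtinGroup n M)) (h : ∀ a ∈ w, a ∈ genSet n M) :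
    ∃ u : List (Letter n), u.map (toGen n M) = w := by
  induction w with
  | nil => exact ⟨[], rfl⟩
  | cons x w ih =>
    obtain ⟨u, hu⟩ := ih (fun a ha => h a (by simp [ha]))
    obtain ⟨a, ha⟩ := (mem_genSet x).1 (h x (by simp))
    exact ⟨a :: u, by simp [hu, ha]⟩

theorem exists_word' (g : ArtinGroup n M) : ∃ w, wordElt n M w = g := by
  have hcl : g ∈ Subgroup.closure (Set.range (gen n M)) := by
    have := PresentedGroup.closure_range_of (artinRels n M)
    change g ∈ Subgroup.closure (Set.range (PresentedGroup.of (rels := artinRels n M)))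
    rw [this]; trivial
  induction hcl using Subgroup.closure_induction with
  | mem x hx =>
    obtain ⟨i, rfl⟩ := hx
    exact ⟨[(i, true)], by simp [wordElt, toGen]⟩
  | one => exact ⟨[], rfl⟩
  | mul x y _ _ hx hy =>
    obtain ⟨u, rfl⟩ := hx
    obtain ⟨v, rfl⟩ := hy
    exact ⟨u ++ v, wordElt_append _ _⟩
  | inv x _ hx =>
    obtain ⟨u, rfl⟩ := hx
    refine ⟨(u.map linv).reverse, ?_⟩
    simp only [wordElt, List.prod_inv_reverse, List.map_reverse, List.map_map]
    congr 2
    apply List.map_congr_left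
    intro a _
    simp [toGen_linv]

theorem len_le (w : List (Letter n)) : ℓA n M (wordElt n M w) ≤ w.length := by
  apply Nat.sInf_le
  refine ⟨w.map (toGen n M), ?_, by simp, rfl⟩
  intro a ha
  obtain ⟨b, _, rfl⟩ := List.mem_map.1 ha
  exact (mem_genSet _).2 ⟨b, rfl⟩

theorem exists_geo (g : ArtinGroup n M) : ∃ w, wordElt n M w = g ∧ ℓA n M g = w.length := by
  have hne : {N : ℕ | ∃ w : List (ArtinGroup n M), (∀ a ∈ w, a ∈ genSet n M) ∧
      w.length = N ∧ w.prod = g}.Nonempty := by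
    obtain ⟨w, hw⟩ := exists_word' g
    refine ⟨w.length, w.map (toGen n M), ?_, by simp, hw⟩
    intro a ha
    obtain ⟨b, _, rfl⟩ := List.mem_map.1 ha
    exact (mem_genSet _).2 ⟨b, rfl⟩
  obtain ⟨w, h1, h2, h3⟩ := Nat.sInf_mem hne
  obtain ⟨u, rfl⟩ := exists_letters w h1
  exact ⟨u, h3, by rw [ℓA, wordLength, ← h2]; simp⟩

theorem red_of_len {w : List (Letter n)} (h : ℓA n M (wordElt n M w) = w.length) :
    Red (mmM M) w := by
  rcases red_or (M := M) w with h' | ⟨w', h1, h2⟩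
  · exact h'
  · have := len_le (M := M) w'
    rw [h1, h] at this; omega

variable (hsymm : ∀ i j, M i j = M j i) (hlarge : ∀ i j, i ≠ j → 3 ≤ M i j)
include hsymm hlarge

theorem exists_rho : ∃ ρ : ArtinGroup n M →* Equiv.Perm (XX (mmM M)),
    ∀ a x, ρ (toGen n M a) x = actX (mmM_symm hsymm) a x := by
  have hmap : ∀ (k : ℕ) (x y : FreeGroup (Fin n)),
      FreeGroup.lift (permX (mmM_symm hsymm)) (altProd k x y) =
        altProd k (FreeGroup.lift (permX (mmM_symm hsymm)) x)
          (FreeGroup.lift (permX (mmM_symm hsymm)) y) := by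
    intro k
    induction k with
    | zero => intro x y; simp [altProd]
    | succ k ih => intro x y; simp only [altProd, map_mul, ih]
  have hrel : ∀ r ∈ artinRels n M, FreeGroup.lift (permX (mmM_symm hsymm)) r = 1 := by
    rintro r ⟨i, j, hij, m, hm, rfl⟩
    obtain ⟨hp, he⟩ := Pr_of_M hlarge hij hm
    rw [map_mul, map_inv, mul_inv_eq_one, hmap, hmap]
    simp only [FreeGroup.lift_apply_of]
    rw [← he]
    exact permX_braid _ hp
  refine ⟨PresentedGroup.toGroup hrel, ?_⟩
  rintro ⟨i, σ⟩ x
  cases σ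
  · simp only [toGen, gen]
    simp [PresentedGroup.toGroup.of]
    rfl
  · simp only [toGen, gen]
    simp [PresentedGroup.toGroup.of]
    rfl

theorem red_uniq {w w' : List (Letter n)} (hr : Red (mmM M) w) (hr' : Red (mmM M) w')
    (h : wordElt n M w = wordElt n M w') : E (mmM M) w w' := by
  obtain ⟨ρ, hρ⟩ := exists_rho hsymm hlarge
  have key : ∀ (w : List (Letter n)) (hr : Red (mmM M) w),
      ρ (wordElt n M w) (xmk [] trivial) = xmk w hr := by
    intro w
    induction w with
    | nil => intro hr; simp [wordElt]
    | cons a w ih =>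
      intro hr
      have hr1 : Red (mmM M) w := hr.1
      have hr2 : ¬ Hd (mmM M) (linv a) w := hr.2
      rw [wordElt_cons, map_mul, Equiv.Perm.mul_apply, ih hr1, hρ, actX_neg _ hr1 hr2 hr]
  have := key w hr
  rw [h, key w' hr'] at this
  exact E_symm (xmk_eq.1 this)

theorem red_len {w : List (Letter n)} (hr : Red (mmM M) w) :
    ℓA n M (wordElt n M w) = w.length := by
  obtain ⟨w', h1, h2⟩ := exists_geo (wordElt n M w)
  rw [h2]
  rw [← h1] at h2
  exact (E_len (red_uniq hsymm hlarge hr (red_of_len h2) h1.symm)).symm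

end artin

/-! ## Part 5: geodesics in the Artin group -/

set_option linter.unusedSectionVars false

section geod

variable {n : ℕ} {M : Fin n → Fin n → ℕ∞}

local notation "𝓁" => ℓA n M
local notation "𝓉" => toGen n M

/-- `a` is the first letter of some geodesic word for `g` -/
def FL (a : Letter n) (g : ArtinGroup n M) : Prop := 𝓁 ((𝓉 a)⁻¹ * g) < 𝓁 g

def SdG : ℕ → Fin n → Fin n → ArtinGroup n M → Prop
  | 0, _, _, _ => True
  | k + 1, i, j, g => ∃ (a : Letter n) (r : ℕ), a.1 = i ∧ 1 ≤ r ∧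
      𝓁 g = r + 𝓁 ((𝓉 a ^ r)⁻¹ * g) ∧
      (∀ b : Letter n, b.1 = i → ¬ FL b ((𝓉 a ^ r)⁻¹ * g)) ∧ SdG k j i ((𝓉 a ^ r)⁻¹ * g)

def Big (M : Fin n → Fin n → ℕ∞) : Prop :=
  (∀ i j, M i j = M j i) ∧ (∀ i j, i ≠ j → 3 ≤ M i j)

theorem len_mul_le (x y : ArtinGroup n M) : 𝓁 (x * y) ≤ 𝓁 x + 𝓁 y := by
  obtain ⟨u, h1, h2⟩ := exists_geo x
  obtain ⟨v, h3, h4⟩ := exists_geo y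
  have := len_le (M := M) (u ++ v)
  rw [wordElt_append, h1, h3, List.length_append] at this
  omega

theorem len_one : 𝓁 (1 : ArtinGroup n M) = 0 := by
  have := len_le (M := M) []
  rw [wordElt_nil] at this; simpa using this

theorem len_eq_zero {x : ArtinGroup n M} (h : 𝓁 x = 0) : x = 1 := by
  obtain ⟨u, h1, h2⟩ := exists_geo x
  have : u = [] := List.length_eq_zero_iff.1 (by omega)
  rw [← h1, this]; rfl

theorem len_inv_le (x : ArtinGroup n M) : 𝓁 x⁻¹ ≤ 𝓁 x := by
  obtain ⟨u, h1, h2⟩ := exists_geo x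
  have := len_le (M := M) (u.map linv).reverse
  have e : wordElt n M (u.map linv).reverse = x⁻¹ := by
    rw [← h1]
    simp only [wordElt, List.prod_inv_reverse, List.map_reverse, List.map_map]
    congr 2
    apply List.map_congr_left
    intro a _
    simp [toGen_linv]
  rw [e] at this
  simp at this; omega

theorem len_inv (x : ArtinGroup n M) : 𝓁 x⁻¹ = 𝓁 x := by
  have h1 := len_inv_le x
  have h2 := len_inv_le x⁻¹
  rw [inv_inv] at h2; omega

theorem len_gen_le (a : Letter n) : 𝓁 (𝓉 a) ≤ 1 := by
  have := len_le (M := M) [a]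
  rw [wordElt_cons, wordElt_nil, mul_one] at this; simpa using this

theorem len_pow_le (a : Letter n) (r : ℕ) : 𝓁 (𝓉 a ^ r) ≤ r := by
  have := len_le (M := M) (List.replicate r a)
  rw [wordElt_replicate] at this; simpa using this

/-- Combined assertions about lengths -/
theorem len_gen_mul_le (a : Letter n) (x : ArtinGroup n M) : 𝓁 (𝓉 a * x) ≤ 𝓁 x + 1 := by
  have := len_mul_le (𝓉 a) x
  have := len_gen_le (M := M) a
  omega

theorem FL_of_mul {a : Letter n} {x y : ArtinGroup n M} (h : FL a x)
    (h' : 𝓁 (x * y) = 𝓁 x + 𝓁 y) : FL a (x * y) := by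
  unfold FL at *
  have := len_mul_le ((𝓉 a)⁻¹ * x) y
  rw [mul_assoc] at this
  omega

theorem not_FL_one (a : Letter n) : ¬ FL a (1 : ArtinGroup n M) := by
  unfold FL; rw [len_one]; omega

theorem FL_cons {a : Letter n} {x : ArtinGroup n M} (h : 𝓁 (𝓉 a * x) = 𝓁 x + 1) :
    FL a (𝓉 a * x) := by
  unfold FL; rw [inv_mul_cancel_left]; omega

theorem exists_red (g : ArtinGroup n M) : ∃ w, Red (mmM M) w ∧ wordElt n M w = g := by
  obtain ⟨w, h1, h2⟩ := exists_geo g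
  exact ⟨w, red_of_len (by rw [h1, h2]), h1⟩

variable (hA : Big M)
include hA

theorem Red_len {w : List (Letter n)} (hr : Red (mmM M) w) :
    𝓁 (wordElt n M w) = w.length := red_len hA.1 hA.2 hr

theorem FL_iff_Hd {a : Letter n} {w : List (Letter n)} (hr : Red (mmM M) w) :
    FL a (wordElt n M w) ↔ Hd (mmM M) a w := by
  constructor
  · intro h
    unfold FL at h
    rw [Red_len hA hr] at h
    obtain ⟨z, h1, h2⟩ := exists_geo ((𝓉 a)⁻¹ * wordElt n M w)
    have h3 : wordElt n M (a :: z) = wordElt n M w := by rw [wordElt_cons, h1]; simp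
    have h4 : 𝓁 (wordElt n M (a :: z)) = (a :: z).length := by
      have := len_le (M := M) (a :: z)
      rw [h3, Red_len hA hr] at this ⊢
      simp at this ⊢
      omega
    exact ⟨z, red_uniq hA.1 hA.2 hr (red_of_len h4) h3.symm⟩
  · rintro ⟨z, hz⟩
    unfold FL
    rw [wordElt_E hz, wordElt_cons, inv_mul_cancel_left]
    have h1 := Red_E (mmM_symm hA.1) hr hz
    rw [← wordElt_cons, Red_len hA h1, Red_len hA h1.1]
    simp

theorem FL_len {a : Letter n} {g : ArtinGroup n M} (h : FL a g) :
    𝓁 g = 𝓁 ((𝓉 a)⁻¹ * g) + 1 := by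
  have h1 := len_gen_mul_le a ((𝓉 a)⁻¹ * g)
  rw [mul_inv_cancel_left] at h1
  unfold FL at h; omega

theorem not_FL_len {a : Letter n} {g : ArtinGroup n M} (h : ¬ FL a g) :
    𝓁 ((𝓉 a)⁻¹ * g) = 𝓁 g + 1 := by
  obtain ⟨w, hw, rfl⟩ := exists_red g
  rw [FL_iff_Hd hA hw] at h
  rw [← toGen_linv, ← wordElt_cons]
  have : Red (mmM M) (linv a :: w) := ⟨hw, by rw [linv_linv]; exact h⟩
  rw [Red_len hA this, Red_len hA hw]; simp

theorem exists_FL {g : ArtinGroup n M} (h : g ≠ 1) : ∃ a, FL a g := by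
  obtain ⟨w, hw, rfl⟩ := exists_red g
  cases w with
  | nil => exact absurd rfl h
  | cons a w => exact ⟨a, (FL_iff_Hd hA hw).2 (Hd_cons _ _)⟩

theorem SdW_SdG {k : ℕ} {i j : Fin n} {w : List (Letter n)} (hr : Red (mmM M) w) :
    SdW (mmM M) k i j w ↔ SdG k i j (wordElt n M w) := by
  induction k generalizing i j w with
  | zero => simp [SdW, SdG]
  | succ k ih =>
    constructor
    · rintro ⟨a, r, x, h1, h2, h3, h4, h5⟩
      have hrx := Red_E (mmM_symm hA.1) hr h3
      have hx := Red_right hrx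
      have e : (𝓉 a ^ r)⁻¹ * wordElt n M w = wordElt n M x := by
        rw [wordElt_E h3, wordElt_append, wordElt_replicate]; simp
      refine ⟨a, r, h1, h2, ?_, ?_, ?_⟩
      · rw [e, Red_len hA hr, Red_len hA hx, E_len h3]; simp
      · intro b hb; rw [e, FL_iff_Hd hA hx]; exact h4 b hb
      · rw [e]; exact (ih hx).1 h5
    · rintro ⟨a, r, h1, h2, h3, h4, h5⟩
      obtain ⟨x, hx, e⟩ := exists_red ((𝓉 a ^ r)⁻¹ * wordElt n M w)
      have e2 : wordElt n M (List.replicate r a ++ x) = wordElt n M w := by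
        rw [wordElt_append, wordElt_replicate, e]; simp
      have hr2 : Red (mmM M) (List.replicate r a ++ x) := by
        apply red_of_len
        rw [e2, h3, ← e, Red_len hA hx]; simp
      refine ⟨a, r, x, h1, h2, red_uniq hA.1 hA.2 hr hr2 e2.symm, ?_, ?_⟩
      · intro b hb; rw [← FL_iff_Hd hA hx, e]; exact h4 b hb
      · rw [ih hx, e]; exact h5

theorem two_endG {a b : Letter n} {g : ArtinGroup n M} (ha : FL a g) (hb : FL b g) (hab : a ≠ b) :
    Pr (mmM M) a.1 b.1 ∧ SdG (mmM M a.1 b.1) a.1 b.1 g := by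
  obtain ⟨w, hw, rfl⟩ := exists_red g
  rw [FL_iff_Hd hA hw] at ha hb
  obtain ⟨h1, h2⟩ := two_end (AB_all (mmM_symm hA.1) _) (mmM_symm hA.1) hw le_rfl ha hb hab
  exact ⟨h1, (SdW_SdG hA hw).1 h2⟩

theorem FL_same {a b : Letter n} {g : ArtinGroup n M} (ha : FL a g) (hb : FL b g)
    (h : a.1 = b.1) : a = b := by
  by_contra hab
  exact (two_endG hA ha hb hab).1.1 h

theorem DlemG {b c : Letter n} {i : Fin n} {g : ArtinGroup n M} (hb : FL b g) (hc : FL c g)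
    (hbc : b.1 ≠ c.1) (hib : i ≠ b.1) (hic : i ≠ c.1) : ¬ SdG 2 b.1 i g := by
  obtain ⟨w, hw, rfl⟩ := exists_red g
  rw [FL_iff_Hd hA hw] at hb hc
  rw [← SdW_SdG hA hw]
  exact lemD (AB_all (mmM_symm hA.1) _) (mmM_symm hA.1) hw le_rfl hb hc hbc hib hic

omit hA in
theorem SdG_mono {k k' : ℕ} (hk : k ≤ k') {i j : Fin n} {g : ArtinGroup n M}
    (h : SdG k' i j g) : SdG k i j g := by
  induction k generalizing k' i j g with
  | zero => trivial
  | succ k ih =>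
    obtain ⟨k', rfl⟩ : ∃ k'', k' = k'' + 1 := ⟨k' - 1, by omega⟩
    obtain ⟨a, r, h1, h2, h3, h4, h5⟩ := h
    exact ⟨a, r, h1, h2, h3, h4, ih (by omega) h5⟩

theorem pow_FL {a : Letter n} {r : ℕ} (hr : 1 ≤ r) {g : ArtinGroup n M}
    (h : 𝓁 g = r + 𝓁 ((𝓉 a ^ r)⁻¹ * g)) : FL a g := by
  obtain ⟨r, rfl⟩ : ∃ r', r = r' + 1 := ⟨r - 1, by omega⟩
  unfold FL
  have h1 := len_mul_le (𝓉 a ^ r) ((𝓉 a ^ (r + 1))⁻¹ * g)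
  have e : 𝓉 a ^ r * ((𝓉 a ^ (r + 1))⁻¹ * g) = (𝓉 a)⁻¹ * g := by
    rw [pow_succ]; group
  rw [e] at h1
  have := len_pow_le (M := M) a r
  omega

theorem SdG_head {k : ℕ} {i j : Fin n} {g : ArtinGroup n M} (h : SdG (k + 1) i j g) :
    ∃ a : Letter n, a.1 = i ∧ FL a g := by
  obtain ⟨a, r, h1, h2, h3, h4, h5⟩ := h
  exact ⟨a, h1, pow_FL hA h2 h3⟩

theorem strip_exists {a : Letter n} {g : ArtinGroup n M} (h : FL a g) :
    ∃ r, 1 ≤ r ∧ 𝓁 g = r + 𝓁 ((𝓉 a ^ r)⁻¹ * g) ∧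
      ∀ b : Letter n, b.1 = a.1 → ¬ FL b ((𝓉 a ^ r)⁻¹ * g) := by
  induction hk : 𝓁 g using Nat.strong_induction_on generalizing g with
  | _ k ih =>
    have h1 := FL_len hA h
    by_cases h2 : ∃ b : Letter n, b.1 = a.1 ∧ FL b ((𝓉 a)⁻¹ * g)
    · obtain ⟨b, hb, hb2⟩ := h2
      have hba : b = a := by
        by_contra hne
        have e : b = linv a := by
          obtain ⟨b1, b2⟩ := b
          obtain ⟨a1, a2⟩ := a
          simp only at hb
          subst hb
          cases a2 <;> cases b2 <;> simp_all [linv]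
        have h3 := FL_len hA hb2
        rw [e, toGen_linv] at h3
        simp at h3
        omega
      subst hba
      obtain ⟨r, h3, h4, h5⟩ := ih _ (by omega) hb2 rfl
      have e : (𝓉 b ^ (r + 1))⁻¹ * g = (𝓉 b ^ r)⁻¹ * ((𝓉 b)⁻¹ * g) := by
        rw [pow_succ']; group
      exact ⟨r + 1, by omega, by rw [e]; omega, by rw [e]; exact h5⟩
    · push Not at h2
      refine ⟨1, le_rfl, ?_, ?_⟩
      · rw [pow_one]; omega
      · rw [pow_one]; exact h2

theorem strip_uniqG {a a' : Letter n} (hn : a.1 = a'.1) {r r' : ℕ} (hr : 1 ≤ r) (hr' : 1 ≤ r')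
    {g : ArtinGroup n M} (h : 𝓁 g = r + 𝓁 ((𝓉 a ^ r)⁻¹ * g))
    (h' : 𝓁 g = r' + 𝓁 ((𝓉 a' ^ r')⁻¹ * g))
    (hx : ∀ b : Letter n, b.1 = a.1 → ¬ FL b ((𝓉 a ^ r)⁻¹ * g))
    (hx' : ∀ b : Letter n, b.1 = a.1 → ¬ FL b ((𝓉 a' ^ r')⁻¹ * g)) : a = a' ∧ r = r' := by
  have e := FL_same hA (pow_FL hA hr h) (pow_FL hA hr' h') hn
  subst e
  refine ⟨rfl, ?_⟩
  have key : ∀ r r' : ℕ, 𝓁 g = r + 𝓁 ((𝓉 a ^ r)⁻¹ * g) → 𝓁 g = r' + 𝓁 ((𝓉 a ^ r')⁻¹ * g) →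
      (∀ b : Letter n, b.1 = a.1 → ¬ FL b ((𝓉 a ^ r)⁻¹ * g)) → ¬ r < r' := by
    intro r r' h h' hx hlt
    apply hx a rfl
    obtain ⟨s, rfl⟩ : ∃ s, r' = r + s := ⟨r' - r, by omega⟩
    apply pow_FL hA (r := s) (by omega)
    have e : (𝓉 a ^ s)⁻¹ * ((𝓉 a ^ r)⁻¹ * g) = (𝓉 a ^ (r + s))⁻¹ * g := by
      rw [pow_add]; group
    rw [e]; omega
  have h1 := key r r' h h' hx
  have h2 := key r' r h' h hx'
  omega

/-- a strip of the first syllable computes `SdG` -/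
theorem SdG_strip {k : ℕ} {i j : Fin n} {g : ArtinGroup n M} (hS : SdG (k + 1) i j g)
    {a : Letter n} {r : ℕ} (ha : a.1 = i) (hr : 1 ≤ r) (h : 𝓁 g = r + 𝓁 ((𝓉 a ^ r)⁻¹ * g))
    (hx : ∀ b : Letter n, b.1 = i → ¬ FL b ((𝓉 a ^ r)⁻¹ * g)) :
    SdG k j i ((𝓉 a ^ r)⁻¹ * g) := by
  obtain ⟨a', r', h1, h2, h3, h4, h5⟩ := hS
  obtain ⟨rfl, rfl⟩ := strip_uniqG hA (h1.trans ha.symm) h2 hr h3 h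
    (by rw [h1]; exact h4) (by rw [h1]; exact hx)
  exact h5

theorem SdG_one {a : Letter n} {g : ArtinGroup n M} (h : FL a g) (j : Fin n) : SdG 1 a.1 j g := by
  obtain ⟨r, h1, h2, h3⟩ := strip_exists hA h
  exact ⟨a, r, rfl, h1, h2, h3, trivial⟩

end geod

/-! ## Part 6: dihedral subgroups and cosets -/

set_option linter.unusedSectionVars false

section dihedral

variable {n : ℕ} {M : Fin n → Fin n → ℕ∞}

local notation "𝓁" => ℓA n M
local notation "𝓉" => toGen n M

/-- no first letter of `y` is named `i` or `j` -/
def NF (i j : Fin n) (y : ArtinGroup n M) : Prop := ∀ a : Letter n, FL a y → a.1 ≠ i ∧ a.1 ≠ j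

theorem gen_mem {i j : Fin n} {a : Letter n} (ha : a.1 = i ∨ a.1 = j) : 𝓉 a ∈ Gij n M i j := by
  obtain ⟨k, σ⟩ := a
  have h : gen n M k ∈ Gij n M i j := by
    apply Subgroup.subset_closure
    simp only at ha
    rcases ha with rfl | rfl <;> simp
  cases σ
  · simpa [toGen] using h
  · simpa [toGen] using h

theorem Gij_word' {i j : Fin n} {t : ArtinGroup n M} (ht : t ∈ Gij n M i j) :
    ∃ u : List (Letter n), IJ i j u ∧ wordElt n M u = t := by
  unfold Gij at ht
  induction ht using Subgroup.closure_induction with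
  | mem x hx =>
    rcases hx with rfl | hx
    · exact ⟨[(i, true)], by simp [IJ], by simp [wordElt, toGen]⟩
    · rw [Set.mem_singleton_iff] at hx
      subst hx
      exact ⟨[(j, true)], by simp [IJ], by simp [wordElt, toGen]⟩
  | one => exact ⟨[], by simp [IJ], rfl⟩
  | mul x y _ _ hx hy =>
    obtain ⟨u, h1, rfl⟩ := hx
    obtain ⟨v, h2, rfl⟩ := hy
    refine ⟨u ++ v, ?_, wordElt_append _ _⟩
    intro a ha
    rcases List.mem_append.1 ha with h | h
    · exact h1 a h
    · exact h2 a h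
  | inv x _ hx =>
    obtain ⟨u, h1, rfl⟩ := hx
    refine ⟨(u.map linv).reverse, ?_, ?_⟩
    · intro a ha
      rw [List.mem_reverse, List.mem_map] at ha
      obtain ⟨b, hb, rfl⟩ := ha
      exact h1 b hb
    · simp only [wordElt, List.prod_inv_reverse, List.map_reverse, List.map_map]
      congr 2
      apply List.map_congr_left
      intro a _
      simp [toGen_linv]

theorem Gij_word {i j : Fin n} (hp : Pr (mmM M) i j) {t : ArtinGroup n M}
    (ht : t ∈ Gij n M i j) : ∃ u, Geo (mmM M) i j u ∧ wordElt n M u = t := by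
  obtain ⟨u, h1, h2⟩ := Gij_word' ht
  obtain ⟨v, h3, h4⟩ := exists_gw hp (V_ev hp u)
  exact ⟨v, h3, by rw [← h2]; exact wordElt_ev hp h3.1 h1 h4⟩

variable (hA : Big M)
include hA

theorem NF_one (i j : Fin n) : NF i j (1 : ArtinGroup n M) := fun a h => absurd h (not_FL_one a)

theorem coset_min {i j : Fin n} (hp : Pr (mmM M) i j) {y t : ArtinGroup n M} (hy : NF i j y)
    (ht : t ∈ Gij n M i j) : 𝓁 (t * y) = 𝓁 t + 𝓁 y := by
  obtain ⟨u, hu, rfl⟩ := Gij_word hp ht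
  have hs := mmM_symm hA.1
  have key : ∀ v : List (Letter n), Red (mmM M) v → Free (mmM M) i j v →
      Red (mmM M) (u ++ v) := fun v hv hf =>
    Red_app (AB_all hs (u ++ v).length) hs hp hv (by omega) hu hf
  obtain ⟨v, hv, rfl⟩ := exists_red y
  have hf : Free (mmM M) i j v := fun a ha => hy a ((FL_iff_Hd hA hv).2 ha)
  have hu2 : Red (mmM M) u := Red_left (key v hv hf)
  rw [← wordElt_append, Red_len hA (key v hv hf), Red_len hA hu2, Red_len hA hv]
  simp

theorem FL_Gij {i j : Fin n} (hp : Pr (mmM M) i j) {t : ArtinGroup n M} (ht : t ∈ Gij n M i j)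
    (h1 : t ≠ 1) : ∃ a : Letter n, (a.1 = i ∨ a.1 = j) ∧ FL a t := by
  by_contra hc
  push Not at hc
  have hN : NF i j t := by
    intro a ha
    by_contra h
    exact hc a (by tauto) ha
  have := coset_min hA hp hN (inv_mem ht)
  rw [inv_mul_cancel, len_one] at this
  exact h1 (len_eq_zero (by omega))

/-- first letters in `Gij` of `h * g'` are those of `h` -/
theorem FL_coset {i j : Fin n} (hp : Pr (mmM M) i j) {h g' : ArtinGroup n M}
    (hh : h ∈ Gij n M i j) (hg : NF i j g') {a : Letter n} (ha : a.1 = i ∨ a.1 = j) :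
    FL a (h * g') ↔ FL a h := by
  unfold FL
  rw [← mul_assoc, coset_min hA hp hg hh, coset_min hA hp hg (mul_mem (inv_mem (gen_mem ha)) hh)]
  omega

theorem MaxLD_NF {i j : Fin n} {g h : ArtinGroup n M} (hM : IsMaxLD n M i j g h) :
    NF i j (h⁻¹ * g) := by
  intro a ha
  by_contra hc
  have hc : a.1 = i ∨ a.1 = j := by tauto
  obtain ⟨h1, h2, h3⟩ := hM
  unfold IsLeftDiv at h2 h3
  have h4 := FL_len hA ha
  have e : (h * 𝓉 a)⁻¹ * g = (𝓉 a)⁻¹ * (h⁻¹ * g) := by group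
  have h5 := len_mul_le (h * 𝓉 a) ((h * 𝓉 a)⁻¹ * g)
  rw [mul_inv_cancel_left, e] at h5
  have h6 := len_mul_le h (𝓉 a)
  have h7 := len_gen_le (M := M) a
  have h8 := h3 (h * 𝓉 a) (mul_mem h1 (gen_mem hc)) (by rw [e]; omega)
  omega

theorem LD_char {i j : Fin n} (hp : Pr (mmM M) i j) {g h u : ArtinGroup n M}
    (hM : IsMaxLD n M i j g h) (hu : u ∈ Gij n M i j) (hN : NF i j (u⁻¹ * g)) : h = u := by
  have h1 := coset_min hA hp (MaxLD_NF hA hM) (mul_mem (inv_mem hu) hM.1)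
  have h2 := coset_min hA hp hN (mul_mem (inv_mem hM.1) hu)
  have e1 : u⁻¹ * h * (h⁻¹ * g) = u⁻¹ * g := by group
  have e2 : h⁻¹ * u * (u⁻¹ * g) = h⁻¹ * g := by group
  rw [e1] at h1
  rw [e2] at h2
  have := len_eq_zero (show 𝓁 (u⁻¹ * h) = 0 by omega)
  exact (inv_mul_eq_one.1 this).symm

omit hA in
theorem RD_LD {i j : Fin n} {g h : ArtinGroup n M} (hM : IsMaxRD n M i j g h) :
    IsMaxLD n M i j g⁻¹ h⁻¹ := by
  obtain ⟨h1, h2, h3⟩ := hM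
  have key : ∀ h : ArtinGroup n M, 𝓁 (h⁻¹⁻¹ * g⁻¹) = 𝓁 (g * h⁻¹) := by
    intro h
    rw [← len_inv (g * h⁻¹)]; congr 1; group
  refine ⟨inv_mem h1, ?_, ?_⟩
  · unfold IsLeftDiv IsRightDiv at *
    rw [key, len_inv, len_inv]; omega
  · intro h' hh' hd
    have := h3 h'⁻¹ (inv_mem hh') (by
      unfold IsLeftDiv IsRightDiv at *
      have k := key h'⁻¹
      rw [inv_inv] at k
      rw [← k, len_inv h']
      rw [len_inv g] at hd; omega)
    rw [len_inv] at this ⊢; exact this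

theorem strip_pow_one {d : Letter n} {t : ℕ} (ht : 1 ≤ t) (hl : 𝓁 (𝓉 d ^ t) = t) {k : ℕ}
    {j : Fin n} (hS : SdG (k + 2) d.1 j (𝓉 d ^ t)) : False := by
  have e : (𝓉 d ^ t)⁻¹ * 𝓉 d ^ t = 1 := by group
  have := SdG_strip hA hS rfl ht (by rw [e, len_one]; omega)
    (by rw [e]; exact fun b _ => not_FL_one b)
  rw [e] at this
  obtain ⟨a, _, ha⟩ := SdG_head hA this
  exact not_FL_one a ha

theorem FP {d y : Letter n} {t : ℕ} (hl : 𝓁 (𝓉 d ^ t) = t) (hy : FL y (𝓉 d ^ t)) : y = d := by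
  have ht : 1 ≤ t := by
    by_contra h
    obtain rfl : t = 0 := by omega
    rw [pow_zero] at hy
    exact not_FL_one _ hy
  by_contra hne
  have hd : FL d (𝓉 d ^ t) := pow_FL hA ht (by rw [inv_mul_cancel, len_one]; omega)
  obtain ⟨h1, h2⟩ := two_endG hA hd hy (Ne.symm hne)
  exact strip_pow_one hA ht hl (SdG_mono h1.2 h2)

omit hA in
theorem linv_of_name {e f : Letter n} (h : f.1 = e.1) (hne : f ≠ e) : f = linv e := by
  obtain ⟨b1, b2⟩ := f
  obtain ⟨a1, a2⟩ := e
  simp only at h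
  subst h
  cases a2 <;> cases b2 <;> simp_all [linv]

theorem same_name {e f : Letter n} {N N1 : ℕ} (hl : 𝓁 (𝓉 e ^ N * 𝓉 f ^ N1) = N + N1)
    (hN : 1 ≤ N) (hN1 : 1 ≤ N1) (h : f.1 = e.1) : f = e := by
  by_contra hne
  have := linv_of_name h hne
  obtain ⟨N, rfl⟩ : ∃ r', N = r' + 1 := ⟨N - 1, by omega⟩
  obtain ⟨N1, rfl⟩ : ∃ r', N1 = r' + 1 := ⟨N1 - 1, by omega⟩
  have e1 : 𝓉 e ^ (N + 1) * 𝓉 f ^ (N1 + 1) = 𝓉 e ^ N * 𝓉 f ^ N1 := by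
    rw [this, toGen_linv, pow_succ, pow_succ']; group
  rw [e1] at hl
  have h1 := len_mul_le (𝓉 e ^ N) (𝓉 f ^ N1)
  have h2 := len_pow_le (M := M) e N
  have h3 := len_pow_le (M := M) f N1
  omega

theorem TS {e f x : Letter n} {N N1 : ℕ} (hl : 𝓁 (𝓉 e ^ N * 𝓉 f ^ N1) = N + N1) (hN : 1 ≤ N)
    (hx : FL x (𝓉 e ^ N * 𝓉 f ^ N1)) : x = e := by
  have q1 := len_mul_le (𝓉 e ^ N) (𝓉 f ^ N1)
  have q2 := len_pow_le (M := M) e N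
  have q3 := len_pow_le (M := M) f N1
  by_cases hN1 : N1 = 0
  · subst hN1
    rw [pow_zero, mul_one] at hx hl
    exact FP hA hl hx
  by_cases hn : f.1 = e.1
  · have := same_name hA hl hN (by omega) hn
    subst this
    rw [← pow_add] at hl hx
    exact FP hA hl hx
  by_contra hne
  have ee : (𝓉 e ^ N)⁻¹ * (𝓉 e ^ N * 𝓉 f ^ N1) = 𝓉 f ^ N1 := by group
  have hlen : 𝓁 (𝓉 e ^ N * 𝓉 f ^ N1) =
      N + 𝓁 ((𝓉 e ^ N)⁻¹ * (𝓉 e ^ N * 𝓉 f ^ N1)) := by rw [ee]; omega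
  have he : FL e (𝓉 e ^ N * 𝓉 f ^ N1) := pow_FL hA hN hlen
  obtain ⟨h1, h2⟩ := two_endG hA he hx (Ne.symm hne)
  have h3 : SdG 3 e.1 x.1 (𝓉 e ^ N * 𝓉 f ^ N1) := SdG_mono h1.2 h2
  have hlf : 𝓁 (𝓉 f ^ N1) = N1 := by omega
  have h4 := SdG_strip hA h3 rfl hN hlen (by
    rw [ee]
    intro b hb hF
    have := FP hA hlf hF
    subst this
    exact hn hb)
  rw [ee] at h4
  obtain ⟨b, hb, hF⟩ := SdG_head hA h4
  have := FP hA hlf hF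
  subst this
  rw [← hb] at h4
  exact strip_pow_one hA (by omega) hlf h4

omit hA in
theorem FL_left {x : Letter n} {u g : ArtinGroup n M} (h : FL x u)
    (hd : 𝓁 u + 𝓁 (u⁻¹ * g) = 𝓁 g) : FL x g := by
  have := FL_of_mul h (y := u⁻¹ * g) (by rw [mul_inv_cancel_left]; omega)
  rwa [mul_inv_cancel_left] at this

theorem LD1 {f : Letter n} {N : ℕ} {u : ArtinGroup n M} (hl : 𝓁 (𝓉 f ^ N) = N)
    (hd : 𝓁 u + 𝓁 (u⁻¹ * 𝓉 f ^ N) = N) : u = 𝓉 f ^ (𝓁 u) := by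
  induction N generalizing u with
  | zero =>
    have := len_eq_zero (show 𝓁 u = 0 by omega)
    rw [this, len_one, pow_zero]
  | succ N ih =>
    by_cases h1 : u = 1
    · rw [h1, len_one, pow_zero]
    obtain ⟨x, hx⟩ := exists_FL hA h1
    have : x = f := FP hA hl (FL_left hx (by omega))
    subst this
    have h2 := FL_len hA hx
    have e : ((𝓉 x)⁻¹ * u)⁻¹ * 𝓉 x ^ N = u⁻¹ * 𝓉 x ^ (N + 1) := by rw [pow_succ']; group
    have h3 := len_pow_le (M := M) x N
    have h4 := len_gen_mul_le (M := M) x (𝓉 x ^ N)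
    rw [← pow_succ'] at h4
    have h5 := ih (u := (𝓉 x)⁻¹ * u) (by omega) (by rw [e]; omega)
    have h6 : u = 𝓉 x * 𝓉 x ^ (𝓁 ((𝓉 x)⁻¹ * u)) := by rw [← h5]; group
    rw [← pow_succ', ← h2] at h6
    exact h6

theorem LD2 {e f : Letter n} {N N1 : ℕ} {u : ArtinGroup n M}
    (hl : 𝓁 (𝓉 e ^ N * 𝓉 f ^ N1) = N + N1)
    (hd : 𝓁 u + 𝓁 (u⁻¹ * (𝓉 e ^ N * 𝓉 f ^ N1)) = N + N1) :
    ∃ N' N1', u = 𝓉 e ^ N' * 𝓉 f ^ N1' ∧ 𝓁 u = N' + N1' := by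
  induction N generalizing u with
  | zero =>
    rw [pow_zero, one_mul] at hl hd
    have := LD1 hA (u := u) (f := f) (N := N1) (by omega) (by omega)
    exact ⟨0, 𝓁 u, by rw [pow_zero, one_mul]; exact this, by omega⟩
  | succ N ih =>
    by_cases h1 : u = 1
    · exact ⟨0, 0, by simp [h1], by rw [h1, len_one]⟩
    obtain ⟨x, hx⟩ := exists_FL hA h1
    have : x = e := TS hA hl (by omega) (FL_left hx (by omega))
    subst this
    have h2 := FL_len hA hx
    have e1 : ((𝓉 x)⁻¹ * u)⁻¹ * (𝓉 x ^ N * 𝓉 f ^ N1) =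
        u⁻¹ * (𝓉 x ^ (N + 1) * 𝓉 f ^ N1) := by rw [pow_succ']; group
    have e2 : 𝓉 x * (𝓉 x ^ N * 𝓉 f ^ N1) = 𝓉 x ^ (N + 1) * 𝓉 f ^ N1 := by
      rw [pow_succ']; group
    have h3 := len_mul_le (𝓉 x ^ N) (𝓉 f ^ N1)
    have h3' := len_pow_le (M := M) x N
    have h3'' := len_pow_le (M := M) f N1
    have h4 := len_gen_mul_le (M := M) x (𝓉 x ^ N * 𝓉 f ^ N1)
    rw [e2] at h4
    obtain ⟨N', N1', h5, h6⟩ := ih (u := (𝓉 x)⁻¹ * u) (by omega) (by rw [e1]; omega)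
    refine ⟨N' + 1, N1', ?_, by omega⟩
    rw [pow_succ', mul_assoc, ← h5]; group

omit hA in
theorem other_name {i j q : Fin n} (hij : i ≠ j) (hq : q = i ∨ q = j) :
    ∃ q', q' ≠ q ∧ (q' = i ∨ q' = j) ∧ ∀ x, x = i ∨ x = j → x = q ∨ x = q' := by
  rcases hq with rfl | rfl
  · exact ⟨j, hij.symm, Or.inr rfl, fun x h => h⟩
  · exact ⟨i, hij, Or.inl rfl, fun x h => h.symm⟩

theorem Power {i j : Fin n} (hp : Pr (mmM M) i j) {z g' : ArtinGroup n M} (hz : z ∈ Gij n M i j)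
    (hg : NF i j g') {d c : Letter n} (hd : FL d z) (hdn : d.1 = i ∨ d.1 = j)
    (hc : FL c (z * g')) (hci : c.1 ≠ i) (hcj : c.1 ≠ j) :
    ∃ t, 1 ≤ t ∧ z = 𝓉 d ^ t ∧ 𝓁 z = t := by
  obtain ⟨t, h1, h2, h3⟩ := strip_exists hA hd
  have hz' : (𝓉 d ^ t)⁻¹ * z ∈ Gij n M i j := mul_mem (inv_mem (pow_mem (gen_mem hdn) t)) hz
  by_cases hz1 : (𝓉 d ^ t)⁻¹ * z = 1
  · refine ⟨t, h1, (inv_mul_eq_one.1 hz1).symm, ?_⟩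
    rw [hz1, len_one] at h2; omega
  exfalso
  obtain ⟨q', k1, k2, k3⟩ := other_name hp.1 hdn
  obtain ⟨f, hf, hF⟩ := FL_Gij hA hp hz' hz1
  have hfq : f.1 = q' := by
    rcases k3 _ hf with h | h
    · exact absurd hF (h3 f h)
    · exact h
  have hcd : d.1 ≠ c.1 := by
    intro h; rw [← h] at hci hcj; tauto
  have hcq : q' ≠ c.1 := by
    intro h; rw [← h] at hci hcj; tauto
  have hdy : FL d (z * g') := (FL_coset hA hp hz hg hdn).2 hd
  refine DlemG hA hdy hc hcd k1 hcq ?_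
  refine ⟨d, t, rfl, h1, ?_, ?_, ?_⟩
  · rw [← mul_assoc, coset_min hA hp hg hz, coset_min hA hp hg hz']; omega
  · intro b hb
    rw [← mul_assoc, FL_coset hA hp hz' hg (by rw [hb]; exact hdn)]
    exact h3 b hb
  · rw [← hfq]
    apply SdG_one hA
    rw [← mul_assoc, FL_coset hA hp hz' hg hf]
    exact hF

end dihedral

/-! ## Part 7: uniqueness of the branching data -/

set_option linter.unusedSectionVars false

section branching

variable {n : ℕ} {M : Fin n → Fin n → ℕ∞}

local notation "𝓁" => ℓA n M
local notation "𝓉" => toGen n M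

/-- data describing a left divisor leaving `Gij` -/
structure Dat (i j : Fin n) (b : Letter n) (h g' h₁ : ArtinGroup n M) (c d : Letter n)
    (t : ℕ) : Prop where
  mem : h₁ ∈ Gij n M i j
  ci : c.1 ≠ i
  cj : c.1 ≠ j
  dn : d.1 = i ∨ d.1 = j
  tpos : 1 ≤ t
  heq : h = h₁ * 𝓉 d ^ t
  dlen : 𝓁 (𝓉 d ^ t) = t
  hlen : 𝓁 h = 𝓁 h₁ + t
  fc : FL c (𝓉 d ^ t * g')
  nb : ¬ FL b h₁

def H33 (M : Fin n → Fin n → ℕ∞) : Prop :=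
  ¬ ∃ i j k : Fin n, i ≠ j ∧ i ≠ k ∧ j ≠ k ∧ M i j = 3 ∧ M i k = 3 ∧ M j k < ⊤

variable (hA : Big M)
include hA

theorem Dat_sd {i j : Fin n} {b : Letter n} {h g' h₁ : ArtinGroup n M} {c d : Letter n} {t : ℕ}
    (hp : Pr (mmM M) i j) (hg : NF i j g') (D : Dat i j b h g' h₁ c d t) :
    FL d (𝓉 d ^ t * g') ∧ d.1 ≠ c.1 ∧
    Pr (mmM M) c.1 d.1 ∧ SdG (mmM M c.1 d.1 - 1) c.1 d.1 g' := by
  have e : (𝓉 d ^ t)⁻¹ * (𝓉 d ^ t * g') = g' := by group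
  have hl := coset_min hA hp hg (pow_mem (gen_mem D.dn) t)
  rw [D.dlen] at hl
  have hd : FL d (𝓉 d ^ t * g') := pow_FL hA D.tpos (by rw [e]; exact hl)
  have hne : d.1 ≠ c.1 := by
    rcases D.dn with h | h
    · rw [h]; exact D.ci.symm
    · rw [h]; exact D.cj.symm
  obtain ⟨h1, h2⟩ := two_endG hA hd D.fc (fun h => hne (by rw [h]))
  have hs : mmM M d.1 c.1 = mmM M c.1 d.1 := mmM_symm hA.1 _ _
  refine ⟨hd, hne, Pr_symm (mmM_symm hA.1) h1, ?_⟩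
  have h3 := h1.2
  obtain ⟨k, hk⟩ : ∃ k, mmM M d.1 c.1 = k + 1 := ⟨mmM M d.1 c.1 - 1, by omega⟩
  rw [hk] at h2
  have := SdG_strip hA h2 rfl D.tpos (by rw [e]; exact hl) (by
    rw [e]; intro b hb hF
    have := hg b hF
    rcases D.dn with h | h
    · exact this.1 (hb.trans h)
    · exact this.2 (hb.trans h))
  rw [e] at this
  rw [← hs, hk]; exact this

theorem Dat_q_aux {p q q' : Fin n} {g' : ArtinGroup n M} (hqq : q ≠ q') (hpq : p ≠ q)
    (hpq' : p ≠ q') (h3 : SdG 3 p q g') (h2 : SdG 2 p q' g') : False := by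
  obtain ⟨a, r, h1, h4, h5, h6, h7⟩ := h3
  have h8 := SdG_strip hA h2 h1 h4 h5 h6
  obtain ⟨x, hx, hx'⟩ := SdG_head hA h7
  obtain ⟨y, hy, hy'⟩ := SdG_head hA h8
  subst hx hy
  exact DlemG hA hx' hy' hqq hpq hpq' h7

theorem Dat_t_aux {b d : Letter n} {h h₁ h₂ : ArtinGroup n M} {t t' : ℕ} (hb : FL b h)
    (e1 : h = h₁ * 𝓉 d ^ t) (e2 : h = h₂ * 𝓉 d ^ t') (l1 : 𝓁 h = 𝓁 h₁ + t)
    (l2 : 𝓁 h = 𝓁 h₂ + t') (hnb : ¬ FL b h₁) (ht : t < t') : False := by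
  have hex : ∃ s, s < t ∧ ¬ FL b (h₁ * 𝓉 d ^ s) ∧ FL b (h₁ * 𝓉 d ^ (s + 1)) := by
    by_contra hc
    push Not at hc
    have : ∀ s, s ≤ t → ¬ FL b (h₁ * 𝓉 d ^ s) := by
      intro s
      induction s with
      | zero => intro _; simpa using hnb
      | succ s ih => intro hs; exact hc s (by omega) (ih (by omega))
    exact this t le_rfl (e1 ▸ hb)
  obtain ⟨s, hs, hn, hy⟩ := hex
  obtain ⟨k, rfl⟩ : ∃ k, t' = t + k + 1 := ⟨t' - t - 1, by omega⟩
  have e3 : h₁ = h₂ * 𝓉 d ^ (k + 1) := by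
    have : h₁ * 𝓉 d ^ t = h₂ * 𝓉 d ^ (k + 1) * 𝓉 d ^ t := by
      rw [← e1, e2, mul_assoc, ← pow_add]; congr 2; omega
    exact mul_right_cancel this
  have e4 : h₁ * 𝓉 d ^ s = h₂ * 𝓉 d ^ (k + s) * 𝓉 d := by
    rw [e3, mul_assoc, mul_assoc, ← pow_add, ← pow_succ]; congr 2; omega
  have sx : 𝓁 h₁ + s ≤ 𝓁 (h₁ * 𝓉 d ^ s) := by
    have a1 := len_mul_le (h₁ * 𝓉 d ^ s) (𝓉 d ^ (t - s))
    have a2 := len_pow_le (M := M) d (t - s)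
    have : h₁ * 𝓉 d ^ s * 𝓉 d ^ (t - s) = h := by
      rw [e1, mul_assoc, ← pow_add]; congr 2; omega
    rw [this] at a1; omega
  have sx1 : 𝓁 (h₁ * 𝓉 d ^ (s + 1)) ≤ 𝓁 h₁ + (s + 1) := by
    have a1 := len_mul_le h₁ (𝓉 d ^ (s + 1))
    have a2 := len_pow_le (M := M) d (s + 1)
    omega
  have sx' : 𝓁 (h₂ * 𝓉 d ^ (k + s)) ≤ 𝓁 h₂ + (k + s) := by
    have a1 := len_mul_le h₂ (𝓉 d ^ (k + s))
    have a2 := len_pow_le (M := M) d (k + s)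
    omega
  have w1 := not_FL_len hA hn
  have w2 := FL_len hA hy
  have f1 : FL d ((𝓉 b)⁻¹ * (h₁ * 𝓉 d ^ s))⁻¹ := by
    unfold FL
    rw [len_inv, ← mul_inv_rev, len_inv]
    have : (𝓉 b)⁻¹ * (h₁ * 𝓉 d ^ s) * 𝓉 d = (𝓉 b)⁻¹ * (h₁ * 𝓉 d ^ (s + 1)) := by
      rw [pow_succ]; group
    rw [this]; omega
  have f2 : FL (linv d) ((𝓉 b)⁻¹ * (h₁ * 𝓉 d ^ s))⁻¹ := by
    unfold FL
    rw [len_inv, ← mul_inv_rev, len_inv, toGen_linv]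
    have : (𝓉 b)⁻¹ * (h₁ * 𝓉 d ^ s) * (𝓉 d)⁻¹ = (𝓉 b)⁻¹ * (h₂ * 𝓉 d ^ (k + s)) := by
      rw [e4]; group
    rw [this]
    have a1 := len_mul_le (𝓉 b)⁻¹ (h₂ * 𝓉 d ^ (k + s))
    have a2 := len_gen_le (M := M) b
    rw [len_inv] at a1
    omega
  have := FL_same hA f1 f2 rfl
  have := congrArg Prod.snd this
  simp [linv] at this

theorem Dat_uniq (h33 : H33 M) {i j : Fin n} {b : Letter n} {h g' h₁ h₂ : ArtinGroup n M}
    {c d c' d' : Letter n} {t t' : ℕ}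
    (hp : Pr (mmM M) i j) (hg : NF i j g') (hb : FL b h)
    (D : Dat i j b h g' h₁ c d t) (D' : Dat i j b h g' h₂ c' d' t') :
    h₁ = h₂ ∧ c = c' ∧ d = d' ∧ t = t' := by
  obtain ⟨a1, a2, a3, a4⟩ := Dat_sd hA hp hg D
  obtain ⟨b1, b2, b3, b4⟩ := Dat_sd hA hp hg D'
  have a5 := a3.2
  have b5 := b3.2
  have hcc : c.1 = c'.1 := by
    by_contra hne
    have a6 : SdG 2 c.1 d.1 g' := SdG_mono (by omega) a4
    have b6 : SdG 1 c'.1 d'.1 g' := SdG_mono (by omega) b4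
    obtain ⟨x, hx, hx'⟩ := SdG_head hA a6
    obtain ⟨y, hy, hy'⟩ := SdG_head hA b6
    refine DlemG (i := d.1) hA hx' hy' (by rwa [hx, hy]) (by rwa [hx]) ?_ (by rwa [hx])
    rw [hy]
    rcases D.dn with h | h <;> rw [h]
    · exact D'.ci.symm
    · exact D'.cj.symm
  have hdd : d.1 = d'.1 := by
    by_contra hne
    rw [← hcc] at b2 b3 b4 b5
    have hM : M d.1 d'.1 < ⊤ := by
      have : M i j < ⊤ := by rw [M_of_Pr hp]; exact WithTop.coe_lt_top _
      rcases D.dn with h | h <;> rcases D'.dn with h' | h' <;> rw [h, h'] at hne ⊢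
      · exact absurd rfl hne
      · exact this
      · rw [hA.1]; exact this
      · exact absurd rfl hne
    have h4 : 4 ≤ mmM M c.1 d.1 ∨ 4 ≤ mmM M c.1 d'.1 := by
      by_contra hc
      refine h33 ⟨c.1, d.1, d'.1, a2.symm, b2.symm, hne, ?_, ?_, hM⟩
      · rw [M_of_Pr a3, show mmM M c.1 d.1 = 3 by omega]; rfl
      · rw [M_of_Pr b3, show mmM M c.1 d'.1 = 3 by omega]; rfl
    rcases h4 with h4 | h4
    · exact Dat_q_aux hA hne a2.symm b2.symm (SdG_mono (by omega) a4) (SdG_mono (by omega) b4)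
    · exact Dat_q_aux hA (Ne.symm hne) b2.symm a2.symm (SdG_mono (by omega) b4)
        (SdG_mono (by omega) a4)
  have key : ∀ {h₁ : ArtinGroup n M} {c d : Letter n} {t : ℕ}, Dat i j b h g' h₁ c d t →
      FL (linv d) h⁻¹ := by
    intro h₁ c d t D
    unfold FL
    rw [len_inv, ← mul_inv_rev, len_inv, toGen_linv]
    have h1 := D.tpos
    obtain ⟨t, rfl⟩ : ∃ s, t = s + 1 := ⟨t - 1, by omega⟩
    have e : h * (𝓉 d)⁻¹ = h₁ * 𝓉 d ^ t := by
      rw [D.heq, pow_succ]; group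
    rw [e, D.hlen]
    have a1 := len_mul_le h₁ (𝓉 d ^ t)
    have a2 := len_pow_le (M := M) d t
    omega
  have hd : d = d' := by
    have := FL_same hA (key D) (key D') hdd
    rw [← linv_linv d, this, linv_linv]
  subst hd
  have ht : t = t' := by
    rcases lt_trichotomy t t' with h | h | h
    · exact (Dat_t_aux hA hb D.heq D'.heq D.hlen D'.hlen D.nb h).elim
    · exact h
    · exact (Dat_t_aux hA hb D'.heq D.heq D'.hlen D.hlen D'.nb h).elim
  subst ht
  refine ⟨mul_right_cancel (D.heq.symm.trans D'.heq), FL_same hA D.fc D'.fc hcc, rfl, rfl⟩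

end branching

/-! ## Part 8: decrease of the right dihedral divisor -/

set_option linter.unusedSectionVars false

section decrease

variable {n : ℕ} {M : Fin n → Fin n → ℕ∞}

local notation "𝓁" => ℓA n M
local notation "𝓉" => toGen n M

variable (hA : Big M)
include hA

theorem two_pow_contra {a b F d : Letter n} {A B : ℕ} (hl : 𝓁 (𝓉 F ^ A * 𝓉 d ^ B) = A + B)
    (ha : FL a (𝓉 F ^ A * 𝓉 d ^ B)) (hb : FL b (𝓉 F ^ A * 𝓉 d ^ B)) : a = b := by
  by_cases h : A = 0
  · subst h
    rw [pow_zero, one_mul] at *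
    rw [zero_add] at hl
    rw [FP hA hl ha, FP hA hl hb]
  · rw [TS hA hl (by omega) ha, TS hA hl (by omega) hb]

theorem E_bad {i j : Fin n} {a b : Letter n} {h g' h₁ x e : ArtinGroup n M} {c d : Letter n}
    {t : ℕ} (D : Dat i j b h g' h₁ c d t) (ha : FL a h) (hb : FL b h) (hab : a ≠ b)
    (hx : x = e * h₁) (hxl : 𝓁 x = 𝓁 e + 𝓁 h₁) {f₀ f₁ : Letter n} {N N1 : ℕ}
    (hw : x⁻¹ = 𝓉 f₀ ^ N * 𝓉 f₁ ^ N1) (hwl : 𝓁 x = N + N1) (hf : f₀.1 = d.1) : False := by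
  have hl : 𝓁 (𝓉 f₀ ^ N * 𝓉 f₁ ^ N1) = N + N1 := by rw [← hw, len_inv, hwl]
  obtain ⟨N', N1', h1, h2⟩ := LD2 hA (u := h₁⁻¹) hl (by
    rw [← hw, hx, inv_inv, mul_inv_rev, mul_inv_cancel_left, len_inv, len_inv]; omega)
  rw [len_inv] at h2
  have h3 : h₁ = 𝓉 (linv f₁) ^ N1' * 𝓉 (linv f₀) ^ N' := by
    rw [← inv_inv h₁, h1, toGen_linv, toGen_linv, mul_inv_rev, inv_pow, inv_pow]
  have h4 : ∃ B, h = 𝓉 (linv f₁) ^ N1' * 𝓉 d ^ B ∧ 𝓁 h = N1' + B := by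
    by_cases h0 : N' = 0
    · subst h0
      refine ⟨t, ?_, ?_⟩
      · rw [D.heq, h3, pow_zero, mul_one]
      · rw [D.hlen]; omega
    · have l1 := len_mul_le (𝓉 (linv f₁) ^ N1') (𝓉 (linv f₀) ^ N' * 𝓉 d ^ t)
      rw [← mul_assoc, ← h3, ← D.heq, D.hlen] at l1
      have l2 := len_pow_le (M := M) (linv f₁) N1'
      have l3 := len_mul_le (𝓉 (linv f₀) ^ N') (𝓉 d ^ t)
      have l4 := len_pow_le (M := M) (linv f₀) N'
      have l5 := len_pow_le (M := M) d t
      have := same_name hA (e := linv f₀) (f := d) (N := N') (N1 := t) (by omega) (by omega)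
        D.tpos hf.symm
      refine ⟨N' + t, ?_, ?_⟩
      · rw [D.heq, h3, ← this, mul_assoc, pow_add]
      · rw [D.hlen]; omega
  obtain ⟨B, h5, h6⟩ := h4
  rw [h5] at ha hb h6
  exact hab (two_pow_contra hA h6 ha hb)

theorem E_lem {i j : Fin n} {a b : Letter n} {h g' h₁ x e y z : ArtinGroup n M} {c d : Letter n}
    {t : ℕ} (hp : Pr (mmM M) i j) (hcd : Pr (mmM M) c.1 d.1)
    (D : Dat i j b h g' h₁ c d t) (ha : FL a h) (hb : FL b h) (hab : a ≠ b)
    (hx : x = e * h₁) (hxl : 𝓁 x = 𝓁 e + 𝓁 h₁) (he : e ∈ Gij n M i j) (h1 : h₁ ≠ 1)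
    (hy : NF i j y) (hz : IsMaxLD n M c.1 d.1 (x⁻¹ * y) z) : 𝓁 z < 𝓁 x := by
  have hxm : x⁻¹ ∈ Gij n M i j := by rw [hx]; exact inv_mem (mul_mem he D.mem)
  have hxpos : 0 < 𝓁 x := by
    have : 𝓁 h₁ ≠ 0 := fun h => h1 (len_eq_zero h)
    omega
  have hx1 : x⁻¹ ≠ 1 := by
    intro h
    rw [← len_inv, h, len_one] at hxpos; omega
  have bad := fun f₀ f₁ N N1 => E_bad hA (f₀ := f₀) (f₁ := f₁) (N := N) (N1 := N1) D ha hb hab hx hxl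
  by_cases cA : ∃ c' : Letter n, c'.1 = c.1 ∧ FL c' (x⁻¹ * y)
  · obtain ⟨c', hc', hF⟩ := cA
    obtain ⟨e0, hn, he0⟩ := FL_Gij hA hp hxm hx1
    obtain ⟨N, hN, hN1, hN2⟩ := Power hA hp hxm hy he0 hn hF (by rw [hc']; exact D.ci)
      (by rw [hc']; exact D.cj)
    rw [len_inv] at hN2
    exact (bad d e0 0 N (by rw [pow_zero, one_mul, hN1]) (by omega) rfl).elim
  push Not at cA
  by_cases cB : ∃ d' : Letter n, d'.1 = d.1 ∧ FL d' (x⁻¹ * y)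
  · obtain ⟨e0, hn, hF⟩ := cB
    have hn' : e0.1 = i ∨ e0.1 = j := by rw [hn]; exact D.dn
    rw [FL_coset hA hp hxm hy hn'] at hF
    obtain ⟨N, hN, hN1, hN2⟩ := strip_exists hA hF
    rw [len_inv] at hN1
    have hxm' : (𝓉 e0 ^ N)⁻¹ * x⁻¹ ∈ Gij n M i j :=
      mul_mem (inv_mem (pow_mem (gen_mem hn') N)) hxm
    by_cases hx2 : (𝓉 e0 ^ N)⁻¹ * x⁻¹ = 1
    · refine (bad e0 d N 0 ?_ ?_ hn).elim
      · rw [pow_zero, mul_one]; exact (inv_mul_eq_one.1 hx2).symm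
      · rw [hx2, len_one] at hN1; omega
    by_cases cC : ∃ c' : Letter n, c'.1 = c.1 ∧ FL c' ((𝓉 e0 ^ N)⁻¹ * x⁻¹ * y)
    · obtain ⟨c', hc', hF'⟩ := cC
      obtain ⟨f, hfn, hf⟩ := FL_Gij hA hp hxm' hx2
      obtain ⟨N1, k1, k2, k3⟩ := Power hA hp hxm' hy hf hfn hF' (by rw [hc']; exact D.ci)
        (by rw [hc']; exact D.cj)
      refine (bad e0 f N N1 ?_ ?_ hn).elim
      · rw [← k2]; group
      · omega
    push Not at cC
    have hNF : NF c.1 d.1 ((𝓉 e0 ^ N)⁻¹ * (x⁻¹ * y)) := by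
      intro s hs
      rw [← mul_assoc] at hs
      refine ⟨fun h => cC s h hs, fun h => ?_⟩
      rw [FL_coset hA hp hxm' hy (by rw [h]; exact D.dn)] at hs
      exact hN2 s (by rw [h, hn]) hs
    have := LD_char hA hcd hz (pow_mem (gen_mem (Or.inr hn)) N) hNF
    rw [this]
    have q := len_pow_le (M := M) e0 N
    have : 𝓁 ((𝓉 e0 ^ N)⁻¹ * x⁻¹) ≠ 0 := fun h => hx2 (len_eq_zero h)
    omega
  · push Not at cB
    have hNF : NF c.1 d.1 (1⁻¹ * (x⁻¹ * y)) := by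
      intro s hs
      rw [inv_one, one_mul] at hs
      exact ⟨fun h => cA s h hs, fun h => cB s h hs⟩
    have := LD_char hA hcd hz (one_mem _) hNF
    rw [this, len_one]; exact hxpos

end decrease

section counting

variable {n : ℕ} {M : Fin n → Fin n → ℕ∞}

local notation "𝓁" => ℓA n M
local notation "𝓉" => toGen n M

/-- the set counted in the induction -/
def Sset (LD RD : Fin n → Fin n → ArtinGroup n M → ArtinGroup n M) (H g : ArtinGroup n M)
    (a : Letter n) (k : ℕ) : Set (ArtinGroup n M) :=
  {r | 𝓁 r = k ∧ 𝓁 r + 𝓁 (r⁻¹ * g) = 𝓁 g ∧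
    (∀ i j, i ≠ j → PijMem n M i j (RD i j (H * r)) (LD i j (r⁻¹ * g))) ∧ ∀ c, FL c r ↔ c = a}

variable (hA : Big M)

omit hA in
theorem geo_left {H r g : ArtinGroup n M} (h : 𝓁 (H * g) = 𝓁 H + 𝓁 g)
    (hd : 𝓁 r + 𝓁 (r⁻¹ * g) = 𝓁 g) : 𝓁 (H * r) = 𝓁 H + 𝓁 r := by
  have h1 := len_mul_le H r
  have h2 := len_mul_le (H * r) (r⁻¹ * g)
  have e : H * r * (r⁻¹ * g) = H * g := by group
  rw [e] at h2; omega

include hA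

theorem RD_char {i j : Fin n} (hp : Pr (mmM M) i j) {H r e z : ArtinGroup n M}
    (he : IsMaxRD n M i j H e) (hr : r ∈ Gij n M i j) (hz : IsMaxRD n M i j (H * r) z) :
    z = e * r := by
  have h1 := MaxLD_NF hA (RD_LD he)
  have := LD_char hA hp (RD_LD hz) (inv_mem (mul_mem he.1 hr)) (by
    have e1 : (e * r)⁻¹⁻¹ * (H * r)⁻¹ = e⁻¹⁻¹ * H⁻¹ := by group
    rw [e1]; exact h1)
  exact inv_injective this

theorem RD_len {i j : Fin n} (hp : Pr (mmM M) i j) {H r e : ArtinGroup n M}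
    (he : IsMaxRD n M i j H e) (hr : r ∈ Gij n M i j) (hl : 𝓁 (H * r) = 𝓁 H + 𝓁 r) :
    𝓁 (e * r) = 𝓁 e + 𝓁 r := by
  have h1 := MaxLD_NF hA (RD_LD he)
  have h2 := coset_min hA hp h1 (inv_mem (mul_mem he.1 hr))
  have h3 := coset_min hA hp h1 (inv_mem he.1)
  have e1 : (e * r)⁻¹ * (e⁻¹⁻¹ * H⁻¹) = (H * r)⁻¹ := by group
  have e2 : e⁻¹ * (e⁻¹⁻¹ * H⁻¹) = H⁻¹ := by group
  rw [e1, len_inv, len_inv] at h2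
  rw [e2, len_inv, len_inv] at h3
  omega

theorem S0_bound {LD RD : Fin n → Fin n → ArtinGroup n M → ArtinGroup n M}
    (hLD : ∀ i j : Fin n, i ≠ j → ∀ g, IsMaxLD n M i j g (LD i j g))
    (hRD : ∀ i j : Fin n, i ≠ j → ∀ g, IsMaxRD n M i j g (RD i j g))
    {B : ℕ → ℝ}
    (hP' : ∀ i j : Fin n, i ≠ j → ∀ h : ArtinGroup n M, h ∈ Gij n M i j → ∀ k' : ℕ,
      {h₁ : ArtinGroup n M | ℓA n M h₁ = k' ∧ PijMem n M i j h₁ (h₁⁻¹ * h)}.Finite ∧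
      ({h₁ : ArtinGroup n M | ℓA n M h₁ = k' ∧ PijMem n M i j h₁ (h₁⁻¹ * h)}.ncard : ℝ) ≤ B k')
    {i j : Fin n} (hp : Pr (mmM M) i j) {H g : ArtinGroup n M} {a : Letter n} {k : ℕ}
    (hHg : 𝓁 (H * g) = 𝓁 H + 𝓁 g) :
    (Sset LD RD H g a k ∩ Gij n M i j).Finite ∧
    ((Sset LD RD H g a k ∩ Gij n M i j).ncard : ℝ) ≤ B (𝓁 (RD i j H) + k) := by
  have hij := hp.1
  obtain ⟨hf, hc⟩ := hP' i j hij (RD i j H * LD i j g) (mul_mem (hRD i j hij H).1 (hLD i j hij g).1)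
    (𝓁 (RD i j H) + k)
  have hinj : Set.InjOn (fun r => RD i j H * r) (Sset LD RD H g a k ∩ Gij n M i j) :=
    fun x _ y _ h => mul_left_cancel h
  have hmaps : ∀ r ∈ Sset LD RD H g a k ∩ Gij n M i j, RD i j H * r ∈
      {h₁ : ArtinGroup n M | ℓA n M h₁ = 𝓁 (RD i j H) + k ∧
        PijMem n M i j h₁ (h₁⁻¹ * (RD i j H * LD i j g))} := by
    rintro r ⟨⟨h1, h2, h3, h4⟩, hr⟩
    refine ⟨?_, ?_⟩
    · rw [RD_len hA hp (hRD i j hij H) hr (geo_left hHg h2), h1]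
    · have e1 := RD_char hA hp (hRD i j hij H) hr (hRD i j hij (H * r))
      have e2 : LD i j (r⁻¹ * g) = r⁻¹ * LD i j g :=
        LD_char hA hp (hLD i j hij _) (mul_mem (inv_mem hr) (hLD i j hij g).1) (by
          have : (r⁻¹ * LD i j g)⁻¹ * (r⁻¹ * g) = (LD i j g)⁻¹ * g := by group
          rw [this]; exact MaxLD_NF hA (hLD i j hij g))
      have e3 : (RD i j H * r)⁻¹ * (RD i j H * LD i j g) = r⁻¹ * LD i j g := by group
      have := h3 i j hij
      rw [e1, e2] at this
      rw [e3]; exact this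
  refine ⟨Set.Finite.of_finite_image (hf.subset ?_) hinj, ?_⟩
  · rintro _ ⟨r, hr, rfl⟩
    exact hmaps r hr
  · refine le_trans ?_ hc
    exact_mod_cast Set.ncard_le_ncard_of_injOn _ hmaps hinj hf

theorem S1_data (h33 : H33 M) {LD RD : Fin n → Fin n → ArtinGroup n M → ArtinGroup n M}
    (hLD : ∀ i j : Fin n, i ≠ j → ∀ g, IsMaxLD n M i j g (LD i j g))
    {a b : Letter n} {H g r : ArtinGroup n M} {k : ℕ}
    (ha : FL a g) (hb : FL b g) (hab : a ≠ b)
    (hr : r ∈ Sset LD RD H g a k) (hrG : r ∉ Gij n M a.1 b.1) :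
    ∃ h₁ c d t, Dat a.1 b.1 b (LD a.1 b.1 g) ((LD a.1 b.1 g)⁻¹ * g) h₁ c d t ∧ h₁ ≠ 1 ∧
      𝓁 h₁ ≤ k ∧ 𝓁 h₁ + 𝓁 (h₁⁻¹ * g) = 𝓁 g ∧
      h₁⁻¹ * r ∈ Sset LD RD (H * h₁) (h₁⁻¹ * g) c (k - 𝓁 h₁) := by
  obtain ⟨hp, -⟩ := two_endG hA ha hb hab
  have hij := hp.1
  obtain ⟨hr1, hr2, hr3, hr4⟩ := hr
  have hM := hLD a.1 b.1 hij g
  set h := LD a.1 b.1 g with hh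
  have hg' := MaxLD_NF hA hM
  have hM1 := hLD a.1 b.1 hij r
  set h₁ := LD a.1 b.1 r with hh1
  have hr' := MaxLD_NF hA hM1
  have l1 : 𝓁 h₁ + 𝓁 (h₁⁻¹ * r) = 𝓁 r := hM1.2.1
  have l2 : 𝓁 h + 𝓁 (h⁻¹ * g) = 𝓁 g := hM.2.1
  have ey : (h₁⁻¹ * r) * (r⁻¹ * g) = h₁⁻¹ * g := by group
  have l3 := len_mul_le (h₁⁻¹ * r) (r⁻¹ * g)
  rw [ey] at l3
  have l4 := len_mul_le h₁ (h₁⁻¹ * g)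
  rw [mul_inv_cancel_left] at l4
  have hbh : FL b h := by
    have : FL b (h * (h⁻¹ * g)) := by rw [mul_inv_cancel_left]; exact hb
    exact (FL_coset hA hp hM.1 hg' (Or.inr rfl)).1 this
  have hnb : ¬ FL b h₁ := fun hF => hab ((hr4 b).1 (FL_left hF l1)).symm
  have hah : FL a h₁ := by
    have : FL a (h₁ * (h₁⁻¹ * r)) := by rw [mul_inv_cancel_left]; exact (hr4 a).2 rfl
    exact (FL_coset hA hp hM1.1 hr' (Or.inl rfl)).1 this
  have hne : h₁ ≠ 1 := by rintro h0; rw [h0] at hah; exact not_FL_one _ hah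
  have hz : h₁⁻¹ * h ∈ Gij n M a.1 b.1 := mul_mem (inv_mem hM1.1) hM.1
  have hz1 : h₁⁻¹ * h ≠ 1 := by
    intro h0
    have := inv_mul_eq_one.1 h0
    rw [this] at hnb; exact hnb hbh
  have hzl := coset_min hA hp hg' hz
  have ez : h₁⁻¹ * h * (h⁻¹ * g) = h₁⁻¹ * g := by group
  obtain ⟨d, hdn, hd⟩ := FL_Gij hA hp hz hz1
  have key : ∀ c, FL c (h₁⁻¹ * r) → ∃ t, Dat a.1 b.1 b h (h⁻¹ * g) h₁ c d t := by
    intro c hc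
    obtain ⟨hci, hcj⟩ := hr' c hc
    have hcy : FL c (h₁⁻¹ * g) := by
      rw [← ey]; exact FL_of_mul hc (by rw [ey]; omega)
    obtain ⟨t, t1, t2, t3⟩ := Power hA hp hz hg' hd hdn (by rw [ez]; exact hcy) hci hcj
    refine ⟨t, hM1.1, hci, hcj, hdn, t1, ?_, ?_, ?_, ?_, hnb⟩
    · rw [← t2]; group
    · rw [← t2, t3]
    · rw [ez] at hzl; omega
    · rw [← t2, ez]; exact hcy
  have hr1' : h₁⁻¹ * r ≠ 1 := by
    intro h0
    have := inv_mul_eq_one.1 h0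
    rw [← this] at hrG; exact hrG hM1.1
  obtain ⟨c, hc⟩ := exists_FL hA hr1'
  obtain ⟨t, D⟩ := key c hc
  refine ⟨h₁, c, d, t, D, hne, by omega, by omega, by omega, ?_, ?_, ?_⟩
  · have : (h₁⁻¹ * r)⁻¹ * (h₁⁻¹ * g) = r⁻¹ * g := by group
    rw [this]; omega
  · intro i j hij
    have e1 : (h₁⁻¹ * r)⁻¹ * (h₁⁻¹ * g) = r⁻¹ * g := by group
    have e2 : H * h₁ * (h₁⁻¹ * r) = H * r := by group
    rw [e1, e2]; exact hr3 i j hij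
  · intro c'
    constructor
    · intro hc'
      obtain ⟨t', D'⟩ := key c' hc'
      exact (Dat_uniq hA h33 hp hg' hbh D' D).2.1
    · rintro rfl; exact hc

theorem main_count (h33 : H33 M) {LD RD : Fin n → Fin n → ArtinGroup n M → ArtinGroup n M}
    (hLD : ∀ i j : Fin n, i ≠ j → ∀ g, IsMaxLD n M i j g (LD i j g))
    (hRD : ∀ i j : Fin n, i ≠ j → ∀ g, IsMaxRD n M i j g (RD i j g))
    {B : ℕ → ℝ} (hB : ∀ k, 0 ≤ B k)
    (hP' : ∀ i j : Fin n, i ≠ j → ∀ h : ArtinGroup n M, h ∈ Gij n M i j → ∀ k' : ℕ,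
      {h₁ : ArtinGroup n M | ℓA n M h₁ = k' ∧ PijMem n M i j h₁ (h₁⁻¹ * h)}.Finite ∧
      ({h₁ : ArtinGroup n M | ℓA n M h₁ = k' ∧ PijMem n M i j h₁ (h₁⁻¹ * h)}.ncard : ℝ) ≤ B k')
    (k : ℕ) : ∀ (a b : Letter n) (H g : ArtinGroup n M),
    FL a g → FL b g → a ≠ b → 𝓁 (H * g) = 𝓁 H + 𝓁 g →
    (Sset LD RD H g a k).Finite ∧ ((Sset LD RD H g a k).ncard : ℝ) ≤
      ∑ l ∈ Finset.Icc 1 (𝓁 (RD a.1 b.1 H) + k), B l := by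
  induction k using Nat.strong_induction_on with
  | _ k ih =>
  intro a b H g ha hb hab hHg
  have hsum : ∀ K, 0 ≤ ∑ l ∈ Finset.Icc 1 K, B l := fun K => Finset.sum_nonneg fun l _ => hB l
  rcases Nat.eq_zero_or_pos k with hk | hk
  · have : Sset LD RD H g a k = ∅ := by
      ext r
      simp only [Set.mem_empty_iff_false, iff_false]
      rintro ⟨h1, -, -, h4⟩
      have := len_eq_zero (h1.trans hk)
      subst this
      exact not_FL_one a ((h4 a).2 rfl)
    rw [this]
    refine ⟨Set.finite_empty, ?_⟩
    rw [Set.ncard_empty, Nat.cast_zero]; exact hsum _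
  obtain ⟨hp, -⟩ := two_endG hA ha hb hab
  have hij := hp.1
  obtain ⟨f0, b0⟩ := S0_bound (a := a) (k := k) hA hLD hRD hP' hp hHg
  have h1 : (Sset LD RD H g a k \ Gij n M a.1 b.1).Finite ∧
      ((Sset LD RD H g a k \ Gij n M a.1 b.1).ncard : ℝ) ≤
        ∑ l ∈ Finset.Icc 1 (𝓁 (RD a.1 b.1 H) + k - 1), B l := by
    rcases Set.eq_empty_or_nonempty (Sset LD RD H g a k \ Gij n M a.1 b.1) with he | ⟨r0, hr0⟩
    · rw [he]
      refine ⟨Set.finite_empty, ?_⟩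
      rw [Set.ncard_empty, Nat.cast_zero]; exact hsum _
    obtain ⟨h₁, c, d, t, D, hne, hk1, hl1, -⟩ := S1_data hA h33 hLD ha hb hab hr0.1 hr0.2
    have hM := hLD a.1 b.1 hij g
    have hg' := MaxLD_NF hA hM
    have hFh : ∀ s : Letter n, s.1 = a.1 ∨ s.1 = b.1 → FL s g → FL s (LD a.1 b.1 g) := by
      intro s hs hF
      have : FL s (LD a.1 b.1 g * ((LD a.1 b.1 g)⁻¹ * g)) := by
        rw [mul_inv_cancel_left]; exact hF
      exact (FL_coset hA hp hM.1 hg' hs).1 this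
    have hah := hFh a (Or.inl rfl) ha
    have hbh := hFh b (Or.inr rfl) hb
    have hsub : Sset LD RD H g a k \ Gij n M a.1 b.1 ⊆
        (fun s => h₁ * s) '' Sset LD RD (H * h₁) (h₁⁻¹ * g) c (k - 𝓁 h₁) := by
      rintro r ⟨hr, hrG⟩
      obtain ⟨h₁', c', d', t', D', -, -, -, hm⟩ := S1_data hA h33 hLD ha hb hab hr hrG
      obtain ⟨rfl, rfl, -, -⟩ := Dat_uniq hA h33 hp hg' hbh D D'
      exact ⟨h₁⁻¹ * r, hm, by simp⟩
    obtain ⟨dF, dne, dP, -⟩ := Dat_sd hA hp hg' D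
    have ey : 𝓉 d ^ t * ((LD a.1 b.1 g)⁻¹ * g) = h₁⁻¹ * g := by
      have e0 : h₁⁻¹ * LD a.1 b.1 g = 𝓉 d ^ t := by
        conv_lhs => rw [D.heq]
        group
      rw [← e0]; group
    have hh1pos : 𝓁 h₁ ≠ 0 := fun h => hne (len_eq_zero h)
    have hHh := geo_left hHg hl1
    obtain ⟨fI, bI⟩ := ih (k - 𝓁 h₁) (by omega) c d (H * h₁) (h₁⁻¹ * g)
      (by rw [← ey]; exact D.fc) (by rw [← ey]; exact dF) (fun h => dne (by rw [h]))
      (by rw [mul_assoc, mul_inv_cancel_left, hHg, hHh]; omega)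
    have hE : 𝓁 (RD c.1 d.1 (H * h₁)) < 𝓁 (RD a.1 b.1 H) + 𝓁 h₁ := by
      have he := hRD a.1 b.1 hij H
      have hl := RD_len hA hp he D.mem hHh
      have := E_lem hA (x := RD a.1 b.1 H * h₁) (y := (RD a.1 b.1 H)⁻¹⁻¹ * H⁻¹)
        (z := (RD c.1 d.1 (H * h₁))⁻¹) hp dP D hah hbh hab rfl hl he.1 hne
        (MaxLD_NF hA (RD_LD he)) (by
          have e1 : (RD a.1 b.1 H * h₁)⁻¹ * ((RD a.1 b.1 H)⁻¹⁻¹ * H⁻¹) = (H * h₁)⁻¹ := by group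
          rw [e1]; exact RD_LD (hRD c.1 d.1 (Ne.symm dne) _))
      rw [len_inv, hl] at this
      exact this
    refine ⟨(fI.image _).subset hsub, ?_⟩
    calc ((Sset LD RD H g a k \ Gij n M a.1 b.1).ncard : ℝ)
        ≤ ((Sset LD RD (H * h₁) (h₁⁻¹ * g) c (k - 𝓁 h₁)).ncard : ℝ) := by
          exact_mod_cast (Set.ncard_le_ncard hsub (fI.image _)).trans (Set.ncard_image_le fI)
      _ ≤ _ := bI
      _ ≤ _ := Finset.sum_le_sum_of_subset_of_nonneg
          (Finset.Icc_subset_Icc le_rfl (by omega)) (fun l _ _ => hB l)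
  obtain ⟨f1, b1⟩ := h1
  have hun := Set.inter_union_sdiff (Sset LD RD H g a k) (Gij n M a.1 b.1 : Set (ArtinGroup n M))
  refine ⟨by rw [← hun]; exact f0.union f1, ?_⟩
  have hle := Set.ncard_union_le (Sset LD RD H g a k ∩ Gij n M a.1 b.1)
    (Sset LD RD H g a k \ Gij n M a.1 b.1)
  rw [hun] at hle
  obtain ⟨K, hK⟩ : ∃ K, 𝓁 (RD a.1 b.1 H) + k = K + 1 := ⟨𝓁 (RD a.1 b.1 H) + k - 1, by omega⟩
  rw [hK] at b0 b1 ⊢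
  rw [Finset.sum_Icc_succ_top (by omega)]
  have : ((Sset LD RD H g a k).ncard : ℝ) ≤
      ((Sset LD RD H g a k ∩ Gij n M a.1 b.1).ncard : ℝ) +
      ((Sset LD RD H g a k \ Gij n M a.1 b.1).ncard : ℝ) := by exact_mod_cast hle
  rw [Nat.add_sub_cancel] at b1
  linarith

omit hA in
/-- first letters of geodesic words -/
theorem FL_of_geo {a : Letter n} {v : List (Letter n)} (hv : IsGeodesic n M v)
    (ha : v.head? = some a) : FL a (wordElt n M v) := by
  cases v with
  | nil => simp at ha
  | cons x v =>
    simp only [List.head?_cons, Option.some.injEq] at ha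
    subst ha
    have h1 : 𝓁 (wordElt n M (x :: v)) = (x :: v).length := hv
    have h2 := len_le (M := M) v
    unfold FL
    rw [h1, wordElt_cons, inv_mul_cancel_left, List.length_cons]; omega

theorem geo_of_FL {a : Letter n} {g : ArtinGroup n M} (ha : FL a g) :
    ∃ u, IsGeodesic n M (a :: u) ∧ wordElt n M (a :: u) = g := by
  obtain ⟨u, h1, h2⟩ := exists_geo ((𝓉 a)⁻¹ * g)
  have e : wordElt n M (a :: u) = g := by rw [wordElt_cons, h1, mul_inv_cancel_left]
  refine ⟨u, ?_, e⟩
  show 𝓁 (wordElt n M (a :: u)) = _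
  rw [e, FL_len hA ha, h2, List.length_cons]

end counting

open Finset in
/-- **Lemma.** Suppose `P'` bounds the number of permissible left divisors of given
length in each dihedral subgroup `G(i,j)`. If `g` has geodesic representatives `v, w`
with different first letters, then the number of permissible left divisors `g₁` of `g`
of length `k` all of whose geodesic representatives begin with the first letter of `v`
is at most `Σ_{j=1}^{k} P'(j)`. -/
theorem count_left_divisors_with_fixed_first_letter
    (n : ℕ) (hn : 2 ≤ n) (M : Fin n → Fin n → ℕ∞)
    (hsymm : ∀ i j, M i j = M j i)
    (hdiag : ∀ i, M i i = 1)
    (hlarge : ∀ i j, i ≠ j → 3 ≤ M i j)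
    (h33m : ¬ ∃ i j k : Fin n, i ≠ j ∧ i ≠ k ∧ j ≠ k ∧
        M i j = 3 ∧ M i k = 3 ∧ M j k < ⊤)
    (LD RD : Fin n → Fin n → ArtinGroup n M → ArtinGroup n M)
    (hLD : ∀ i j : Fin n, i ≠ j → ∀ g, IsMaxLD n M i j g (LD i j g))
    (hRD : ∀ i j : Fin n, i ≠ j → ∀ g, IsMaxRD n M i j g (RD i j g))
    (P' : Polynomial ℝ) (hP'c : ∀ c : ℕ, 0 ≤ P'.coeff c)
    (hP' : ∀ i j : Fin n, i ≠ j → ∀ h : ArtinGroup n M, h ∈ Gij n M i j → ∀ k' : ℕ,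
      {h₁ : ArtinGroup n M | ℓA n M h₁ = k' ∧ PijMem n M i j h₁ (h₁⁻¹ * h)}.Finite ∧
      ({h₁ : ArtinGroup n M | ℓA n M h₁ = k' ∧ PijMem n M i j h₁ (h₁⁻¹ * h)}.ncard : ℝ) ≤
        P'.eval (k' : ℝ))
    (g : ArtinGroup n M) (v w : List (Letter n))
    (hv : IsGeodesic n M v) (hvg : wordElt n M v = g)
    (hw : IsGeodesic n M w) (hwg : wordElt n M w = g)
    (av bw : Letter n) (hav : v.head? = some av) (hbw : w.head? = some bw)
    (hdiff : av ≠ bw)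
    (k : ℕ) (hk : k ≤ ℓA n M g) :
    {g₁ : ArtinGroup n M | ℓA n M g₁ = k ∧ PMem n M LD RD (g₁, g₁⁻¹ * g) ∧
        ∀ u : List (Letter n), IsGeodesic n M u → wordElt n M u = g₁ →
          u.head? = some av}.Finite ∧
    ({g₁ : ArtinGroup n M | ℓA n M g₁ = k ∧ PMem n M LD RD (g₁, g₁⁻¹ * g) ∧
        ∀ u : List (Letter n), IsGeodesic n M u → wordElt n M u = g₁ →
          u.head? = some av}.ncard : ℝ) ≤
      ∑ jj ∈ Finset.Icc 1 k, P'.eval (jj : ℝ) := by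
  have hA : Big M := ⟨hsymm, hlarge⟩
  have ha : FL av g := hvg ▸ FL_of_geo hv hav
  have hb : FL bw g := hwg ▸ FL_of_geo hw hbw
  have hij := (two_endG hA ha hb hdiff).1.1
  obtain ⟨hf, hc⟩ := main_count hA h33m hLD hRD (B := fun l => P'.eval (l : ℝ)) (fun l => by
      rw [Polynomial.eval_eq_sum_range]
      exact Finset.sum_nonneg fun c _ => mul_nonneg (hP'c c) (by positivity)) hP' k av bw 1 g
    ha hb hdiff (by rw [one_mul, len_one, zero_add])
  have hR : ℓA n M (RD av.1 bw.1 1) = 0 := by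
    have h1 : ℓA n M (1 * (RD av.1 bw.1 1)⁻¹) + ℓA n M (RD av.1 bw.1 1) = ℓA n M 1 :=
      (hRD av.1 bw.1 hij 1).2.1
    rw [len_one] at h1
    omega
  rw [hR, zero_add] at hc
  have hsub : {g₁ : ArtinGroup n M | ℓA n M g₁ = k ∧ PMem n M LD RD (g₁, g₁⁻¹ * g) ∧
        ∀ u : List (Letter n), IsGeodesic n M u → wordElt n M u = g₁ →
          u.head? = some av} ⊆ Sset LD RD 1 g av k := by
    rintro r ⟨h1, ⟨h2, h3⟩, h4⟩
    have huniq : ∀ c, FL c r → c = av := by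
      intro c hc
      obtain ⟨u, u1, u2⟩ := geo_of_FL hA hc
      simpa using h4 _ u1 u2
    refine ⟨h1, ?_, ?_, fun c => ⟨huniq c, ?_⟩⟩
    · simpa using h2
    · intro i j hij
      rw [one_mul]; exact h3 i j hij
    · rintro rfl
      obtain ⟨u, u1, u2⟩ := exists_geo r
      have hu : IsGeodesic n M u := by
        show ℓA n M (wordElt n M u) = u.length
        rw [u1, u2]
      have := FL_of_geo hu (h4 u hu u1)
      rwa [u1] at this
  refine ⟨hf.subset hsub, le_trans ?_ hc⟩
  exact_mod_cast Set.ncard_le_ncard hsub hf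

end ArtinRD
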